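/- arXiv:2510.26088 — 2 statements merged into one kernel-verified Lean document; each statement's English description precedes it below -/
import Mathlib

section
/- Let (s,u) be a global-in-time solution of problem (P) with initial data (s₀,φ) ∈ W. Then for every t ∈ (0,∞), E(s(t),u(t)) ≥ (π²/256) · ‖u(t)‖_{L¹}³ / (s(t) + ‖u(t)‖_{L¹})⁴ > 0. -/
open Set MeasureTheory Filter Topology Real
open scoped ENNReal

noncomputable section

/-- `(s₀, φ)` belongs to the class `W`: `s₀ ∈ (0,∞)`, `φ` is Lipschitz on `[0,s₀]`,
not identically zero, nonnegative there, and vanishes at `s₀`. -/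
def memW (s₀ : ℝ) (φ : ℝ → ℝ) : Prop :=
  0 < s₀ ∧ (∃ K : NNReal, LipschitzOnWith K φ (Icc 0 s₀)) ∧
    (∃ x ∈ Icc 0 s₀, φ x ≠ 0) ∧ (∀ x ∈ Icc 0 s₀, 0 ≤ φ x) ∧ φ s₀ = 0

/-- `(s,u)` is a solution of the one-phase Stefan problem (P) on `(0,T]` (finite `T`)
with exponent `p` and initial data `(s₀,φ)`. -/
structure IsSolOn (p s₀ : ℝ) (φ : ℝ → ℝ) (T : ℝ) (s : ℝ → ℝ) (u : ℝ → ℝ → ℝ) : Prop where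
  T_pos : 0 < T
  s_cont : ContinuousOn s (Icc 0 T)
  s_diff : ∀ t ∈ Ioc 0 T, DifferentiableAt ℝ s t
  s_deriv_cont : ContinuousOn (deriv s) (Ioc 0 T)
  s_pos : ∀ t ∈ Icc 0 T, 0 < s t
  ut_diff : ∀ t ∈ Ioc 0 T, ∀ x ∈ Ioo 0 (s t), DifferentiableAt ℝ (fun τ => u τ x) t
  ux_diff : ∀ t ∈ Ioc 0 T, ∀ x ∈ Ioo 0 (s t), DifferentiableAt ℝ (u t) x
  uxx_diff : ∀ t ∈ Ioc 0 T, ∀ x ∈ Ioo 0 (s t), DifferentiableAt ℝ (deriv (u t)) x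
  ut_cont : ContinuousOn (fun q : ℝ × ℝ => deriv (fun τ => u τ q.2) q.1)
      {q : ℝ × ℝ | q.1 ∈ Ioc 0 T ∧ q.2 ∈ Ioo 0 (s q.1)}
  uxx_cont : ContinuousOn (fun q : ℝ × ℝ => deriv (deriv (u q.1)) q.2)
      {q : ℝ × ℝ | q.1 ∈ Ioc 0 T ∧ q.2 ∈ Ioo 0 (s q.1)}
  ux_cont : ContinuousOn (fun q : ℝ × ℝ => deriv (u q.1) q.2)
      {q : ℝ × ℝ | q.1 ∈ Ioc 0 T ∧ q.2 ∈ Icc 0 (s q.1)}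
  u_cont : ContinuousOn (fun q : ℝ × ℝ => u q.1 q.2)
      {q : ℝ × ℝ | q.1 ∈ Icc 0 T ∧ q.2 ∈ Icc 0 (s q.1)}
  u_nonneg : ∀ t ∈ Icc 0 T, ∀ x ∈ Icc 0 (s t), 0 ≤ u t x
  heat : ∀ t ∈ Ioc 0 T, ∀ x ∈ Ioo 0 (s t),
      deriv (fun τ => u τ x) t = deriv (deriv (u t)) x
  bc_zero : ∀ t ∈ Ioc 0 T, -deriv (u t) 0 = u t 0 ^ p
  bc_free : ∀ t ∈ Ioc 0 T, u t (s t) = 0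
  stefan : ∀ t ∈ Ioc 0 T, deriv s t = -deriv (u t) (s t)
  init : ∀ x ∈ Icc 0 s₀, u 0 x = φ x
  init_s : s 0 = s₀

/-- `(s,u)` is a global-in-time solution of problem (P). -/
def IsGlobalSol (p s₀ : ℝ) (φ : ℝ → ℝ) (s : ℝ → ℝ) (u : ℝ → ℝ → ℝ) : Prop :=
  ∀ T : ℝ, 0 < T → IsSolOn p s₀ φ T s u

/-- `Tm ∈ (0,∞]` is the maximal existence time of the solution `(s,u)` of (P) with
initial data `(s₀,φ)`: the solution exists on `(0,T]` for every `T < Tm`, and for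
`T > Tm` problem (P) admits no solution on `(0,T]`. -/
def IsMaxSol (p s₀ : ℝ) (φ : ℝ → ℝ) (Tm : ℝ≥0∞) (s : ℝ → ℝ) (u : ℝ → ℝ → ℝ) : Prop :=
  0 < Tm ∧
    (∀ T : ℝ, 0 < T → ENNReal.ofReal T < Tm → IsSolOn p s₀ φ T s u) ∧
    (∀ T : ℝ, Tm < ENNReal.ofReal T → ¬∃ σ v, IsSolOn p s₀ φ T σ v)

/-- The sup norm `‖u(t)‖_{L^∞(0,s(t))}`. -/
def supNorm (s : ℝ → ℝ) (u : ℝ → ℝ → ℝ) (t : ℝ) : ℝ :=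
  sSup (u t '' Ioo 0 (s t))

/-- The `L¹` norm `‖u(t)‖_{L¹(0,s(t))}` of the nonnegative function `u(t,·)`. -/
def L1Norm (s : ℝ → ℝ) (u : ℝ → ℝ → ℝ) (t : ℝ) : ℝ :=
  ∫ x in (0:ℝ)..(s t), u t x

/-- The energy `E(s(t),u(t))`. -/
def energy (p : ℝ) (s : ℝ → ℝ) (u : ℝ → ℝ → ℝ) (t : ℝ) : ℝ :=
  1 / 2 * (∫ x in (0:ℝ)..(s t), (deriv (u t) x) ^ 2) - u t 0 ^ (p + 1) / (p + 1)


/-- product of a differentiable function vanishing at `a` with a continuous one -/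
lemma hasDerivAt_mul_cont {α β : ℝ → ℝ} {α' a : ℝ} (h : HasDerivAt α α' a) (h0 : α a = 0)
    (hb : ContinuousAt β a) : HasDerivAt (fun t => α t * β t) (α' * β a) a := by
  rw [hasDerivAt_iff_tendsto_slope] at h ⊢
  have : Tendsto (fun t => slope α a t * β t) (𝓝[≠] a) (𝓝 (α' * β a)) :=
    h.mul (hb.tendsto.mono_left nhdsWithin_le_nhds)
  refine this.congr fun t => ?_
  simp only [slope_def_field, h0]; ring

/-- derivative of a parametric integral over `[0,R]` -/
lemma deriv_int {F : ℝ → ℝ → ℝ} {F' : ℝ → ℝ} {a R C δ : ℝ} (hR : 0 ≤ R) (hδ : 0 < δ)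
    (hm : ∀ b, |b - a| < δ → IntervalIntegrable (F b) volume 0 R)
    (hm' : IntervalIntegrable F' volume 0 R)
    (bd : ∀ b, |b - a| < δ → ∀ x ∈ Ioc 0 R, |F b x - F a x| ≤ C * |b - a|)
    (E : Set ℝ) (hE : E.Countable) (hd : ∀ x ∈ Ioc 0 R, x ∉ E → HasDerivAt (fun b => F b x) (F' x) a) :
    HasDerivAt (fun b => ∫ x in (0:ℝ)..R, F b x) (∫ x in (0:ℝ)..R, F' x) a := by
  have key := (hasFDerivAt_integral_of_dominated_loc_of_lip' (𝕜 := ℝ)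
    (μ := volume.restrict (Ioc 0 R)) (F := F) (x₀ := a) (s := Metric.ball a δ)
    (bound := fun _ => C)
    (F' := fun x => ContinuousLinearMap.toSpanSingleton ℝ (F' x)) (Metric.ball_mem_nhds a hδ)
    ?_ ?_ ?_ ?_ ?_ ?_).2
  · have h2 := key.hasDerivAt
    simp only [intervalIntegral.integral_of_le hR]
    rw [ContinuousLinearMap.integral_apply] at h2
    · simpa using h2
    · have := hm'.1
      exact (ContinuousLinearMap.toSpanSingletonCLE (𝕜 := ℝ) (E := ℝ)).toContinuousLinearMap.integrable_comp this
  · intro b hb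
    exact (hm b (by simpa [Real.dist_eq] using hb)).1.aestronglyMeasurable
  · exact (hm a (by simpa using hδ)).1
  · exact (ContinuousLinearMap.toSpanSingletonCLE (𝕜 := ℝ) (E := ℝ)).continuous.comp_aestronglyMeasurable
      hm'.1.aestronglyMeasurable
  · refine (ae_restrict_iff' measurableSet_Ioc).2 (ae_of_all _ ?_)
    intro x hx b hb
    exact bd b (by simpa [Real.dist_eq] using hb) x hx
  · exact integrable_const _
  · refine (ae_restrict_iff' measurableSet_Ioc).2 ?_
    have : ∀ᵐ x ∂(volume : Measure ℝ), x ∉ E := hE.ae_notMem _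
    filter_upwards [this] with x hx hx2
    exact (hd x hx2 hx).hasFDerivAt

structure Sys (ε p : ℝ) (S : ℝ → ℝ) (W v : ℝ → ℝ → ℝ) : Prop where
  S_cont : Continuous S
  S_pos : ∀ t, 0 < S t
  S_mono : Monotone S
  S_der : ∀ t, ε < t → HasDerivAt S (v t (S t)) t
  W_cont : Continuous (Function.uncurry W)
  v_cont : Continuous (Function.uncurry v)
  W_nn : ∀ t x, 0 ≤ W t x
  W_zero : ∀ t x, S t ≤ x → W t x = 0
  W_der : ∀ t, ∀ x ∈ Ioo 0 (S t), HasDerivAt (W t) (-(v t x)) x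
  bc : ∀ t, v t 0 = W t 0 ^ p
  bal : ∀ a b, ε < a → a ≤ b → ∀ x ∈ Icc 0 (S a),
    ∫ y in (0:ℝ)..x, (W b y - W a y) = ∫ τ in a..b, (v τ 0 - v τ x)

def Zf (S : ℝ → ℝ) (W : ℝ → ℝ → ℝ) (t x : ℝ) : ℝ := (∫ y in x..S t, W t y) + max (S t - x) 0
def Vf (S : ℝ → ℝ) (v : ℝ → ℝ → ℝ) (t x : ℝ) : ℝ := if x ≤ S t then v t x else 0

namespace Sys
variable {ε p : ℝ} {S : ℝ → ℝ} {W v : ℝ → ℝ → ℝ}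

lemma Wt (H : Sys ε p S W v) (t : ℝ) : Continuous (W t) :=
  H.W_cont.comp (by fun_prop : Continuous fun x : ℝ => (t, x))
lemma Wx (H : Sys ε p S W v) (x : ℝ) : Continuous (fun t => W t x) :=
  H.W_cont.comp (by fun_prop : Continuous fun t : ℝ => (t, x))
lemma vt (H : Sys ε p S W v) (t : ℝ) : Continuous (v t) :=
  H.v_cont.comp (by fun_prop : Continuous fun x : ℝ => (t, x))
lemma vx (H : Sys ε p S W v) (x : ℝ) : Continuous (fun t => v t x) :=
  H.v_cont.comp (by fun_prop : Continuous fun t : ℝ => (t, x))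

lemma W_int_zero (H : Sys ε p S W v) {t x y : ℝ} (hx : S t ≤ x) (hy : S t ≤ y) :
    ∫ z in x..y, W t z = 0 := by
  rw [intervalIntegral.integral_congr (g := fun _ => (0:ℝ))]
  · simp
  · intro z hz
    rcases le_total x y with h | h
    · rw [uIcc_of_le h] at hz; exact H.W_zero t z (hx.trans hz.1)
    · rw [uIcc_of_ge h] at hz; exact H.W_zero t z (hy.trans hz.1)

lemma Z_zero (H : Sys ε p S W v) {t x : ℝ} (hx : S t ≤ x) : Zf S W t x = 0 := by
  unfold Zf
  rw [H.W_int_zero hx le_rfl, max_eq_right (by linarith)]; simp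

lemma Z_cont_t (H : Sys ε p S W v) (x : ℝ) : Continuous (fun t => Zf S W t x) := by
  unfold Zf
  exact (intervalIntegral.continuous_parametric_intervalIntegral_of_continuous H.W_cont H.S_cont).add
    ((H.S_cont.sub continuous_const).max continuous_const)

lemma Z_cont_x (H : Sys ε p S W v) (t : ℝ) : Continuous (fun x => Zf S W t x) := by
  unfold Zf
  have : Continuous (fun x => ∫ y in (S t)..x, W t y) :=
    intervalIntegral.continuous_primitive (fun a b => (H.Wt t).intervalIntegrable a b) _
  refine Continuous.add ?_ (by fun_prop)
  simp_rw [fun x => intervalIntegral.integral_symm (f := W t) (S t) x (μ := volume)]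
  exact this.neg

/-- a boundary layer term has zero derivative -/
lemma layer (H : Sys ε p S W v) {a : ℝ} (ha : ε < a) :
    HasDerivAt (fun b => ∫ y in (S a)..(S b), W b y) 0 a := by
  have h1 : HasDerivAt (fun b => S b - S a) (v a (S a)) a := (H.S_der a ha).sub_const _
  have h2 : Continuous (fun b => ∫ θ in (0:ℝ)..1, W b (S a + (S b - S a) * θ)) := by
    refine intervalIntegral.continuous_parametric_intervalIntegral_of_continuous' ?_ _ _
    exact H.W_cont.comp (by have := H.S_cont; fun_prop :
      Continuous fun q : ℝ × ℝ => (q.1, S a + (S q.1 - S a) * q.2))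
  have h3 := hasDerivAt_mul_cont h1 (sub_self _) h2.continuousAt
  have h0 : W a (S a) = 0 := H.W_zero a _ le_rfl
  simp only [sub_self, zero_mul, add_zero, h0, intervalIntegral.integral_zero, mul_zero] at h3
  refine h3.congr_of_eventuallyEq (Eventually.of_forall fun b => ?_)
  have := intervalIntegral.smul_integral_comp_add_mul (a := 0) (b := 1) (W b) (S b - S a) (S a)
  simp only [smul_eq_mul] at this
  show _ = (S b - S a) * _
  rw [this]; simp

lemma Z_right (H : Sys ε p S W v) {a x : ℝ} (ha : ε < a) (hx : 0 ≤ x) :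
    HasDerivWithinAt (fun t => Zf S W t x) (Vf S v a x) (Ioi a) a := by
  by_cases h : x ≤ S a
  · have hV : Vf S v a x = (v a x - v a (S a)) + 0 + v a (S a) := by simp [Vf, h]
    rw [hV]
    have c1 : Continuous (fun τ => v τ x - v τ (S a)) := (H.vx x).sub (H.vx _)
    have h1 : HasDerivAt (fun b => ∫ τ in a..b, (v τ x - v τ (S a))) (v a x - v a (S a)) a :=
      intervalIntegral.integral_hasDerivAt_right (c1.intervalIntegrable _ _)
        (c1.stronglyMeasurableAtFilter _ _) c1.continuousAt
    have h4 := (((h1.add (H.layer ha)).add ((H.S_der a ha).sub_const (S a))).const_add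
      (Zf S W a x)).hasDerivWithinAt (s := Ioi a)
    refine h4.congr (fun b hb => ?_) ?_
    · have hab : a ≤ b := le_of_lt hb
      have hS := H.S_mono hab
      have e1 := H.bal a b ha hab x ⟨hx, h⟩
      have e2 := H.bal a b ha hab (S a) ⟨(H.S_pos a).le, le_rfl⟩
      have cW : ∀ t y z, IntervalIntegrable (W t) volume y z :=
        fun t y z => (H.Wt t).intervalIntegrable _ _
      have cv : ∀ x, IntervalIntegrable (fun t => v t x) volume a b :=
        fun x => (H.vx x).intervalIntegrable _ _
      rw [intervalIntegral.integral_sub (cW _ _ _) (cW _ _ _),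
        intervalIntegral.integral_sub (cv _) (cv _)] at e1 e2
      simp only [Pi.add_apply]
      rw [intervalIntegral.integral_sub (cv _) (cv _)]
      have s1 := intervalIntegral.integral_add_adjacent_intervals (cW b 0 x) (cW b x (S b))
      have s2 := intervalIntegral.integral_add_adjacent_intervals (cW b 0 (S a)) (cW b (S a) (S b))
      have s3 := intervalIntegral.integral_add_adjacent_intervals (cW a 0 x) (cW a x (S a))
      unfold Zf
      rw [max_eq_left (by linarith), max_eq_left (by linarith)]
      linarith
    · simp
  · push Not at h
    have hV : Vf S v a x = 0 := by simp [Vf, h]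
    rw [hV]
    have : (fun t => Zf S W t x) =ᶠ[𝓝 a] fun _ => 0 := by
      filter_upwards [H.S_cont.continuousAt.eventually_lt_const h] with b hb
      exact H.Z_zero hb.le
    exact ((hasDerivAt_const a (0:ℝ)).congr_of_eventuallyEq this).hasDerivWithinAt

lemma V_int_t (H : Sys ε p S W v) (x a b : ℝ) :
    IntervalIntegrable (fun t => Vf S v t x) volume a b := by
  have e : (fun t => Vf S v t x) = {t | x ≤ S t}.indicator (fun t => v t x) := by
    ext t; simp [Vf, indicator]
  rw [e]
  have hm : MeasurableSet {t | x ≤ S t} := (isClosed_le continuous_const H.S_cont).measurableSet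
  have := (H.vx x).intervalIntegrable (μ := volume) a b
  exact ⟨this.1.indicator hm, this.2.indicator hm⟩

lemma V_int_x (H : Sys ε p S W v) (t a b : ℝ) :
    IntervalIntegrable (fun x => Vf S v t x) volume a b := by
  have e : (fun x => Vf S v t x) = {x | x ≤ S t}.indicator (fun x => v t x) := by
    ext x; simp [Vf, indicator]
  rw [e]
  have hm : MeasurableSet {x | x ≤ S t} := (isClosed_le continuous_id continuous_const).measurableSet
  have := (H.vt t).intervalIntegrable (μ := volume) a b
  exact ⟨this.1.indicator hm, this.2.indicator hm⟩

lemma Z_ftc (H : Sys ε p S W v) {a b x : ℝ} (ha : ε < a) (hab : a ≤ b) (hx : 0 ≤ x) :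
    ∫ τ in a..b, Vf S v τ x = Zf S W b x - Zf S W a x :=
  intervalIntegral.integral_eq_sub_of_hasDeriv_right_of_le hab (H.Z_cont_t x).continuousOn
    (fun τ hτ => H.Z_right (ha.trans hτ.1) hx) (H.V_int_t x a b)

lemma V_contAt (H : Sys ε p S W v) {t x : ℝ} (hx : x ≠ S t) :
    ContinuousAt (fun t => Vf S v t x) t := by
  rcases lt_or_gt_of_ne hx with h | h
  · refine (H.vx x).continuousAt.congr ?_
    filter_upwards [H.S_cont.continuousAt.eventually_const_lt h] with b hb
    simp [Vf, hb.le]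
  · refine (continuousAt_const (y := (0:ℝ))).congr ?_
    filter_upwards [H.S_cont.continuousAt.eventually_lt_const h] with b hb
    simp [Vf, hb]

lemma Z_der (H : Sys ε p S W v) {t x : ℝ} (ht : ε < t) (hx : 0 ≤ x) (hxS : x ≠ S t) :
    HasDerivAt (fun t => Zf S W t x) (Vf S v t x) t := by
  obtain ⟨a, ha, hat⟩ := exists_between ht
  have hm : StronglyMeasurable (fun t => Vf S v t x) := by
    have e : (fun t => Vf S v t x) = {t | x ≤ S t}.indicator (fun t => v t x) := by
      ext t; simp [Vf, indicator]
    rw [e]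
    exact (H.vx x).stronglyMeasurable.indicator (isClosed_le continuous_const H.S_cont).measurableSet
  have h1 := intervalIntegral.integral_hasDerivAt_right (H.V_int_t x a t)
    hm.stronglyMeasurableAtFilter (H.V_contAt hxS)
  refine (h1.const_add (Zf S W a x)).congr_of_eventuallyEq ?_
  filter_upwards [lt_mem_nhds hat] with b hb
  rw [H.Z_ftc ha (le_of_lt hb) hx]; ring

lemma v_bdd (H : Sys ε p S W v) (T R : ℝ) : ∃ C, 0 < C ∧ ∀ t ∈ Icc ε T, ∀ x ∈ Icc 0 R,
    |v t x| ≤ C := by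
  obtain ⟨C, hC⟩ := (isCompact_Icc.prod isCompact_Icc : IsCompact (Icc ε T ×ˢ Icc 0 R)).exists_bound_of_continuousOn
    H.v_cont.continuousOn
  refine ⟨max C 1, by positivity, fun t ht x hx => ?_⟩
  exact (hC (t, x) ⟨ht, hx⟩).trans (le_max_left _ _)

lemma W_bdd (H : Sys ε p S W v) (T R : ℝ) : ∃ C, 0 < C ∧ ∀ t ∈ Icc ε T, ∀ x ∈ Icc 0 R,
    |W t x| ≤ C := by
  obtain ⟨C, hC⟩ := (isCompact_Icc.prod isCompact_Icc : IsCompact (Icc ε T ×ˢ Icc 0 R)).exists_bound_of_continuousOn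
    H.W_cont.continuousOn
  refine ⟨max C 1, by positivity, fun t ht x hx => ?_⟩
  exact (hC (t, x) ⟨ht, hx⟩).trans (le_max_left _ _)

lemma V_le (v : ℝ → ℝ → ℝ) {C t x : ℝ} (hC : 0 < C) (h : |v t x| ≤ C) : |Vf S v t x| ≤ C := by
  unfold Vf; split_ifs
  · exact h
  · simpa using hC.le

lemma Z_lip (H : Sys ε p S W v) {T R C : ℝ} (hC : 0 < C)
    (hv : ∀ t ∈ Icc ε T, ∀ x ∈ Icc 0 R, |v t x| ≤ C) {a b x : ℝ} (ha : a ∈ Ioc ε T)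
    (hb : b ∈ Ioc ε T) (hx : x ∈ Icc 0 R) : |Zf S W b x - Zf S W a x| ≤ C * |b - a| := by
  wlog hab : a ≤ b generalizing a b
  · rw [abs_sub_comm, abs_sub_comm b a]; exact this hb ha (le_of_not_ge hab)
  rw [← H.Z_ftc ha.1 hab hx.1]
  rw [← Real.norm_eq_abs]
  refine intervalIntegral.norm_integral_le_of_norm_le_const fun τ hτ => ?_
  rw [uIoc_of_le hab] at hτ
  exact V_le v hC (hv τ ⟨(ha.1.trans hτ.1).le, hτ.2.trans hb.2⟩ x hx)

lemma Z_x (H : Sys ε p S W v) (t x : ℝ) :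
    HasDerivWithinAt (fun x => Zf S W t x) (-(W t x) - (if x < S t then 1 else 0)) (Ioi x) x := by
  have h1 : HasDerivAt (fun x => ∫ y in x..S t, W t y) (-(W t x)) x :=
    intervalIntegral.integral_hasDerivAt_left ((H.Wt t).intervalIntegrable _ _)
      ((H.Wt t).stronglyMeasurableAtFilter _ _) (H.Wt t).continuousAt
  have h2 : HasDerivWithinAt (fun x => max (S t - x) 0) (-(if x < S t then 1 else 0)) (Ioi x) x := by
    split_ifs with h
    · have : HasDerivAt (fun x => S t - x) (-1) x := by
        simpa using (hasDerivAt_id x).const_sub (S t)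
      refine (this.congr_of_eventuallyEq ?_).hasDerivWithinAt
      filter_upwards [gt_mem_nhds h] with y hy
      exact max_eq_left (by linarith)
    · push Not at h
      rw [neg_zero]
      refine (hasDerivWithinAt_const x (Ioi x) (0:ℝ)).congr (fun y hy => ?_) ?_
      · exact max_eq_right (by linarith [mem_Ioi.1 hy])
      · exact max_eq_right (by linarith)
  rw [sub_eq_add_neg]
  exact h1.hasDerivWithinAt.add h2

lemma int_step (g : ℝ → ℝ) (hg : Continuous g) {σ R : ℝ} (h0 : 0 ≤ σ) (hR : σ ≤ R) :
    IntervalIntegrable (fun x => g x * (if x < σ then 1 else 0)) volume 0 R ∧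
    ∫ x in (0:ℝ)..R, g x * (if x < σ then 1 else 0) = ∫ x in (0:ℝ)..σ, g x := by
  have hm : MeasurableSet (Iio σ) := measurableSet_Iio
  have e : (fun x => g x * (if x < σ then 1 else 0)) = (Iio σ).indicator g := by
    ext x; simp [indicator]
  rw [e]
  have := hg.intervalIntegrable (μ := volume) 0 R
  refine ⟨⟨this.1.indicator hm, this.2.indicator hm⟩, ?_⟩
  rw [intervalIntegral.integral_of_le (h0.trans hR), intervalIntegral.integral_of_le h0,
    integral_indicator hm, Measure.restrict_restrict hm, integral_Ioc_eq_integral_Ioo]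
  congr 2
  ext x
  simp only [mem_inter_iff, mem_Iio, mem_Ioc, mem_Ioo]
  constructor
  · rintro ⟨h1, h2, h3⟩; exact ⟨h2, h1⟩
  · rintro ⟨h1, h2⟩; exact ⟨h2, h1, h2.le.trans hR⟩

/-- integration by parts against `Ψ` -/
lemma ibp (H : Sys ε p S W v) {Ψ ψ' : ℝ → ℝ} {a b R : ℝ} (hR : 0 ≤ R) (ha : S a ≤ R) (hb : S b ≤ R)
    (hΨ : Continuous Ψ) (hd : ∀ x ∈ Ioo 0 R, HasDerivWithinAt Ψ (ψ' x) (Ioi x) x)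
    (hi : IntervalIntegrable ψ' volume 0 R) :
    ∫ x in (0:ℝ)..R, Ψ x * (W b x - W a x) = Ψ 0 * (Zf S W b 0 - Zf S W a 0)
      + (∫ x in (0:ℝ)..R, ψ' x * (Zf S W b x - Zf S W a x)) - ∫ x in (S a)..(S b), Ψ x := by
  have hW : Continuous fun x => W b x - W a x := (H.Wt b).sub (H.Wt a)
  have i1 : ∀ t, S t ≤ R → IntervalIntegrable (fun x => -(W t x) - (if x < S t then 1 else 0)) volume 0 R := by
    intro t ht
    refine ((H.Wt t).neg.intervalIntegrable _ _).sub ?_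
    have := (int_step (fun _ => 1) continuous_const (H.S_pos t).le ht).1
    simpa using this
  have key := intervalIntegral.integral_mul_deriv_eq_deriv_mul_of_hasDeriv_right (a := 0) (b := R)
    (u := Ψ) (v := fun x => Zf S W b x - Zf S W a x) (u' := ψ')
    (v' := fun x => (-(W b x) - (if x < S b then 1 else 0)) - (-(W a x) - (if x < S a then 1 else 0)))
    hΨ.continuousOn ((H.Z_cont_x b).sub (H.Z_cont_x a)).continuousOn
    (by rw [min_eq_left hR, max_eq_right hR]; exact hd)
    (fun x _ => (H.Z_x b x).sub (H.Z_x a x)) hi ((i1 b hb).sub (i1 a ha))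
  have iW : IntervalIntegrable (fun x => Ψ x * (W b x - W a x)) volume 0 R :=
    (hΨ.mul hW).intervalIntegrable _ _
  obtain ⟨ib, eb⟩ := int_step Ψ hΨ (H.S_pos b).le hb
  obtain ⟨ia, ea⟩ := int_step Ψ hΨ (H.S_pos a).le ha
  have e2 : ∀ x, Ψ x * ((-(W b x) - (if x < S b then 1 else 0)) - (-(W a x) - (if x < S a then 1 else 0)))
      = Ψ x * (if x < S a then 1 else 0) - Ψ x * (if x < S b then 1 else 0)
        - Ψ x * (W b x - W a x) := fun x => by ring
  simp only [e2] at key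
  rw [intervalIntegral.integral_sub (ia.sub ib) iW,
    intervalIntegral.integral_sub ia ib, ea, eb, H.Z_zero ha, H.Z_zero hb] at key
  have := intervalIntegral.integral_interval_sub_left (hΨ.intervalIntegrable (μ := volume) 0 (S b))
    (hΨ.intervalIntegrable (μ := volume) 0 (S a))
  linarith

end Sys

namespace Sys
variable {ε p : ℝ} {S : ℝ → ℝ} {W v : ℝ → ℝ → ℝ}

/-- right-derivative version of `-V` in space -/
lemma W_right (H : Sys ε p S W v) {t x : ℝ} (hx : 0 < x) :
    HasDerivWithinAt (W t) (-(if x < S t then v t x else 0)) (Ioi x) x := by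
  split_ifs with h
  · exact (H.W_der t x ⟨hx, h⟩).hasDerivWithinAt
  · push Not at h
    rw [neg_zero]
    refine (hasDerivWithinAt_const x (Ioi x) (0:ℝ)).congr (fun y hy => ?_) ?_
    · exact H.W_zero t y (h.trans (le_of_lt hy))
    · exact H.W_zero t x h

lemma Vr_ae (t : ℝ) : (fun x => -(if x < S t then v t x else 0)) =ᵐ[volume] fun x => -Vf S v t x := by
  have : ∀ᵐ x ∂(volume : Measure ℝ), x ≠ S t := by simp [ae_iff]
  filter_upwards [this] with x hx
  unfold Vf
  rcases lt_or_gt_of_ne hx with h | h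
  · simp [h, h.le]
  · simp [h, h.le, not_lt.2 h.le]

lemma Vr_int (H : Sys ε p S W v) (t a b : ℝ) :
    IntervalIntegrable (fun x => -(if x < S t then v t x else 0)) volume a b :=
  (H.V_int_x t a b).neg.congr_ae (ae_restrict_of_ae (Vr_ae (S := S) (v := v) t).symm)

lemma ibpW (H : Sys ε p S W v) {a b c R : ℝ} (hR : 0 ≤ R) (ha : S a ≤ R) (hb : S b ≤ R) :
    ∫ x in (0:ℝ)..R, W c x * (W b x - W a x) = W c 0 * (Zf S W b 0 - Zf S W a 0)
      - (∫ x in (0:ℝ)..R, Vf S v c x * (Zf S W b x - Zf S W a x)) - ∫ x in (S a)..(S b), W c x := by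
  rw [H.ibp hR ha hb (H.Wt c) (fun x hx => H.W_right hx.1) (H.Vr_int c 0 R)]
  have : ∫ x in (0:ℝ)..R, -(if x < S c then v c x else 0) * (Zf S W b x - Zf S W a x)
      = -∫ x in (0:ℝ)..R, Vf S v c x * (Zf S W b x - Zf S W a x) := by
    rw [← intervalIntegral.integral_neg]
    refine intervalIntegral.integral_congr_ae ?_
    filter_upwards [Vr_ae (S := S) (v := v) c] with x hx _
    rw [hx]; ring
  rw [this]; ring

lemma ibpV (H : Sys ε p S W v) {Φ Φ' : ℝ → ℝ} {t R : ℝ} (hR : S t ≤ R)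
    (hΦ : ∀ x, HasDerivAt Φ (Φ' x) x) (hc : Continuous Φ') :
    ∫ x in (0:ℝ)..R, Φ x * Vf S v t x = W t 0 * Φ 0 + ∫ x in (0:ℝ)..R, W t x * Φ' x := by
  have hcΦ : Continuous Φ := continuous_iff_continuousAt.2 fun x => (hΦ x).continuousAt
  have hR0 : 0 ≤ R := (H.S_pos t).le.trans hR
  have key := intervalIntegral.integral_mul_deriv_eq_deriv_mul_of_hasDeriv_right (a := 0) (b := R)
    (u := Φ) (v := W t) (u' := Φ') (v' := fun x => -(if x < S t then v t x else 0))
    hcΦ.continuousOn (H.Wt t).continuousOn (fun x _ => (hΦ x).hasDerivWithinAt)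
    (by rw [min_eq_left hR0, max_eq_right hR0]; exact fun x hx => H.W_right hx.1)
    (hc.intervalIntegrable _ _) (H.Vr_int t 0 R)
  rw [H.W_zero t R hR] at key
  have : ∫ x in (0:ℝ)..R, Φ x * -(if x < S t then v t x else 0)
      = -∫ x in (0:ℝ)..R, Φ x * Vf S v t x := by
    rw [← intervalIntegral.integral_neg]
    refine intervalIntegral.integral_congr_ae ?_
    filter_upwards [Vr_ae (S := S) (v := v) t] with x hx _
    rw [hx]; ring
  rw [this] at key
  have e : ∫ x in (0:ℝ)..R, W t x * Φ' x = ∫ x in (0:ℝ)..R, Φ' x * W t x := by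
    congr 1; ext x; ring
  rw [e]; linarith

lemma near {t : ℝ} (ht : ε < t) : ∃ δ > 0, δ < 1 ∧ ∀ b, |b - t| < δ → b ∈ Ioc ε (t + 1) := by
  refine ⟨min (t - ε) (1/2), lt_min (by linarith) (by norm_num),
    lt_of_le_of_lt (min_le_right _ _) (by norm_num), fun b hb => ?_⟩
  have h1 := lt_of_lt_of_le hb (min_le_left _ _)
  have h2 := lt_of_lt_of_le hb (min_le_right _ _)
  rw [abs_lt] at h1 h2
  exact ⟨by linarith, by linarith⟩

lemma V0 (H : Sys ε p S W v) (t : ℝ) : Vf S v t 0 = W t 0 ^ p := by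
  simp [Vf, (H.S_pos t).le, H.bc t]

lemma Zx_int (H : Sys ε p S W v) (t a b : ℝ) : IntervalIntegrable (Zf S W t) volume a b :=
  (H.Z_cont_x t).intervalIntegrable _ _

lemma end_int (H : Sys ε p S W v) {t : ℝ} (ht : ε < t) {g : ℝ → ℝ} (hg : Continuous g) :
    HasDerivAt (fun b => ∫ x in (S t)..(S b), g x) (g (S t) * v t (S t)) t := by
  have h1 : HasDerivAt (fun y => ∫ x in (S t)..y, g x) (g (S t)) (S t) :=
    intervalIntegral.integral_hasDerivAt_right (hg.intervalIntegrable _ _)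
        (hg.stronglyMeasurableAtFilter _ _) hg.continuousAt
  exact HasDerivAt.comp t h1 (H.S_der t ht)

lemma q_der (H : Sys ε p S W v) {ψ ψt ψx ψxx : ℝ → ℝ → ℝ}
    (hc : Continuous (Function.uncurry ψ)) (hct : Continuous (Function.uncurry ψt))
    (hcx : Continuous (Function.uncurry ψx)) (hcxx : Continuous (Function.uncurry ψxx))
    (dt : ∀ t x, HasDerivAt (fun t => ψ t x) (ψt t x) t)
    (dx : ∀ t x, HasDerivAt (ψ t) (ψx t x) x) (dxx : ∀ t x, HasDerivAt (ψx t) (ψxx t x) x)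
    {t R : ℝ} (ht : ε < t) (hR : S (t + 1) ≤ R) :
    HasDerivAt (fun b => ∫ x in (0:ℝ)..R, W b x * ψ b x)
      ((∫ x in (0:ℝ)..R, W t x * (ψt t x + ψxx t x)) + W t 0 ^ p * ψ t 0 + W t 0 * ψx t 0
        - v t (S t) * ψ t (S t)) t := by
  have sec : ∀ {g : ℝ → ℝ → ℝ}, Continuous (Function.uncurry g) → ∀ t, Continuous (g t) :=
    fun hg t => hg.comp (by fun_prop : Continuous fun x : ℝ => (t, x))
  obtain ⟨δ, hδ, hδ1, hb⟩ := near ht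
  have hR0 : 0 ≤ R := (H.S_pos _).le.trans hR
  have hSt : S t ≤ R := (H.S_mono (by linarith)).trans hR
  obtain ⟨C, hC, hv⟩ := H.v_bdd (t+1) R
  obtain ⟨CW, hCW, hW⟩ := H.W_bdd (t+1) R
  have htm : t ∈ Ioc ε (t+1) := ⟨ht, by linarith⟩
  obtain ⟨B, hB⟩ := (isCompact_Icc : IsCompact (Icc 0 R)).exists_bound_of_continuousOn
    (sec hcx t).continuousOn
  obtain ⟨D, hD⟩ := (isCompact_Icc.prod isCompact_Icc :
    IsCompact (Icc (t-1) (t+1) ×ˢ Icc 0 R)).exists_bound_of_continuousOn hct.continuousOn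
  -- the three pieces
  have p1 : HasDerivAt (fun b => ψ t 0 * (Zf S W b 0 - Zf S W t 0)) (ψ t 0 * Vf S v t 0) t :=
    ((H.Z_der ht le_rfl (H.S_pos t).ne).sub_const _).const_mul _
  have p2 : HasDerivAt (fun b => ∫ x in (0:ℝ)..R, ψx t x * (Zf S W b x - Zf S W t x))
      (∫ x in (0:ℝ)..R, ψx t x * Vf S v t x) t := by
    refine deriv_int (C := B * C) hR0 hδ (fun b _ => ?_) ?_ (fun b hbb x hx => ?_) {S t}
      (countable_singleton _) (fun x hx hxe => ?_)
    · exact ((sec hcx t).mul ((H.Z_cont_x b).sub (H.Z_cont_x t))).intervalIntegrable _ _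
    · exact (H.V_int_x t 0 R).continuousOn_mul (sec hcx t).continuousOn
    · have h1 := H.Z_lip hC hv htm (hb b hbb) ⟨hx.1.le, hx.2⟩
      have h2 := hB x ⟨hx.1.le, hx.2⟩
      rw [Real.norm_eq_abs] at h2
      simp only [sub_self, mul_zero, sub_zero, abs_mul]
      calc |ψx t x| * |Zf S W b x - Zf S W t x| ≤ B * (C * |b - t|) := by gcongr; exact (abs_nonneg _).trans h2
        _ = _ := by ring
    · exact ((H.Z_der ht hx.1.le hxe).sub_const _).const_mul _
  have p3 := H.end_int ht (sec hc t)
  have p4 : HasDerivAt (fun b => ∫ x in (0:ℝ)..R, W b x * (ψ b x - ψ t x))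
      (∫ x in (0:ℝ)..R, W t x * ψt t x) t := by
    refine deriv_int (C := CW * D) hR0 hδ (fun b _ => ?_) ?_ (fun b hbb x hx => ?_) ∅
      countable_empty (fun x hx hxe => ?_)
    · exact ((H.Wt b).mul ((sec hc b).sub (sec hc t))).intervalIntegrable _ _
    · exact ((H.Wt t).mul (sec hct t)).intervalIntegrable _ _
    · have h2 := hW b ⟨(hb b hbb).1.le, (hb b hbb).2⟩ x ⟨hx.1.le, hx.2⟩
      have h1 : ‖ψ b x - ψ t x‖ ≤ D * ‖b - t‖ := by
        refine (convex_Icc (t-1) (t+1)).norm_image_sub_le_of_norm_hasDerivWithin_le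
          (f := fun t => ψ t x) (fun τ _ => (dt τ x).hasDerivWithinAt)
          (fun τ hτ => hD (τ, x) ⟨hτ, hx.1.le, hx.2⟩) ⟨by linarith, by linarith⟩ ?_
        rw [abs_lt] at hbb
        exact ⟨by linarith, by linarith⟩
      simp only [Real.norm_eq_abs] at h1
      simp only [sub_self, mul_zero, sub_zero, abs_mul]
      calc |W b x| * |ψ b x - ψ t x| ≤ CW * (D * |b - t|) := by gcongr
        _ = _ := by ring
    · have := hasDerivAt_mul_cont ((dt t x).sub_const (ψ t x)) (sub_self _) (H.Wx x).continuousAt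
      rw [mul_comm (W t x)]
      refine this.congr_of_eventuallyEq (Eventually.of_forall fun b => ?_)
      show _ * _ = _ * _
      ring
  have tot := ((((p1.add p2).sub p3).add p4)).const_add (∫ x in (0:ℝ)..R, W t x * ψ t x)
  rw [H.ibpV hSt (dxx t) (sec hcxx t)] at tot
  have ev : (fun b => ∫ x in (0:ℝ)..R, W b x * ψ b x) =ᶠ[𝓝 t] (fun b =>
      (∫ x in (0:ℝ)..R, W t x * ψ t x) + (ψ t 0 * (Zf S W b 0 - Zf S W t 0)
        + (∫ x in (0:ℝ)..R, ψx t x * (Zf S W b x - Zf S W t x)) - (∫ x in (S t)..(S b), ψ t x)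
        + ∫ x in (0:ℝ)..R, W b x * (ψ b x - ψ t x))) := by
    filter_upwards [Metric.ball_mem_nhds t hδ] with b hbb
    have hbb' := hb b (by simpa [Real.dist_eq] using hbb)
    have hSb : S b ≤ R := (H.S_mono hbb'.2).trans hR
    rw [← H.ibp hR0 hSt hSb (sec hc t) (fun x _ => (dx t x).hasDerivWithinAt)
      ((sec hcx t).intervalIntegrable _ _), ← intervalIntegral.integral_add,
      ← intervalIntegral.integral_add]
    · congr 1; ext x; ring
    · exact ((H.Wt t).mul (sec hc t)).intervalIntegrable _ _
    · exact (((sec hc t).mul ((H.Wt b).sub (H.Wt t))).add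
        ((H.Wt b).mul ((sec hc b).sub (sec hc t)))).intervalIntegrable _ _
    · exact ((sec hc t).mul ((H.Wt b).sub (H.Wt t))).intervalIntegrable _ _
    · exact ((H.Wt b).mul ((sec hc b).sub (sec hc t))).intervalIntegrable _ _
  have tot2 := HasDerivAt.congr_of_eventuallyEq tot ev
  refine tot2.congr_deriv ?_
  rw [H.V0]
  have : ∫ x in (0:ℝ)..R, W t x * (ψt t x + ψxx t x)
      = (∫ x in (0:ℝ)..R, W t x * ψt t x) + ∫ x in (0:ℝ)..R, W t x * ψxx t x := by
    rw [← intervalIntegral.integral_add]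
    · congr 1; ext x; ring
    · exact ((H.Wt t).mul (sec hct t)).intervalIntegrable _ _
    · exact ((H.Wt t).mul (sec hcxx t)).intervalIntegrable _ _
  rw [this]; ring

lemma V_contAt_mul (H : Sys ε p S W v) {t x : ℝ} (ht : ε < t) (hx : 0 ≤ x) (hxS : x ≠ S t) :
    HasDerivAt (fun b => (Zf S W b x - Zf S W t x) * (Vf S v t x + Vf S v b x))
      (Vf S v t x * (Vf S v t x + Vf S v t x)) t :=
  hasDerivAt_mul_cont ((H.Z_der ht hx hxS).sub_const _) (sub_self _)
    (continuousAt_const.add (H.V_contAt hxS))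

lemma K_der (H : Sys ε p S W v) {t R : ℝ} (ht : ε < t) (hR : S (t + 1) ≤ R) :
    HasDerivAt (fun b => ∫ x in (0:ℝ)..R, W b x ^ 2)
      (2 * (W t 0 ^ p * W t 0) - 2 * ∫ x in (0:ℝ)..R, Vf S v t x ^ 2) t := by
  obtain ⟨δ, hδ, hδ1, hb⟩ := near ht
  have hR0 : 0 ≤ R := (H.S_pos _).le.trans hR
  have hSt : S t ≤ R := (H.S_mono (by linarith)).trans hR
  obtain ⟨C, hC, hv⟩ := H.v_bdd (t+1) R
  have htm : t ∈ Ioc ε (t+1) := ⟨ht, by linarith⟩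
  have iV : ∀ b, IntervalIntegrable (fun x => (Zf S W b x - Zf S W t x) * (Vf S v t x + Vf S v b x)) volume 0 R :=
    fun b => ((H.V_int_x t 0 R).add (H.V_int_x b 0 R)).continuousOn_mul
      ((H.Z_cont_x b).sub (H.Z_cont_x t)).continuousOn
  have Vb : ∀ b ∈ Ioc ε (t+1), ∀ x ∈ Ioc 0 R, |Vf S v b x| ≤ C := fun b hb x hx =>
    V_le v hC (hv b ⟨hb.1.le, hb.2⟩ x ⟨hx.1.le, hx.2⟩)
  have iVV : IntervalIntegrable (fun x => Vf S v t x * (Vf S v t x + Vf S v t x)) volume 0 R := by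
    have : IntervalIntegrable (fun x => (2 * C)) volume 0 R := by simp
    have h2 := (H.V_int_x t 0 R)
    rw [intervalIntegrable_iff_integrableOn_Ioc_of_le hR0] at h2 ⊢
    refine Integrable.bdd_mul (c := C) (h2.add h2) h2.aestronglyMeasurable ?_
    exact (ae_restrict_iff' measurableSet_Ioc).2 (ae_of_all _ fun x hx => Vb t htm x hx)
  have p1 : HasDerivAt (fun b => (Zf S W b 0 - Zf S W t 0) * (W t 0 + W b 0))
      (Vf S v t 0 * (W t 0 + W t 0)) t :=
    hasDerivAt_mul_cont ((H.Z_der ht le_rfl (H.S_pos t).ne).sub_const _) (sub_self _)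
      (continuousAt_const.add (H.Wx 0).continuousAt)
  have p2 : HasDerivAt (fun b => ∫ x in (0:ℝ)..R, (Zf S W b x - Zf S W t x) * (Vf S v t x + Vf S v b x))
      (∫ x in (0:ℝ)..R, Vf S v t x * (Vf S v t x + Vf S v t x)) t := by
    refine deriv_int (C := C * (C + C)) hR0 hδ (fun b _ => iV b) iVV (fun b hbb x hx => ?_) {S t}
      (countable_singleton _) (fun x hx hxe => H.V_contAt_mul ht hx.1.le hxe)
    have h1 := H.Z_lip hC hv htm (hb b hbb) ⟨hx.1.le, hx.2⟩
    have h2 := Vb t htm x hx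
    have h3 := Vb b (hb b hbb) x hx
    simp only [sub_self, zero_mul, sub_zero, abs_mul]
    calc _ ≤ (C * |b - t|) * (C + C) := by
          gcongr; exact (abs_add_le _ _).trans (add_le_add h2 h3)
      _ = _ := by ring
  have p3 := H.end_int ht (H.Wt t)
  have p4 := H.layer ht
  have tot := (((p1.sub p2).sub p3).sub p4).const_add (∫ x in (0:ℝ)..R, W t x ^ 2)
  have ev : (fun b => ∫ x in (0:ℝ)..R, W b x ^ 2) =ᶠ[𝓝 t] (fun b =>
      (∫ x in (0:ℝ)..R, W t x ^ 2) + ((Zf S W b 0 - Zf S W t 0) * (W t 0 + W b 0)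
        - (∫ x in (0:ℝ)..R, (Zf S W b x - Zf S W t x) * (Vf S v t x + Vf S v b x))
        - (∫ x in (S t)..(S b), W t x) - ∫ x in (S t)..(S b), W b x)) := by
    filter_upwards [Metric.ball_mem_nhds t hδ] with b hbb
    have hbb' := hb b (by simpa [Real.dist_eq] using hbb)
    have hSb : S b ≤ R := (H.S_mono hbb'.2).trans hR
    have e1 := H.ibpW (c := t) hR0 hSt hSb
    have e2 := H.ibpW (c := b) hR0 hSt hSb
    have i1 : ∀ c, IntervalIntegrable (fun x => W c x * (W b x - W t x)) volume 0 R := fun c =>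
      ((H.Wt c).mul ((H.Wt b).sub (H.Wt t))).intervalIntegrable _ _
    have i2 : ∀ c, IntervalIntegrable (fun x => W c x ^ 2) volume 0 R := fun c =>
      ((H.Wt c).pow 2).intervalIntegrable _ _
    have i3 : ∀ c, IntervalIntegrable (fun x => Vf S v c x * (Zf S W b x - Zf S W t x)) volume 0 R :=
      fun c => (H.V_int_x c 0 R).mul_continuousOn ((H.Z_cont_x b).sub (H.Z_cont_x t)).continuousOn
    have s1 : (∫ x in (0:ℝ)..R, W b x ^ 2) - (∫ x in (0:ℝ)..R, W t x ^ 2)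
        = (∫ x in (0:ℝ)..R, W t x * (W b x - W t x)) + ∫ x in (0:ℝ)..R, W b x * (W b x - W t x) := by
      rw [← intervalIntegral.integral_sub (i2 _) (i2 _), ← intervalIntegral.integral_add (i1 _) (i1 _)]
      congr 1; ext x; ring
    have s2 : ∫ x in (0:ℝ)..R, (Zf S W b x - Zf S W t x) * (Vf S v t x + Vf S v b x)
        = (∫ x in (0:ℝ)..R, Vf S v t x * (Zf S W b x - Zf S W t x))
         + ∫ x in (0:ℝ)..R, Vf S v b x * (Zf S W b x - Zf S W t x) := by
      rw [← intervalIntegral.integral_add (i3 _) (i3 _)]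
      congr 1; ext x; ring
    linarith
  have tot2 := HasDerivAt.congr_of_eventuallyEq tot ev
  refine tot2.congr_deriv ?_
  rw [H.V0, H.W_zero t _ le_rfl, ← intervalIntegral.integral_const_mul]
  have : ∀ x, Vf S v t x * (Vf S v t x + Vf S v t x) = 2 * Vf S v t x ^ 2 := fun x => by ring
  simp only [this]; ring

/-- time derivative of `∫ (Z(t+h)-Z(t))²` -/
lemma j_der (H : Sys ε p S W v) {t h R : ℝ} (ht : ε < t) (hh : 0 < h) (hR : S (t + h + 1) ≤ R) :
    HasDerivAt (fun b => ∫ x in (0:ℝ)..R, (Zf S W (b + h) x - Zf S W b x) ^ 2)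
      (2 * ((W (t + h) 0 - W t 0) * (Zf S W (t + h) 0 - Zf S W t 0)
        - (∫ x in (0:ℝ)..R, (W (t + h) x - W t x) ^ 2) - ∫ x in (S t)..(S (t + h)), W (t + h) x)) t := by
  obtain ⟨δ, hδ, hδ1, hb⟩ := near ht
  have hR0 : 0 ≤ R := (H.S_pos _).le.trans hR
  have hSt : S t ≤ R := (H.S_mono (by linarith)).trans hR
  have hSth : S (t + h) ≤ R := (H.S_mono (by linarith)).trans hR
  obtain ⟨C, hC, hv⟩ := H.v_bdd (t+h+1) R
  have m1 : ∀ b, |b - t| < δ → b ∈ Ioc ε (t+h+1) := fun b hbb =>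
    ⟨(hb b hbb).1, by linarith [(hb b hbb).2]⟩
  have m2 : ∀ b, |b - t| < δ → b + h ∈ Ioc ε (t+h+1) := fun b hbb =>
    ⟨by linarith [(hb b hbb).1], by linarith [(hb b hbb).2]⟩
  have cZ : ∀ b, Continuous fun x => Zf S W (b + h) x - Zf S W b x := fun b =>
    (H.Z_cont_x _).sub (H.Z_cont_x b)
  have key : HasDerivAt (fun b => ∫ x in (0:ℝ)..R, (Zf S W (b + h) x - Zf S W b x) ^ 2)
      (∫ x in (0:ℝ)..R, 2 * (Zf S W (t + h) x - Zf S W t x) * (Vf S v (t + h) x - Vf S v t x)) t := by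
    refine deriv_int (C := (C * h + C * h) * (C + C)) hR0 hδ (fun b _ => ?_) ?_
      (fun b hbb x hx => ?_) {S t, S (t + h)}
      ((Set.toFinite _).countable) (fun x hx hxe => ?_)
    · exact ((cZ b).pow 2).intervalIntegrable _ _
    · exact ((H.V_int_x _ 0 R).sub (H.V_int_x _ 0 R)).continuousOn_mul
        (continuous_const.mul (cZ t)).continuousOn
    · have hx' : x ∈ Icc 0 R := ⟨hx.1.le, hx.2⟩
      have tt : |t - t| < δ := by simpa using hδ
      have l1 := H.Z_lip hC hv (m1 t tt) (m1 b hbb) hx'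
      have l2 := H.Z_lip hC hv (m2 t tt) (m2 b hbb) hx'
      have l3 := H.Z_lip hC hv (m1 t tt) (m2 t tt) hx'
      have l4 := H.Z_lip hC hv (m1 b hbb) (m2 b hbb) hx'
      simp only [add_sub_add_right_eq_sub] at l2
      simp only [add_sub_cancel_left, abs_of_pos hh] at l3 l4
      have e : (Zf S W (b + h) x - Zf S W b x) ^ 2 - (Zf S W (t + h) x - Zf S W t x) ^ 2
        = ((Zf S W (b + h) x - Zf S W b x) + (Zf S W (t + h) x - Zf S W t x)) *
          ((Zf S W (b + h) x - Zf S W (t + h) x) - (Zf S W b x - Zf S W t x)) := by ring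
      rw [e, abs_mul]
      calc _ ≤ (C * h + C * h) * (C * |b - t| + C * |b - t|) := by
            gcongr
            · exact (abs_add_le _ _).trans (add_le_add l4 l3)
            · exact (abs_sub _ _).trans (add_le_add l2 l1)
        _ = _ := by ring
    · simp only [mem_insert_iff, mem_singleton_iff, not_or] at hxe
      have d1 := H.Z_der ht hx.1.le hxe.1
      have d2 := (H.Z_der (by linarith : ε < t + h) hx.1.le hxe.2).comp_add_const t h
      have := (d2.sub d1).pow 2
      exact this.congr_deriv (by simp)
  refine key.congr_deriv ?_
  have e1 := H.ibpW (c := t) hR0 hSt hSth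
  have e2 := H.ibpW (c := t + h) hR0 hSt hSth
  have z0 : ∫ x in (S t)..(S (t+h)), W t x = 0 := H.W_int_zero le_rfl (H.S_mono (by linarith))
  have i1 : ∀ c, IntervalIntegrable (fun x => W c x * (W (t+h) x - W t x)) volume 0 R := fun c =>
      ((H.Wt c).mul ((H.Wt _).sub (H.Wt t))).intervalIntegrable _ _
  have i3 : ∀ c, IntervalIntegrable (fun x => Vf S v c x * (Zf S W (t+h) x - Zf S W t x)) volume 0 R :=
      fun c => (H.V_int_x c 0 R).mul_continuousOn (cZ t).continuousOn
  have s1 : ∫ x in (0:ℝ)..R, (W (t+h) x - W t x)^2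
      = (∫ x in (0:ℝ)..R, W (t+h) x * (W (t+h) x - W t x)) - ∫ x in (0:ℝ)..R, W t x * (W (t+h) x - W t x) := by
    rw [← intervalIntegral.integral_sub (i1 _) (i1 _)]
    congr 1; ext x; ring
  have s2 : ∫ x in (0:ℝ)..R, 2 * (Zf S W (t + h) x - Zf S W t x) * (Vf S v (t + h) x - Vf S v t x)
      = 2 * ((∫ x in (0:ℝ)..R, Vf S v (t+h) x * (Zf S W (t+h) x - Zf S W t x))
       - ∫ x in (0:ℝ)..R, Vf S v t x * (Zf S W (t+h) x - Zf S W t x)) := by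
    rw [← intervalIntegral.integral_sub (i3 _) (i3 _), ← intervalIntegral.integral_const_mul]
    congr 1; ext x; ring
  rw [s2, s1]; linarith
end Sys


/-- a chain rule for Hölder functions -/
lemma lemB {f g g' P : ℝ → ℝ} {t1 t2 C : ℝ} (hf : Continuous f) (hg : ∀ y, HasDerivAt g (g' y) y)
    (hg' : Continuous g') (hP : ∀ y, HasDerivAt P (g y) y) (h12 : t1 ≤ t2) (hC : 0 < C)
    (hol : ∀ t ∈ Icc t1 t2, ∀ h ∈ Ioo (0:ℝ) 1, |f (t + h) - f t| ≤ C * √h) :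
    Tendsto (fun h => ∫ t in t1..t2, ((f (t + h) - f t) / h) * ((∫ τ in t..(t + h), g (f τ)) / h))
      (𝓝[>] 0) (𝓝 (P (f t2) - P (f t1))) := by
  have hgc : Continuous g := continuous_iff_continuousAt.2 fun x => (hg x).continuousAt
  have hPc : Continuous P := continuous_iff_continuousAt.2 fun x => (hP x).continuousAt
  set F : ℝ → ℝ → ℝ := fun h t => (∫ τ in t..(t + h), f τ) / h with hF
  have prim : ∀ {k : ℝ → ℝ}, Continuous k → ∀ a y, HasDerivAt (fun y => ∫ τ in a..y, k τ) (k y) y := by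
    intro k hk a y
    exact intervalIntegral.integral_hasDerivAt_right (hk.intervalIntegrable _ _)
      (hk.stronglyMeasurableAtFilter _ _) hk.continuousAt
  have win : ∀ {k : ℝ → ℝ}, Continuous k → ∀ h t,
      HasDerivAt (fun t => ∫ τ in t..(t + h), k τ) (k (t + h) - k t) t := by
    intro k hk h t
    have e : (fun t => ∫ τ in t..(t + h), k τ)
        = fun t => (∫ τ in (0:ℝ)..(t + h), k τ) - ∫ τ in (0:ℝ)..t, k τ := by
      ext t
      exact (intervalIntegral.integral_interval_sub_left (hk.intervalIntegrable _ _)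
        (hk.intervalIntegrable _ _)).symm
    rw [e]
    exact ((prim hk 0 (t + h)).comp_add_const t h).sub (prim hk 0 t)
  have Fd : ∀ h t, HasDerivAt (F h) ((f (t + h) - f t) / h) t := fun h t => (win hf h t).div_const h
  have Fc : ∀ h, Continuous (F h) := fun h => continuous_iff_continuousAt.2 fun t => (Fd h t).continuousAt
  have dfc : ∀ h, Continuous fun t => (f (t + h) - f t) / h := fun h => by fun_prop
  have Ac : ∀ h, Continuous fun t => (∫ τ in t..(t + h), g (f τ)) / h := fun h =>
    (continuous_iff_continuousAt.2 fun t => (win (hgc.comp hf) h t).continuousAt).div_const h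
  have main : ∀ h, ∫ t in t1..t2, g (F h t) * ((f (t + h) - f t) / h) = P (F h t2) - P (F h t1) := by
    intro h
    refine intervalIntegral.integral_eq_sub_of_hasDerivAt (f := fun t => P (F h t)) (fun t _ => ?_)
      (((hgc.comp (Fc h)).mul (dfc h)).intervalIntegrable _ _)
    exact (hP _).comp t (Fd h t)
  have Flim : ∀ t, Tendsto (fun h => F h t) (𝓝[>] 0) (𝓝 (f t)) := by
    intro t
    have h1 := (hasDerivAt_iff_tendsto_slope_zero.1 (prim hf t t))
    refine (h1.mono_left (nhdsWithin_mono _ (fun x hx => ne_of_gt hx))).congr fun h => ?_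
    simp only [intervalIntegral.integral_same, sub_zero, smul_eq_mul, hF]; ring
  have lim1 : Tendsto (fun h => P (F h t2) - P (F h t1)) (𝓝[>] 0) (𝓝 (P (f t2) - P (f t1))) :=
    ((hPc.tendsto _).comp (Flim t2)).sub ((hPc.tendsto _).comp (Flim t1))
  -- error
  obtain ⟨M, hM⟩ := (isCompact_Icc : IsCompact (Icc t1 (t2 + 1))).exists_bound_of_continuousOn
    hf.continuousOn
  have uc := (isCompact_Icc : IsCompact (Icc (-M) M)).uniformContinuousOn_of_continuous hg'.continuousOn
  have err : Tendsto (fun h => ∫ t in t1..t2, ((f (t + h) - f t) / h) *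
      ((∫ τ in t..(t + h), g (f τ)) / h - g (F h t))) (𝓝[>] 0) (𝓝 0) := by
    rw [Metric.tendsto_nhds]
    intro η hη
    set κ := η / (2 * C ^ 2 * (t2 - t1 + 1)) with hκ
    have hκ0 : 0 < κ := div_pos hη (by have : 0 < t2 - t1 + 1 := by linarith
                                       positivity)
    obtain ⟨δ, hδ, hδ2⟩ := Metric.uniformContinuousOn_iff.1 uc κ hκ0
    have ev1 : ∀ᶠ h in 𝓝[>] (0:ℝ), h ∈ Ioo (0:ℝ) 1 := Ioo_mem_nhdsGT one_pos
    have ev2 : ∀ᶠ h in 𝓝[>] (0:ℝ), 2 * C * √h < δ := by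
      have : Continuous fun h => 2 * C * √h := by fun_prop
      have h0 := this.tendsto 0
      simp only [Real.sqrt_zero, mul_zero] at h0
      exact (h0.mono_left nhdsWithin_le_nhds).eventually_lt_const hδ
    filter_upwards [ev1, ev2] with h hh hh2
    have hs : 0 < √h := Real.sqrt_pos.2 hh.1
    have hss : √h * √h = h := Real.mul_self_sqrt hh.1.le
    have bd : ∀ t ∈ Set.uIoc t1 t2, ‖((f (t + h) - f t) / h) *
      ((∫ τ in t..(t + h), g (f τ)) / h - g (F h t))‖ ≤ 2 * C ^ 2 * κ := by
      intro t ht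
      rw [uIoc_of_le h12] at ht
      have ht' : t ∈ Icc t1 t2 := ⟨ht.1.le, ht.2⟩
      have near : ∀ τ ∈ Icc t (t + h), |f τ - f t| ≤ C * √h := by
        intro τ hτ
        rcases eq_or_lt_of_le hτ.1 with e | l
        · rw [← e]; simp; positivity
        · have := hol t ht' (τ - t) ⟨by linarith, by linarith [hτ.2, hh.2]⟩
          rw [add_sub_cancel] at this
          refine this.trans ?_
          gcongr; linarith [hτ.2]
      have Fi : ∫ τ in t..(t+h), (f τ - f t) = h * (F h t - f t) := by
        rw [intervalIntegral.integral_sub (hf.intervalIntegrable _ _) (by simp)]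
        simp only [hF, intervalIntegral.integral_const, smul_eq_mul]
        have := hh.1.ne'
        field_simp; ring
      have Fn : |F h t - f t| ≤ C * √h := by
        have := intervalIntegral.norm_integral_le_of_norm_le_const (a := t) (b := t + h) (C := C * √h)
          (f := fun τ => f τ - f t) (fun τ hτ => by
            rw [uIoc_of_le (by linarith [hh.1])] at hτ; exact near τ ⟨hτ.1.le, hτ.2⟩)
        rw [Fi, Real.norm_eq_abs, abs_mul, add_sub_cancel_left, abs_of_pos hh.1, mul_comm] at this
        exact le_of_mul_le_mul_right this hh.1
      have fM : ∀ τ ∈ Icc t (t + h), f τ ∈ Icc (-M) M := fun τ hτ => by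
        have := hM τ ⟨by linarith [hτ.1, ht'.1], by linarith [hτ.2, ht'.2, hh.2]⟩
        rw [Real.norm_eq_abs, abs_le] at this; exact this
      have FM : F h t ∈ Icc (-M) M := by
        have i1 : IntervalIntegrable f volume t (t+h) := hf.intervalIntegrable _ _
        have l1 : ∫ τ in t..(t+h), (-M) ≤ ∫ τ in t..(t+h), f τ :=
          intervalIntegral.integral_mono_on (by linarith [hh.1]) (by simp) i1 fun τ hτ => (fM τ hτ).1
        have l2 : ∫ τ in t..(t+h), f τ ≤ ∫ τ in t..(t+h), M :=
          intervalIntegral.integral_mono_on (by linarith [hh.1]) i1 (by simp) fun τ hτ => (fM τ hτ).2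
        simp only [intervalIntegral.integral_const, smul_eq_mul, add_sub_cancel_left] at l1 l2
        constructor
        · rw [hF, le_div_iff₀ hh.1]; linarith
        · rw [hF, div_le_iff₀ hh.1]; linarith
      set m := F h t with hm
      have lin : ∀ τ ∈ Icc t (t + h), |g (f τ) - g m - g' m * (f τ - m)| ≤ κ * (2 * C * √h) := by
        intro τ hτ
        have d1 : |f τ - m| ≤ 2 * C * √h := by
          have : f τ - m = (f τ - f t) - (m - f t) := by ring
          rw [this]; refine (abs_sub _ _).trans ?_
          linarith [near τ hτ, Fn]
        have hsub : uIcc m (f τ) ⊆ Icc (-M) M := by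
          apply (convex_Icc (-M) M).ordConnected.uIcc_subset FM (fM τ hτ)
        have key := (convex_uIcc m (f τ)).norm_image_sub_le_of_norm_hasDerivWithin_le
          (f := fun y => g y - g' m * y) (f' := fun y => g' y - g' m * 1) (C := κ) (x := m) (y := f τ)
          (fun y _ => ((hg y).sub ((hasDerivAt_id y).const_mul (g' m))).hasDerivWithinAt) (by
            intro y hy
            have hd : dist y m < δ := by
              rw [Real.dist_eq]
              have := abs_sub_left_of_mem_uIcc hy
              have d2 : |y - m| ≤ |f τ - m| := by simpa using this
              linarith
            have := hδ2 y (hsub hy) m FM hd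
            rw [mul_one, Real.norm_eq_abs, ← Real.dist_eq]; exact this.le)
          left_mem_uIcc right_mem_uIcc
        simp only [Real.norm_eq_abs] at key
        have e : g (f τ) - g m - g' m * (f τ - m) = g (f τ) - g' m * f τ - (g m - g' m * m) := by ring
        rw [e]
        refine key.trans ?_
        gcongr
      have I : ∫ τ in t..(t+h), (g (f τ) - g m - g' m * (f τ - m))
          = h * ((∫ τ in t..(t + h), g (f τ)) / h - g m) := by
        have gi : IntervalIntegrable (fun τ => g (f τ)) volume t (t+h) :=
          (hgc.comp hf).intervalIntegrable _ _
        have fi : IntervalIntegrable f volume t (t+h) := hf.intervalIntegrable _ _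
        rw [intervalIntegral.integral_sub (gi.sub (by simp)) ((fi.sub (by simp)).const_mul _),
          intervalIntegral.integral_sub gi (by simp), intervalIntegral.integral_const_mul,
          intervalIntegral.integral_sub fi (by simp)]
        simp only [intervalIntegral.integral_const, smul_eq_mul, hm, hF, add_sub_cancel_left]
        have := hh.1.ne'
        field_simp; ring
      have J : |(∫ τ in t..(t + h), g (f τ)) / h - g m| ≤ κ * (2 * C * √h) := by
        have := intervalIntegral.norm_integral_le_of_norm_le_const (a := t) (b := t + h)
          (C := κ * (2 * C * √h))
          (f := fun τ => g (f τ) - g m - g' m * (f τ - m)) (fun τ hτ => by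
            rw [uIoc_of_le (by linarith [hh.1])] at hτ; exact lin τ ⟨hτ.1.le, hτ.2⟩)
        rw [I, Real.norm_eq_abs, abs_mul, add_sub_cancel_left, abs_of_pos hh.1, mul_comm] at this
        exact le_of_mul_le_mul_right this hh.1
      have D := hol t ht' h hh
      rw [Real.norm_eq_abs, abs_mul, abs_div, abs_of_pos hh.1]
      calc |f (t + h) - f t| / h * |(∫ τ in t..(t + h), g (f τ)) / h - g m|
          ≤ (C * √h) / h * (κ * (2 * C * √h)) := by
            have := hh.1
            gcongr
        _ = 2 * C ^ 2 * κ * (√h * √h / h) := by ring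
        _ = _ := by rw [hss, div_self hh.1.ne', mul_one]
    have tot := intervalIntegral.norm_integral_le_of_norm_le_const bd
    rw [Real.dist_eq, sub_zero]
    rw [Real.norm_eq_abs, abs_of_nonneg (by linarith : 0 ≤ t2 - t1)] at tot
    refine lt_of_le_of_lt tot ?_
    have : 0 < t2 - t1 + 1 := by linarith
    have e : 2 * C ^ 2 * κ * (t2 - t1 + 1) = η := by rw [hκ]; field_simp
    have : 0 < 2 * C ^ 2 * κ := by positivity
    nlinarith
  have := lim1.add err
  rw [add_zero] at this
  refine this.congr fun h => ?_
  rw [← main, ← intervalIntegral.integral_add]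
  · congr 1; ext t; ring
  · exact ((hgc.comp (Fc h)).mul (dfc h)).intervalIntegrable _ _
  · exact ((dfc h).mul ((Ac h).sub (hgc.comp (Fc h)))).intervalIntegrable _ _


def Jf (S : ℝ → ℝ) (v : ℝ → ℝ → ℝ) (t : ℝ) : ℝ := ∫ x in (0:ℝ)..(S t), v t x ^ 2
def Kf (S : ℝ → ℝ) (W : ℝ → ℝ → ℝ) (t : ℝ) : ℝ := ∫ x in (0:ℝ)..(S t), W t x ^ 2
def En (p : ℝ) (S : ℝ → ℝ) (W v : ℝ → ℝ → ℝ) (t : ℝ) : ℝ :=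
  1 / 2 * Jf S v t - W t 0 ^ (p + 1) / (p + 1)

namespace Sys
variable {ε p : ℝ} {S : ℝ → ℝ} {W v : ℝ → ℝ → ℝ}

lemma V2_int (H : Sys ε p S W v) (t a b : ℝ) :
    IntervalIntegrable (fun x => Vf S v t x ^ 2) volume a b := by
  have e : (fun x => Vf S v t x ^ 2) = {x | x ≤ S t}.indicator (fun x => v t x ^ 2) := by
    ext x; by_cases h : x ≤ S t <;> simp [Vf, indicator, h]
  rw [e]
  have hm : MeasurableSet {x | x ≤ S t} := (isClosed_le continuous_id continuous_const).measurableSet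
  have := ((H.vt t).pow 2).intervalIntegrable (μ := volume) a b
  exact ⟨this.1.indicator hm, this.2.indicator hm⟩

lemma J_eq (H : Sys ε p S W v) {t R : ℝ} (hR : S t ≤ R) :
    ∫ x in (0:ℝ)..R, Vf S v t x ^ 2 = Jf S v t := by
  rw [← intervalIntegral.integral_add_adjacent_intervals (H.V2_int t 0 (S t)) (H.V2_int t (S t) R)]
  have h1 : ∫ x in (0:ℝ)..(S t), Vf S v t x ^ 2 = Jf S v t := by
    refine intervalIntegral.integral_congr fun x hx => ?_
    rw [uIcc_of_le (H.S_pos t).le] at hx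
    simp [Vf, hx.2]
  have h2 : ∫ x in (S t)..R, Vf S v t x ^ 2 = ∫ x in (S t)..R, 0 := by
    refine intervalIntegral.integral_congr_ae (ae_of_all _ fun x hx => ?_)
    rw [uIoc_of_le hR] at hx
    simp [Vf, hx.1]
  rw [h1, h2]; simp

lemma K_eq (H : Sys ε p S W v) {t R : ℝ} (hR : S t ≤ R) :
    ∫ x in (0:ℝ)..R, W t x ^ 2 = Kf S W t := by
  have i : ∀ a b, IntervalIntegrable (fun x => W t x ^ 2) volume a b := fun a b =>
    ((H.Wt t).pow 2).intervalIntegrable _ _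
  rw [← intervalIntegral.integral_add_adjacent_intervals (i 0 (S t)) (i (S t) R)]
  have h2 : ∫ x in (S t)..R, W t x ^ 2 = ∫ x in (S t)..R, 0 := by
    refine intervalIntegral.integral_congr_ae (ae_of_all _ fun x hx => ?_)
    rw [uIoc_of_le hR] at hx
    simp [H.W_zero t x hx.1.le]
  rw [h2]; simp [Kf]

lemma j_lim (H : Sys ε p S W v) {t R : ℝ} (ht : ε < t) (hR : S t ≤ R) :
    Tendsto (fun h => (∫ x in (0:ℝ)..R, (Zf S W (t + h) x - Zf S W t x) ^ 2) / h ^ 2) (𝓝[>] 0)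
      (𝓝 (Jf S v t)) := by
  have hR0 : 0 ≤ R := (H.S_pos t).le.trans hR
  rw [← H.J_eq hR]
  obtain ⟨C, hC, hv⟩ := H.v_bdd (t+1) R
  simp_rw [← intervalIntegral.integral_div]
  have ev : ∀ᶠ h in 𝓝[>] (0:ℝ), h ∈ Ioo (0:ℝ) 1 := Ioo_mem_nhdsGT one_pos
  refine intervalIntegral.tendsto_integral_filter_of_dominated_convergence (fun _ => C ^ 2) ?_ ?_ ?_ ?_
  · refine Eventually.of_forall fun h => ?_
    exact ((((H.Z_cont_x (t+h)).sub (H.Z_cont_x t)).pow 2).div_const _).aestronglyMeasurable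
  · filter_upwards [ev] with h hh
    refine ae_of_all _ fun x hx => ?_
    rw [uIoc_of_le hR0] at hx
    have := H.Z_lip hC hv (a := t) (b := t + h) (x := x) ⟨ht, by linarith⟩
      ⟨by linarith [hh.1], by linarith [hh.2]⟩ ⟨hx.1.le, hx.2⟩
    rw [add_sub_cancel_left, abs_of_pos hh.1] at this
    rw [Real.norm_eq_abs, abs_div, abs_of_pos (pow_pos hh.1 2), abs_pow, div_le_iff₀ (pow_pos hh.1 2),
      ← mul_pow]
    gcongr
  · simp
  · have : ∀ᵐ x ∂(volume : Measure ℝ), x ≠ S t := by simp [ae_iff]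
    filter_upwards [this] with x hx hx2
    rw [uIoc_of_le hR0] at hx2
    have h1 := hasDerivAt_iff_tendsto_slope_zero.1 (H.Z_der ht hx2.1.le hx)
    refine ((h1.mono_left (nhdsWithin_mono _ (fun x hx => ne_of_gt hx))).pow 2).congr fun h => ?_
    simp only [smul_eq_mul]
    rw [mul_pow, inv_pow]; field_simp

lemma W_ftc (H : Sys ε p S W v) {t x y : ℝ} (hx : 0 ≤ x) (hxy : x ≤ y) (hy : y ≤ S t) :
    ∫ z in x..y, v t z = W t x - W t y := by
  have := intervalIntegral.integral_eq_sub_of_hasDerivAt_of_le hxy (f := W t)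
    (f' := fun z => -(v t z)) (H.Wt t).continuousOn
    (fun z hz => H.W_der t z ⟨lt_of_le_of_lt hx hz.1, lt_of_lt_of_le hz.2 hy⟩)
    ((H.vt t).neg.intervalIntegrable _ _)
  rw [intervalIntegral.integral_neg] at this
  linarith

lemma W_lip (H : Sys ε p S W v) {T R C : ℝ}
    (hv : ∀ t ∈ Icc ε T, ∀ x ∈ Icc 0 R, |v t x| ≤ C) {t x y : ℝ} (ht : t ∈ Icc ε T)
    (hx : 0 ≤ x) (hxy : x ≤ y) (hy : y ≤ S t) (hR : S t ≤ R) : |W t x - W t y| ≤ C * (y - x) := by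
  rw [← H.W_ftc hx hxy hy, ← Real.norm_eq_abs]
  refine (intervalIntegral.norm_integral_le_of_norm_le_const (C := C) fun z hz => ?_).trans ?_
  · rw [uIoc_of_le hxy] at hz
    exact hv t ht z ⟨hx.trans hz.1.le, (hz.2.trans hy).trans hR⟩
  · rw [abs_of_nonneg (by linarith)]

lemma holder (H : Sys ε p S W v) {t1 t2 : ℝ} (h1 : ε < t1) :
    ∃ C, 0 < C ∧ ∀ t ∈ Icc t1 t2, ∀ h ∈ Ioo (0:ℝ) 1, |W (t + h) 0 - W t 0| ≤ C * √h := by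
  obtain ⟨C, hC, hv⟩ := H.v_bdd (t2+1) (S (t2 + 1))
  set a := min 1 (S t1) with ha
  have ha0 : 0 < a := lt_min one_pos (H.S_pos t1)
  refine ⟨2 * C * (1 / a + a), by positivity, fun t ht h hh => ?_⟩
  set δ := a * √h with hδ
  have hs : 0 < √h := Real.sqrt_pos.2 hh.1
  have hss : √h * √h = h := Real.mul_self_sqrt hh.1.le
  have hs1 : √h ≤ 1 := Real.sqrt_le_one.2 hh.2.le
  have hδ0 : 0 < δ := by positivity
  have hδS : ∀ τ, t ≤ τ → δ ≤ S τ := fun τ hτ => by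
    have : δ ≤ a * 1 := by rw [hδ]; gcongr
    have h2 : a ≤ S t1 := min_le_right _ _
    have := H.S_mono (ht.1.trans hτ)
    linarith
  have mem : ∀ τ ∈ Icc t (t + h), τ ∈ Icc ε (t2 + 1) := fun τ hτ =>
    ⟨by linarith [hτ.1, ht.1], by linarith [hτ.2, ht.2, hh.2]⟩
  have SR : ∀ τ ∈ Icc t (t + h), S τ ≤ S (t2 + 1) := fun τ hτ => H.S_mono (mem τ hτ).2
  have B := H.bal t (t + h) (by linarith [ht.1]) (by linarith [hh.1]) δ ⟨hδ0.le, hδS t le_rfl⟩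
  have b1 : |∫ τ in t..(t + h), (v τ 0 - v τ δ)| ≤ 2 * C * h := by
    rw [← Real.norm_eq_abs]
    refine (intervalIntegral.norm_integral_le_of_norm_le_const (C := 2 * C) fun τ hτ => ?_).trans ?_
    · rw [uIoc_of_le (by linarith [hh.1])] at hτ
      have hτ' : τ ∈ Icc t (t+h) := ⟨hτ.1.le, hτ.2⟩
      have e1 := hv τ (mem τ hτ') 0 ⟨le_rfl, (H.S_pos _).le⟩
      have e2 := hv τ (mem τ hτ') δ ⟨hδ0.le, (hδS τ hτ'.1).trans (SR τ hτ')⟩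
      refine (abs_sub _ _).trans ?_
      linarith
    · rw [add_sub_cancel_left, abs_of_pos hh.1]
  have b2 : |(∫ y in (0:ℝ)..δ, (W (t + h) y - W t y)) - δ * (W (t + h) 0 - W t 0)| ≤ 2 * C * δ * δ := by
    have e : (∫ y in (0:ℝ)..δ, (W (t + h) y - W t y)) - δ * (W (t + h) 0 - W t 0)
      = ∫ y in (0:ℝ)..δ, ((W (t + h) y - W t y) - (W (t + h) 0 - W t 0)) := by
      have i1 : IntervalIntegrable (fun y => W (t + h) y - W t y) volume 0 δ :=
        ((H.Wt _).sub (H.Wt _)).intervalIntegrable _ _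
      rw [intervalIntegral.integral_sub i1 (by simp)]
      simp; ring
    rw [e, ← Real.norm_eq_abs]
    refine (intervalIntegral.norm_integral_le_of_norm_le_const (C := 2 * C * δ) fun y hy => ?_).trans ?_
    · rw [uIoc_of_le hδ0.le] at hy
      have tm : t ∈ Icc t (t+h) := ⟨le_rfl, by linarith [hh.1]⟩
      have tm' : t + h ∈ Icc t (t+h) := ⟨by linarith [hh.1], le_rfl⟩
      have e1 := H.W_lip hv (mem _ tm) le_rfl hy.1.le (hy.2.trans (hδS _ tm.1)) (SR _ tm)
      have e2 := H.W_lip hv (mem _ tm') le_rfl hy.1.le (hy.2.trans (hδS _ tm'.1)) (SR _ tm')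
      have : C * (y - 0) ≤ C * δ := by gcongr; linarith [hy.2]
      have e3 : (W (t + h) y - W t y) - (W (t + h) 0 - W t 0)
        = (W t 0 - W t y) - (W (t + h) 0 - W (t + h) y) := by ring
      rw [e3]
      refine (abs_sub _ _).trans ?_
      linarith
    · rw [sub_zero, abs_of_pos hδ0]
  rw [B] at b2
  have b3 : δ * |W (t + h) 0 - W t 0| ≤ 2 * C * h + 2 * C * δ * δ := by
    rw [← abs_of_pos hδ0, ← abs_mul, abs_of_pos hδ0]
    rw [abs_le] at *
    constructor <;> linarith
  have : δ * |W (t + h) 0 - W t 0| ≤ δ * (2 * C * (1 / a + a) * √h) := by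
    refine b3.trans (le_of_eq ?_)
    rw [hδ]
    have : 2 * C * h = 2 * C * (√h * √h) := by rw [hss]
    rw [this]; field_simp
  exact le_of_mul_le_mul_left this hδ0

def I3 (S : ℝ → ℝ) (W : ℝ → ℝ → ℝ) (h t : ℝ) : ℝ := ∫ x in (S t)..(S (t + h)), W (t + h) x

lemma scale {g : ℝ → ℝ} (x y : ℝ) : ∫ z in x..y, g z = (y - x) * ∫ θ in (0:ℝ)..1, g (x + (y - x) * θ) := by
  have := intervalIntegral.smul_integral_comp_add_mul (a := 0) (b := 1) g (y - x) x
  simp only [smul_eq_mul] at this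
  rw [this]; simp

lemma I3_pt (H : Sys ε p S W v) {t : ℝ} (ht : ε < t) :
    Tendsto (fun h => I3 S W h t / h ^ 2) (𝓝[>] 0) (𝓝 (v t (S t) ^ 3 / 2)) := by
  set Q : ℝ → ℝ := fun h => ∫ θ in (0:ℝ)..1, (1 - θ) *
    ∫ η in (0:ℝ)..1, v (t + h) ((S t + (S (t+h) - S t) * θ) + (S (t+h) - (S t + (S (t+h) - S t) * θ)) * η) with hQ
  have Qc : Continuous Q := by
    refine intervalIntegral.continuous_parametric_intervalIntegral_of_continuous' ?_ _ _
    refine Continuous.mul (by fun_prop) ?_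
    refine intervalIntegral.continuous_parametric_intervalIntegral_of_continuous' ?_ _ _
    exact H.v_cont.comp (by
      have := H.S_cont
      fun_prop : Continuous fun q : (ℝ × ℝ) × ℝ => (t + q.1.1,
        (S t + (S (t+q.1.1) - S t) * q.1.2) + (S (t+q.1.1) - (S t + (S (t+q.1.1) - S t) * q.1.2)) * q.2))
  have Q0 : Q 0 = v t (S t) / 2 := by
    simp only [hQ, add_zero, sub_self, zero_mul, intervalIntegral.integral_const, sub_zero,
      one_smul, intervalIntegral.integral_mul_const]
    rw [intervalIntegral.integral_sub (by simp) (by simp)]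
    simp; ring
  have Ql := (Qc.tendsto 0).mono_left (nhdsWithin_le_nhds (s := Ioi (0:ℝ)))
  rw [Q0] at Ql
  have h1 := (hasDerivAt_iff_tendsto_slope_zero.1 (H.S_der t ht)).mono_left
    (nhdsWithin_mono (t := {0}ᶜ) (s := Ioi (0:ℝ)) _ (fun x hx => ne_of_gt hx))
  have := (h1.pow 2).mul Ql
  have e : v t (S t) ^ 2 * (v t (S t) / 2) = v t (S t) ^ 3 / 2 := by ring
  rw [e] at this
  refine this.congr' ?_
  filter_upwards [self_mem_nhdsWithin] with h hh
  have hh : 0 < h := hh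
  have hS : S t ≤ S (t + h) := H.S_mono (by linarith)
  have key : I3 S W h t = (S (t + h) - S t) ^ 2 * Q h := by
    unfold I3
    rw [scale, pow_two, mul_assoc]
    congr 1
    rw [hQ, ← intervalIntegral.integral_const_mul]
    refine intervalIntegral.integral_congr fun θ hθ => ?_
    rw [uIcc_of_le zero_le_one] at hθ
    have x0 : 0 ≤ (S (t + h) - S t) * θ := mul_nonneg (by linarith) hθ.1
    have x1 : (S (t + h) - S t) * θ ≤ S (t + h) - S t := mul_le_of_le_one_right (by linarith) hθ.2
    have f := H.W_ftc (t := t + h) (x := S t + (S (t + h) - S t) * θ) (y := S (t + h))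
      (by linarith [H.S_pos t]) (by linarith) le_rfl
    rw [H.W_zero _ _ le_rfl, sub_zero, scale] at f
    rw [← f]; ring
  rw [key]
  simp only [smul_eq_mul]
  field_simp

lemma I3_cont (H : Sys ε p S W v) (h : ℝ) : Continuous (I3 S W h) := by
  have c : Continuous (Function.uncurry fun t x => W (t + h) x) :=
    H.W_cont.comp (by fun_prop : Continuous fun q : ℝ × ℝ => (q.1 + h, q.2))
  have e : I3 S W h = fun t => (∫ x in (0:ℝ)..(S (t + h)), W (t + h) x) - ∫ x in (0:ℝ)..(S t), W (t + h) x := by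
    ext t
    exact (intervalIntegral.integral_interval_sub_left ((H.Wt _).intervalIntegrable _ _)
      ((H.Wt _).intervalIntegrable _ _)).symm
  rw [e]
  have hS := H.S_cont
  exact (intervalIntegral.continuous_parametric_intervalIntegral_of_continuous c (by fun_prop)).sub
    (intervalIntegral.continuous_parametric_intervalIntegral_of_continuous c hS)

lemma I3_lim (H : Sys ε p S W v) {t1 t2 : ℝ} (h1 : ε < t1) (h12 : t1 ≤ t2) :
    Tendsto (fun h => ∫ t in t1..t2, I3 S W h t / h ^ 2) (𝓝[>] 0) 
      (𝓝 (∫ t in t1..t2, v t (S t) ^ 3 / 2)) := by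
  obtain ⟨C, hC, hv⟩ := H.v_bdd (t2+1) (S (t2 + 1))
  have ev : ∀ᶠ h in 𝓝[>] (0:ℝ), h ∈ Ioo (0:ℝ) 1 := Ioo_mem_nhdsGT one_pos
  refine intervalIntegral.tendsto_integral_filter_of_dominated_convergence (fun _ => C ^ 3) ?_ ?_ ?_ ?_
  · exact Eventually.of_forall fun h => ((H.I3_cont h).div_const _).aestronglyMeasurable
  · filter_upwards [ev] with h hh
    refine ae_of_all _ fun t ht => ?_
    rw [uIoc_of_le h12] at ht
    have hS : S t ≤ S (t + h) := H.S_mono (by linarith [hh.1])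
    have hSR : S (t + h) ≤ S (t2 + 1) := H.S_mono (by linarith [hh.2, ht.2])
    have dS : S (t + h) - S t ≤ C * h := by
      have := (convex_Icc t (t + h)).norm_image_sub_le_of_norm_hasDerivWithin_le (f := S)
        (f' := fun τ => v τ (S τ)) (C := C)
        (fun τ hτ => (H.S_der τ (by linarith [hτ.1, ht.1])).hasDerivWithinAt)
        (fun τ hτ => hv τ ⟨by linarith [hτ.1, ht.1], by linarith [hτ.2, ht.2, hh.2]⟩ (S τ)
          ⟨(H.S_pos τ).le, (H.S_mono hτ.2).trans hSR⟩)
        (left_mem_Icc.2 (by linarith [hh.1])) (right_mem_Icc.2 (by linarith [hh.1]))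
      rw [add_sub_cancel_left, Real.norm_eq_abs, Real.norm_eq_abs, abs_of_pos hh.1] at this
      exact (le_abs_self _).trans this
    have : ‖I3 S W h t‖ ≤ C * (C * h) * |S (t + h) - S t| := by
      refine intervalIntegral.norm_integral_le_of_norm_le_const fun x hx => ?_
      rw [uIoc_of_le hS] at hx
      have := H.W_lip hv (t := t + h) (x := x) (y := S (t + h)) ⟨by linarith [hh.1, ht.1], by linarith [hh.2, ht.2]⟩
        (by linarith [H.S_pos t, hx.1]) hx.2 le_rfl hSR
      rw [H.W_zero _ _ le_rfl, sub_zero] at this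
      refine this.trans ?_
      gcongr; linarith [hx.1]
    rw [abs_of_nonneg (by linarith)] at this
    rw [norm_div, Real.norm_eq_abs (h ^ 2), abs_of_pos (pow_pos hh.1 2), div_le_iff₀ (pow_pos hh.1 2)]
    refine this.trans ?_
    have := hh.1
    calc C * (C * h) * (S (t + h) - S t) ≤ C * (C * h) * (C * h) := by gcongr
      _ = _ := by ring
  · simp
  · refine ae_of_all _ fun t ht => ?_
    rw [uIoc_of_le h12] at ht
    exact H.I3_pt (by linarith [ht.1])

def Ah (W : ℝ → ℝ → ℝ) (R t1 t2 h : ℝ) : ℝ :=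
  ∫ t in t1..t2, (∫ x in (0:ℝ)..R, (W (t + h) x - W t x) ^ 2) / h ^ 2

lemma dW2_cont (H : Sys ε p S W v) (R h : ℝ) :
    Continuous fun t => ∫ x in (0:ℝ)..R, (W (t + h) x - W t x) ^ 2 := by
  refine intervalIntegral.continuous_parametric_intervalIntegral_of_continuous' ?_ _ _
  have c : Continuous (fun q : ℝ × ℝ => W (q.1 + h) q.2) :=
    H.W_cont.comp (by fun_prop : Continuous fun q : ℝ × ℝ => (q.1 + h, q.2))
  have c2 : Continuous (fun q : ℝ × ℝ => W q.1 q.2) := H.W_cont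
  exact (c.sub c2).pow 2

lemma A_lim (H : Sys ε p S W v) (hp : 1 < p) {t1 t2 R : ℝ} (h1 : ε < t1) (h12 : t1 ≤ t2)
    (hR : S (t2 + 2) ≤ R) :
    Tendsto (Ah W R t1 t2) (𝓝[>] 0)
      (𝓝 (En p S W v t1 - En p S W v t2 - ∫ t in t1..t2, v t (S t) ^ 3 / 2)) := by
  have SR : ∀ t, t ≤ t2 → S t ≤ R := fun t ht => (H.S_mono (by linarith)).trans hR
  obtain ⟨C, hC, hol⟩ := H.holder (t2 := t2) h1
  have L1 := lemB (f := fun t => W t 0) (g := fun y => y ^ p) (g' := fun y => p * y ^ (p - 1))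
    (P := fun y => y ^ (p + 1) / (p + 1)) (H.Wx 0)
    (fun y => Real.hasDerivAt_rpow_const (Or.inr hp.le))
    (continuous_const.mul (Real.continuous_rpow_const (by linarith)))
    (fun y => ((Real.hasDerivAt_rpow_const (x := y) (p := p + 1) (Or.inr (by linarith))).div_const _).congr_deriv
      (by have : p + 1 ≠ 0 := by linarith
          rw [add_sub_cancel_right]; field_simp)) h12 hC hol
  have L3 := H.I3_lim h1 h12
  have LJ1 := H.j_lim h1 (SR t1 h12)
  have LJ2 := H.j_lim (lt_of_lt_of_le h1 h12) (SR t2 le_rfl)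
  have := (L1.sub L3).sub ((LJ2.sub LJ1).const_mul (1/2))
  have e : W t2 0 ^ (p + 1) / (p + 1) - W t1 0 ^ (p + 1) / (p + 1) - (∫ t in t1..t2, v t (S t) ^ 3 / 2)
      - 1 / 2 * (Jf S v t2 - Jf S v t1)
      = En p S W v t1 - En p S W v t2 - ∫ t in t1..t2, v t (S t) ^ 3 / 2 := by
    unfold En; ring
  rw [e] at this
  refine this.congr' ?_
  have ev : ∀ᶠ h in 𝓝[>] (0:ℝ), h ∈ Ioo (0:ℝ) 1 := Ioo_mem_nhdsGT one_pos
  filter_upwards [ev] with h hh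
  set D : ℝ → ℝ := fun t => (W (t + h) 0 - W t 0) * (Zf S W (t + h) 0 - Zf S W t 0) with hD
  have Dc : Continuous D := by
    have a1 := H.Wx 0
    have a2 := H.Z_cont_t 0
    have a3 : Continuous fun t => W (t + h) 0 := a1.comp (by fun_prop : Continuous fun t : ℝ => t + h)
    have a4 : Continuous fun t => Zf S W (t + h) 0 := a2.comp (by fun_prop : Continuous fun t : ℝ => t + h)
    exact (a3.sub a1).mul (a4.sub a2)
  have key := intervalIntegral.integral_eq_sub_of_hasDerivAt (a := t1) (b := t2)
    (fun t ht => by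
      rw [uIcc_of_le h12] at ht
      exact H.j_der (R := R) (lt_of_lt_of_le h1 ht.1) hh.1
        ((H.S_mono (by linarith [hh.2, ht.2])).trans hR))
    ((continuous_const.mul ((Dc.sub (H.dW2_cont R h)).sub (H.I3_cont h))).intervalIntegrable _ _)
  have I1 : ∫ t in t1..t2, ((W (t + h) 0 - W t 0) / h) * ((∫ τ in t..(t + h), W τ 0 ^ p) / h)
      = (∫ t in t1..t2, D t) / h ^ 2 := by
    rw [← intervalIntegral.integral_div]
    refine intervalIntegral.integral_congr fun t ht => ?_
    rw [uIcc_of_le h12] at ht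
    have := H.Z_ftc (a := t) (b := t + h) (x := 0) (by linarith [ht.1]) (by linarith [hh.1]) le_rfl
    simp only [H.V0] at this
    simp only [this, hD]
    have := hh.1.ne'
    field_simp
  rw [I1]
  unfold Ah
  rw [intervalIntegral.integral_div, intervalIntegral.integral_div]
  have i1 : IntervalIntegrable D volume t1 t2 := Dc.intervalIntegrable _ _
  have i2 : IntervalIntegrable (fun t => ∫ x in (0:ℝ)..R, (W (t + h) x - W t x) ^ 2) volume t1 t2 :=
    (H.dW2_cont R h).intervalIntegrable _ _
  have i3 : IntervalIntegrable (I3 S W h) volume t1 t2 := (H.I3_cont h).intervalIntegrable _ _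
  have k2 : 2 * ((∫ t in t1..t2, D t) - (∫ t in t1..t2, ∫ x in (0:ℝ)..R, (W (t + h) x - W t x) ^ 2)
      - ∫ t in t1..t2, I3 S W h t) = (∫ x in (0:ℝ)..R, (Zf S W (t2 + h) x - Zf S W t2 x) ^ 2)
        - ∫ x in (0:ℝ)..R, (Zf S W (t1 + h) x - Zf S W t1 x) ^ 2 := by
    rw [← key, ← intervalIntegral.integral_sub i1 i2, ← intervalIntegral.integral_sub (i1.sub i2) i3,
      ← intervalIntegral.integral_const_mul]
    rfl
  have hne := hh.1.ne'
  field_simp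
  linarith

end Sys


lemma blowup {K K' G : ℝ → ℝ} {T β : ℝ} (hβ : 0 < β) (dG : ∀ t, T ≤ t → HasDerivAt G (K t) t)
    (dK : ∀ t, T ≤ t → HasDerivAt K (K' t) t) (hG : ∀ t, T ≤ t → 0 < G t) (hK : 0 < K T)
    (h : ∀ t, T ≤ t → (1 + β) * K t ^ 2 ≤ G t * K' t) : False := by
  have d1 : ∀ t, T ≤ t → HasDerivAt (fun t => K t * G t ^ (-(1 + β)))
      (K' t * G t ^ (-(1 + β)) + K t * (K t * (-(1+β)) * G t ^ (-(1 + β) - 1))) t := fun t ht =>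
    (dK t ht).mul ((dG t ht).rpow_const (Or.inl (hG t ht).ne'))
  have m1 : MonotoneOn (fun t => K t * G t ^ (-(1 + β))) (Ici T) := by
    refine monotoneOn_of_deriv_nonneg (convex_Ici T) (fun t ht => (d1 t ht).continuousAt.continuousWithinAt)
      (fun t ht => (d1 t (interior_subset ht)).differentiableAt.differentiableWithinAt) (fun t ht => ?_)
    have ht := interior_subset ht
    rw [(d1 t ht).deriv]
    have g := hG t ht
    have e : G t ^ (-(1 + β)) = G t * G t ^ (-(1 + β) - 1) := by
      conv_rhs => rw [← Real.rpow_one (G t)]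
      rw [Real.rpow_one, mul_comm, ← Real.rpow_add_one g.ne']; ring_nf
    rw [e]
    have : K' t * (G t * G t ^ (-(1 + β) - 1)) + K t * (K t * (-(1+β)) * G t ^ (-(1 + β) - 1))
      = (G t * K' t - (1 + β) * K t ^ 2) * G t ^ (-(1 + β) - 1) := by ring
    rw [this]
    exact mul_nonneg (by linarith [h t ht]) (Real.rpow_nonneg g.le _)
  set ρ := K T * G T ^ (-(1 + β)) with hρ
  have ρ0 : 0 < ρ := mul_pos hK (Real.rpow_pos_of_pos (hG T le_rfl) _)
  have d2 : ∀ t, T ≤ t → HasDerivAt (fun t => G t ^ (-β) + β * ρ * t)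
      (K t * (-β) * G t ^ (-β - 1) + β * ρ * 1) t := fun t ht =>
    ((dG t ht).rpow_const (Or.inl (hG t ht).ne')).add ((hasDerivAt_id t).const_mul _)
  have m2 : AntitoneOn (fun t => G t ^ (-β) + β * ρ * t) (Ici T) := by
    refine antitoneOn_of_deriv_nonpos (convex_Ici T) (fun t ht => (d2 t ht).continuousAt.continuousWithinAt)
      (fun t ht => (d2 t (interior_subset ht)).differentiableAt.differentiableWithinAt) (fun t ht => ?_)
    have ht := interior_subset ht
    rw [(d2 t ht).deriv]
    have := m1 self_mem_Ici ht ht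
    simp only at this
    have e : -β - 1 = -(1 + β) := by ring
    rw [e]
    nlinarith
  set t := T + (G T ^ (-β)) / (β * ρ) with ht
  have g0 := Real.rpow_pos_of_pos (hG T le_rfl) (-β)
  have hbr : 0 < β * ρ := mul_pos hβ ρ0
  have htT : T ≤ t := by rw [ht]; linarith [div_pos g0 hbr]
  have := m2 self_mem_Ici (mem_Ici.2 htT) htT
  simp only at this
  have gt := Real.rpow_pos_of_pos (hG t htT) (-β)
  have e : β * ρ * t = β * ρ * T + G T ^ (-β) := by rw [ht]; field_simp
  linarith

namespace Sys
variable {ε p : ℝ} {S : ℝ → ℝ} {W v : ℝ → ℝ → ℝ}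

lemma vS_nn (H : Sys ε p S W v) {t : ℝ} (ht : ε < t) : 0 ≤ v t (S t) := by
  rw [← (H.S_der t ht).deriv]; exact H.S_mono.deriv_nonneg

lemma Ah_nn (R t1 t2 h : ℝ) (h12 : t1 ≤ t2) (hR : 0 ≤ R) : 0 ≤ Ah W R t1 t2 h := by
  refine intervalIntegral.integral_nonneg h12 fun t _ => ?_
  exact div_nonneg (intervalIntegral.integral_nonneg hR fun x _ => sq_nonneg _) (sq_nonneg _)

lemma vS3_cont (H : Sys ε p S W v) : Continuous fun t => v t (S t) :=
  H.v_cont.comp (by have := H.S_cont; fun_prop : Continuous fun t => (t, S t))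

lemma E_int (H : Sys ε p S W v) (hp : 1 < p) {t1 t2 : ℝ} (h1 : ε < t1) (h12 : t1 ≤ t2) :
    ∫ t in t1..t2, v t (S t) ^ 3 / 2 ≤ En p S W v t1 - En p S W v t2 := by
  have := ge_of_tendsto' (H.A_lim hp h1 h12 le_rfl) fun h => Ah_nn (W := W) _ _ _ h h12 (H.S_pos _).le
  linarith

lemma E_cube (H : Sys ε p S W v) (hp : 1 < p) {t1 t2 : ℝ} (h1 : ε < t1) (h12 : t1 < t2) :
    (S t2 - S t1) ^ 3 / (2 * (t2 - t1) ^ 2) ≤ En p S W v t1 - En p S W v t2 := by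
  refine le_trans ?_ (H.E_int hp h1 h12.le)
  have hd : 0 < t2 - t1 := by linarith
  have hS := H.S_mono h12.le
  set l := (S t2 - S t1) / (t2 - t1) with hl
  have hl0 : 0 ≤ l := div_nonneg (by linarith) hd.le
  have ftc : ∫ t in t1..t2, v t (S t) = S t2 - S t1 :=
    intervalIntegral.integral_eq_sub_of_hasDerivAt (fun t ht => by
      rw [uIcc_of_le h12.le] at ht; exact H.S_der t (by linarith [ht.1]))
      (H.vS3_cont.intervalIntegrable _ _)
  have i1 : IntervalIntegrable (fun t => v t (S t)) volume t1 t2 := H.vS3_cont.intervalIntegrable _ _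
  have : ∫ t in t1..t2, ((3 * l ^ 2 / 2) * v t (S t) - l ^ 3) ≤ ∫ t in t1..t2, v t (S t) ^ 3 / 2 := by
    refine intervalIntegral.integral_mono_on h12.le ((i1.const_mul _).sub (by simp))
      (((H.vS3_cont.pow 3).div_const 2).intervalIntegrable _ _) fun t ht => ?_
    have := H.vS_nn (lt_of_lt_of_le h1 ht.1)
    nlinarith [mul_nonneg (sq_nonneg (v t (S t) - l)) (by linarith : 0 ≤ v t (S t) + 2 * l)]
  refine le_trans (le_of_eq ?_) this
  rw [intervalIntegral.integral_sub (i1.const_mul _) (by simp), intervalIntegral.integral_const_mul, ftc]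
  simp only [intervalIntegral.integral_const, smul_eq_mul, hl]
  field_simp; ring

lemma E_anti (H : Sys ε p S W v) (hp : 1 < p) {t1 t2 : ℝ} (h1 : ε < t1) (h12 : t1 ≤ t2) :
    En p S W v t2 ≤ En p S W v t1 := by
  have := H.E_int hp h1 h12
  have h2 : 0 ≤ ∫ t in t1..t2, v t (S t) ^ 3 / 2 := intervalIntegral.integral_nonneg h12 fun t ht => by
    have := H.vS_nn (lt_of_lt_of_le h1 ht.1)
    positivity
  linarith

lemma K_cont (H : Sys ε p S W v) : Continuous (Kf S W) := by
  have c : Continuous (Function.uncurry fun t x => W t x ^ 2) := H.W_cont.pow 2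
  exact intervalIntegral.continuous_parametric_intervalIntegral_of_continuous c H.S_cont

lemma K_lam (H : Sys ε p S W v) (hp : 1 < p) {t1 t2 l : ℝ} (h1 : ε < t1) (h12 : t1 ≤ t2) (hl : 0 < l) :
    Kf S W t2 - Kf S W t1 ≤ l * (∫ t in t1..t2, Kf S W t) + (En p S W v t1 - En p S W v t2) / l := by
  set R := S (t2 + 2) with hR
  have hR0 : 0 ≤ R := (H.S_pos _).le
  have KR : ∀ t, t ≤ t2 + 2 → ∫ x in (0:ℝ)..R, W t x ^ 2 = Kf S W t := fun t ht => H.K_eq (H.S_mono ht)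
  have A := H.A_lim hp h1 h12 (le_refl R)
  have h0 : Tendsto (fun h : ℝ => h) (𝓝[>] 0) (𝓝 0) := tendsto_id.mono_left nhdsWithin_le_nhds
  have Rt := (A.mul_const (1 / l)).const_add (l * ∫ t in t1..t2, Kf S W t) |>.add (h0.mul A)
  have kc := H.K_cont
  have prim : ∀ t, Tendsto (fun h => (∫ τ in t..(t+h), Kf S W τ) / h) (𝓝[>] 0) (𝓝 (Kf S W t)) := by
    intro t
    have d : HasDerivAt (fun y => ∫ τ in t..y, Kf S W τ) (Kf S W t) t :=
      intervalIntegral.integral_hasDerivAt_right (kc.intervalIntegrable _ _)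
        (kc.stronglyMeasurableAtFilter _ _) kc.continuousAt
    refine ((hasDerivAt_iff_tendsto_slope_zero.1 d).mono_left
      (nhdsWithin_mono _ (fun x hx => ne_of_gt hx))).congr fun h => ?_
    simp only [intervalIntegral.integral_same, sub_zero, smul_eq_mul]; ring
  have Lt := (prim t2).sub (prim t1)
  have ev : ∀ᶠ h in 𝓝[>] (0:ℝ), h ∈ Ioo (0:ℝ) 1 := Ioo_mem_nhdsGT one_pos
  have fin := le_of_tendsto_of_tendsto Lt Rt ?_
  · have h2 : 0 ≤ ∫ t in t1..t2, v t (S t) ^ 3 / 2 := intervalIntegral.integral_nonneg h12 fun t ht => by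
      have := H.vS_nn (lt_of_lt_of_le h1 ht.1)
      positivity
    refine fin.trans ?_
    rw [zero_mul, add_zero, mul_one_div]
    refine add_le_add le_rfl (div_le_div_of_nonneg_right ?_ hl.le)
    linarith
  · filter_upwards [ev] with h hh
    have hp0 := hh.1
    have ki : ∀ a b, IntervalIntegrable (Kf S W) volume a b := fun a b => kc.intervalIntegrable _ _
    have kci : IntervalIntegrable (fun t => Kf S W (t + h)) volume t1 t2 :=
      (kc.comp (by fun_prop : Continuous fun t : ℝ => t + h)).intervalIntegrable _ _
    have e1 : (∫ τ in t2..(t2+h), Kf S W τ) / h - (∫ τ in t1..(t1+h), Kf S W τ) / h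
        = ∫ t in t1..t2, (Kf S W (t + h) - Kf S W t) / h := by
      rw [intervalIntegral.integral_div, intervalIntegral.integral_sub kci (ki _ _),
        intervalIntegral.integral_comp_add_right (fun t => Kf S W t) h]
      have a1 := intervalIntegral.integral_add_adjacent_intervals (ki t1 t2) (ki t2 (t2 + h))
      have a2 := intervalIntegral.integral_add_adjacent_intervals (ki t1 (t1 + h)) (ki (t1 + h) (t2 + h))
      rw [← sub_div]; congr 1; linarith
    rw [e1]
    have dc := H.dW2_cont R h
    have e2 : l * (∫ t in t1..t2, Kf S W t) + Ah W R t1 t2 h * (1 / l) + h * Ah W R t1 t2 h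
      = ∫ t in t1..t2, (l * Kf S W t + (1 / l + h) * ((∫ x in (0:ℝ)..R, (W (t + h) x - W t x) ^ 2) / h ^ 2)) := by
      rw [intervalIntegral.integral_add ((ki _ _).const_mul _)
        (((dc.div_const _).intervalIntegrable _ _).const_mul _),
        intervalIntegral.integral_const_mul, intervalIntegral.integral_const_mul]
      unfold Ah; ring
    rw [e2]
    refine intervalIntegral.integral_mono_on h12 ((kci.sub (ki _ _)).div_const _)
      (((continuous_const.mul kc).add (continuous_const.mul (dc.div_const _))).intervalIntegrable _ _)
      fun t ht => ?_
    rw [← KR (t + h) (by linarith [ht.2, hh.2]), ← KR t (by linarith [ht.2]), div_le_iff₀ hh.1]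
    have w : ∀ c, IntervalIntegrable (fun x => W c x ^ 2) volume 0 R := fun c =>
      ((H.Wt c).pow 2).intervalIntegrable _ _
    have w2 : IntervalIntegrable (fun x => (W (t + h) x - W t x) ^ 2) volume 0 R :=
      (((H.Wt _).sub (H.Wt _)).pow 2).intervalIntegrable _ _
    rw [← intervalIntegral.integral_sub (w _) (w _), ← intervalIntegral.integral_div,
      ← intervalIntegral.integral_const_mul, ← intervalIntegral.integral_const_mul,
      ← intervalIntegral.integral_add ((w _).const_mul _) ((w2.div_const _).const_mul _),
      ← intervalIntegral.integral_mul_const]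
    refine intervalIntegral.integral_mono_on hR0 ((w _).sub (w _))
      ((((w _).const_mul _).add ((w2.div_const _).const_mul _)).mul_const _) fun x _ => ?_
    set a := W t x
    set b := W (t + h) x
    have : (l * a ^ 2 + (1 / l + h) * ((b - a) ^ 2 / h ^ 2)) * h - (b ^ 2 - a ^ 2)
       = (l * h * a - (b - a)) ^ 2 / (l * h) := by
      field_simp; ring
    have h3 : 0 ≤ (l * h * a - (b - a)) ^ 2 / (l * h) := by positivity
    linarith

lemma K_CS (H : Sys ε p S W v) (hp : 1 < p) {t1 t2 : ℝ} (h1 : ε < t1) (h12 : t1 ≤ t2)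
    (hd : 0 < Kf S W t2 - Kf S W t1) (hG : 0 < ∫ t in t1..t2, Kf S W t) :
    (Kf S W t2 - Kf S W t1) ^ 2 ≤ 4 * (∫ t in t1..t2, Kf S W t) * (En p S W v t1 - En p S W v t2) := by
  set d := Kf S W t2 - Kf S W t1 with hd'
  set G := ∫ t in t1..t2, Kf S W t with hG'
  have := H.K_lam hp (l := d / (2 * G)) h1 h12 (by positivity)
  rw [← hd', ← hG'] at this
  have e1 : d / (2 * G) * G = d / 2 := by field_simp
  have e2 : ∀ E, E / (d / (2 * G)) = 2 * G * E / d := fun E => by field_simp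
  rw [e1, e2] at this
  have h3 : d / 2 ≤ 2 * G * (En p S W v t1 - En p S W v t2) / d := by linarith
  rw [le_div_iff₀ hd] at h3
  nlinarith

lemma K_hasDeriv (H : Sys ε p S W v) (hp : 1 < p) {t : ℝ} (ht : ε < t) :
    HasDerivAt (Kf S W) ((p - 1) * Jf S v t - 2 * (p + 1) * En p S W v t) t := by
  have h1 := H.K_der ht le_rfl
  have h2 : HasDerivAt (Kf S W) _ t := h1.congr_of_eventuallyEq (by
    filter_upwards [gt_mem_nhds (show t < t + 1 by linarith)] with b hb
    exact (H.K_eq (H.S_mono (le_of_lt hb))).symm)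
  refine h2.congr_deriv ?_
  rw [H.J_eq (H.S_mono (by linarith))]
  have e : W t 0 ^ p * W t 0 = W t 0 ^ (p + 1) := by
    rw [Real.rpow_add_one' (H.W_nn t 0) (by linarith)]
  rw [e]
  unfold En
  have : p + 1 ≠ 0 := by linarith
  field_simp; ring

lemma J_nn (H : Sys ε p S W v) (t : ℝ) : 0 ≤ Jf S v t :=
  intervalIntegral.integral_nonneg (H.S_pos t).le fun x _ => sq_nonneg _
lemma K_nn (H : Sys ε p S W v) (t : ℝ) : 0 ≤ Kf S W t :=
  intervalIntegral.integral_nonneg (H.S_pos t).le fun x _ => sq_nonneg _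

lemma E_nonneg (H : Sys ε p S W v) (hp : 1 < p) {t1 : ℝ} (h1 : ε < t1) : 0 ≤ En p S W v t1 := by
  by_contra hneg
  push Not at hneg
  set E1 := En p S W v t1 with hE1
  set c := 2 * (p + 1) * (-E1) with hc
  have hc0 : 0 < c := by have : 0 < -E1 := by linarith
                         positivity
  have K'ge : ∀ t, t1 ≤ t → c + 2 * (p + 1) * (E1 - En p S W v t)
      ≤ (p - 1) * Jf S v t - 2 * (p + 1) * En p S W v t := fun t ht => by
    have := mul_nonneg (by linarith : 0 ≤ p - 1) (H.J_nn t)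
    rw [hc]; linarith
  have K'c : ∀ t, t1 ≤ t → c ≤ (p - 1) * Jf S v t - 2 * (p + 1) * En p S W v t := fun t ht => by
    have := K'ge t ht
    have h2 := mul_nonneg (by linarith : 0 ≤ 2 * (p + 1)) (sub_nonneg.2 (H.E_anti hp h1 ht))
    linarith
  have Klin : ∀ t, t1 ≤ t → Kf S W t1 + c * (t - t1) ≤ Kf S W t := by
    have d : ∀ t, t1 ≤ t → HasDerivAt (fun t => Kf S W t - c * t)
        ((p - 1) * Jf S v t - 2 * (p + 1) * En p S W v t - c * 1) t := fun t ht =>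
      (H.K_hasDeriv hp (lt_of_lt_of_le h1 ht)).sub ((hasDerivAt_id t).const_mul c)
    have m : MonotoneOn (fun t => Kf S W t - c * t) (Ici t1) := by
      refine monotoneOn_of_deriv_nonneg (convex_Ici t1) (fun t ht => (d t ht).continuousAt.continuousWithinAt)
        (fun t ht => (d t (interior_subset ht)).differentiableAt.differentiableWithinAt) (fun t ht => ?_)
      have ht := interior_subset ht
      rw [(d t ht).deriv]
      linarith [K'c t ht]
    intro t ht
    have := m self_mem_Ici (mem_Ici.2 ht) ht
    simp only at this
    linarith
  have kc := H.K_cont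
  have K1 := H.K_nn t1
  have Kpos : ∀ t, t1 < t → 0 < Kf S W t - Kf S W t1 := fun t ht => by
    have := Klin t ht.le
    have := mul_pos hc0 (sub_pos.2 ht)
    linarith
  have Gpos : ∀ t, t1 < t → 0 < ∫ τ in t1..t, Kf S W τ := fun t ht => by
    refine intervalIntegral.intervalIntegral_pos_of_pos_on (kc.intervalIntegrable _ _) (fun τ hτ => ?_) ht
    linarith [Kpos τ hτ.1]
  set γ := (p + 1) / 2 with hγ
  have hγ1 : 1 < γ := by rw [hγ]; linarith
  set θ := √(2 / (γ + 1)) with hθ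
  have hθ2 : θ ^ 2 = 2 / (γ + 1) := Real.sq_sqrt (by positivity)
  have hθ1 : θ < 1 := by
    rw [hθ, Real.sqrt_lt' one_pos, one_pow, div_lt_one (by linarith)]; linarith
  have hθ0 : 0 ≤ θ := Real.sqrt_nonneg _
  set T := t1 + 1 + (Kf S W t1 / (1 - θ)) / c with hT
  have hθ' : 0 < 1 - θ := by linarith
  have hT1 : t1 < T := by
    have : 0 ≤ (Kf S W t1 / (1 - θ)) / c := by positivity
    linarith
  have Kθ : ∀ t, T ≤ t → θ * Kf S W t ≤ Kf S W t - Kf S W t1 := fun t ht => by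
    have h2 := Klin t (hT1.le.trans ht)
    have h3 : Kf S W t1 / (1 - θ) ≤ Kf S W t := by
      have : c * (T - t1) = c + Kf S W t1 / (1 - θ) := by rw [hT]; field_simp; ring
      have h4 : c * (T - t1) ≤ c * (t - t1) := by gcongr
      linarith
    rw [div_le_iff₀ hθ'] at h3
    linarith
  refine blowup (K := Kf S W) (K' := fun t => (p - 1) * Jf S v t - 2 * (p + 1) * En p S W v t)
    (G := fun t => ∫ τ in t1..t, Kf S W τ) (T := T) (β := (γ - 1) / (γ + 1))
    (div_pos (by linarith) (by linarith)) (fun t _ => ?_) (fun t ht => ?_) (fun t ht => ?_) ?_ (fun t ht => ?_)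
  · exact intervalIntegral.integral_hasDerivAt_right (kc.intervalIntegrable _ _)
        (kc.stronglyMeasurableAtFilter _ _) kc.continuousAt
  · exact H.K_hasDeriv hp (h1.trans (hT1.trans_le ht))
  · exact Gpos t (hT1.trans_le ht)
  · linarith [Kpos T hT1]
  · have htt := hT1.trans_le ht
    have cs := H.K_CS hp h1 htt.le (Kpos t htt) (Gpos t htt)
    have g := Gpos t htt
    have k' := K'ge t htt.le
    have e : 1 + (γ - 1) / (γ + 1) = γ * θ ^ 2 := by
      rw [hθ2]; have : γ + 1 ≠ 0 := by linarith
      field_simp; ring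
    rw [e]
    have q : (θ * Kf S W t) ^ 2 ≤ (Kf S W t - Kf S W t1) ^ 2 :=
      pow_le_pow_left₀ (mul_nonneg hθ0 (H.K_nn t)) (Kθ t ht) 2
    have step : (∫ τ in t1..t, Kf S W τ) * (2 * (p + 1) * (E1 - En p S W v t)) ≤
      (∫ τ in t1..t, Kf S W τ) * ((p - 1) * Jf S v t - 2 * (p + 1) * En p S W v t) :=
      mul_le_mul_of_nonneg_left (by linarith) g.le
    refine le_trans ?_ step
    have q2 : γ * (θ * Kf S W t) ^ 2 ≤ γ * (4 * (∫ τ in t1..t, Kf S W τ) * (E1 - En p S W v t)) :=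
      mul_le_mul_of_nonneg_left (q.trans cs) (by linarith)
    have e3 : γ * (4 * (∫ τ in t1..t, Kf S W τ) * (E1 - En p S W v t))
      = (∫ τ in t1..t, Kf S W τ) * (2 * (p + 1) * (E1 - En p S W v t)) := by rw [hγ]; ring
    rw [e3] at q2
    calc _ = γ * (θ * Kf S W t) ^ 2 := by ring
      _ ≤ _ := q2

end Sys


lemma pp2 (w : ℝ) : HasDerivAt (fun w : ℝ => max w 0 ^ 2) (2 * max w 0) w := by
  rcases lt_trichotomy w 0 with h | h | h
  · rw [max_eq_right h.le, mul_zero]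
    refine (hasDerivAt_const w (0:ℝ)).congr_of_eventuallyEq ?_
    filter_upwards [gt_mem_nhds h] with y hy
    rw [max_eq_right (le_of_lt hy)]; norm_num
  · have := hasDerivAt_mul_cont (hasDerivAt_id w) h
      (by fun_prop : ContinuousAt (fun y : ℝ => max y 0) w)
    subst h
    refine (this.congr_of_eventuallyEq (Eventually.of_forall fun y => ?_)).congr_deriv (by simp)
    rcases le_total y 0 with h | h <;> simp [h, pow_two]
  · rw [max_eq_left h.le]
    refine (hasDerivAt_pow 2 w).congr_of_eventuallyEq ?_ |>.congr_deriv (by simp)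
    filter_upwards [lt_mem_nhds h] with y hy
    rw [max_eq_left (le_of_lt hy)]

lemma pp3 (w : ℝ) : HasDerivAt (fun w : ℝ => max w 0 ^ 3) (3 * max w 0 ^ 2) w := by
  have h := (hasDerivAt_id w).mul (pp2 w)
  refine (h.congr_of_eventuallyEq (Eventually.of_forall fun y => ?_)).congr_deriv ?_
  · rcases le_total y 0 with h | h <;> simp [h, pow_succ, mul_assoc]
  · rcases le_total w 0 with h | h <;> simp [h] <;> ring

lemma pp3_comp {f : ℝ → ℝ} {f' x : ℝ} (h : HasDerivAt f f' x) :
    HasDerivAt (fun y => max (f y) 0 ^ 3) (3 * max (f x) 0 ^ 2 * f') x := (pp3 (f x)).comp x h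

lemma pp2_comp {f : ℝ → ℝ} {f' x : ℝ} (h : HasDerivAt f f' x) :
    HasDerivAt (fun y => max (f y) 0 ^ 2) (2 * max (f x) 0 * f') x := (pp2 (f x)).comp x h

def Mf (S : ℝ → ℝ) (W : ℝ → ℝ → ℝ) (t : ℝ) : ℝ := ∫ x in (0:ℝ)..(S t), W t x

namespace Sys
variable {ε p : ℝ} {S : ℝ → ℝ} {W v : ℝ → ℝ → ℝ}

lemma WR_eq (H : Sys ε p S W v) {t R : ℝ} (hR : S t ≤ R) {g : ℝ → ℝ} (hg : Continuous g) :
    ∫ x in (0:ℝ)..R, W t x * g x = ∫ x in (0:ℝ)..(S t), W t x * g x := by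
  have i : ∀ a b, IntervalIntegrable (fun x => W t x * g x) volume a b := fun a b =>
    ((H.Wt t).mul hg).intervalIntegrable _ _
  rw [← intervalIntegral.integral_add_adjacent_intervals (i 0 (S t)) (i (S t) R)]
  have h2 : ∫ x in (S t)..R, W t x * g x = ∫ x in (S t)..R, 0 := by
    refine intervalIntegral.integral_congr_ae (ae_of_all _ fun x hx => ?_)
    rw [uIoc_of_le hR] at hx
    simp [H.W_zero t x hx.1.le]
  rw [h2]; simp

lemma Q_mono (H : Sys ε p S W v) {ψ ψt ψx ψxx : ℝ → ℝ → ℝ}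
    (hc : Continuous (Function.uncurry ψ)) (hct : Continuous (Function.uncurry ψt))
    (hcx : Continuous (Function.uncurry ψx)) (hcxx : Continuous (Function.uncurry ψxx))
    (dt : ∀ t x, HasDerivAt (fun t => ψ t x) (ψt t x) t)
    (dx : ∀ t x, HasDerivAt (ψ t) (ψx t x) x) (dxx : ∀ t x, HasDerivAt (ψx t) (ψxx t x) x)
    {t1 t2 c : ℝ} (h1 : ε < t1) (h12 : t1 ≤ t2)
    (sub : ∀ t ∈ Icc t1 t2, ∀ x ∈ Icc 0 (S t), 0 ≤ ψt t x + ψxx t x)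
    (z0 : ∀ t, 0 ≤ ψ t 0) (zx : ∀ t, ψx t 0 = 0) (zS : ∀ t ∈ Icc t1 t2, ψ t (S t) ≤ c) :
    (∫ x in (0:ℝ)..(S t1), W t1 x * ψ t1 x) + c * S t1
      ≤ (∫ x in (0:ℝ)..(S t2), W t2 x * ψ t2 x) + c * S t2 := by
  have sec : ∀ {g : ℝ → ℝ → ℝ}, Continuous (Function.uncurry g) → ∀ t, Continuous (g t) :=
    fun hg t => hg.comp (by fun_prop : Continuous fun x : ℝ => (t, x))
  set R := S (t2 + 1) with hR
  have SR : ∀ t, t ≤ t2 + 1 → S t ≤ R := fun t ht => H.S_mono ht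
  rw [← H.WR_eq (SR t1 (by linarith)) (sec hc t1), ← H.WR_eq (SR t2 (by linarith)) (sec hc t2)]
  have d : ∀ t ∈ Icc t1 t2, HasDerivAt (fun t => (∫ x in (0:ℝ)..R, W t x * ψ t x) + c * S t) _ t :=
    fun t ht => (H.q_der hc hct hcx hcxx dt dx dxx (R := R) (lt_of_lt_of_le h1 ht.1)
      (SR _ (by linarith [ht.2]))).add ((H.S_der t (lt_of_lt_of_le h1 ht.1)).const_mul c)
  have m : MonotoneOn (fun t => (∫ x in (0:ℝ)..R, W t x * ψ t x) + c * S t) (Icc t1 t2) := by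
    refine monotoneOn_of_deriv_nonneg (convex_Icc t1 t2) (fun t ht => (d t ht).continuousAt.continuousWithinAt)
      (fun t ht => (d t (interior_subset ht)).differentiableAt.differentiableWithinAt) (fun t ht => ?_)
    have ht := interior_subset ht
    rw [(d t ht).deriv, zx, H.WR_eq (g := fun x => ψt t x + ψxx t x) (SR t (by linarith [ht.2])) ((sec hct t).add (sec hcxx t))]
    have a1 : 0 ≤ ∫ x in (0:ℝ)..(S t), W t x * (ψt t x + ψxx t x) :=
      intervalIntegral.integral_nonneg (H.S_pos t).le fun x hx => mul_nonneg (H.W_nn t x) (sub t ht x hx)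
    have a2 : 0 ≤ W t 0 ^ p * ψ t 0 := mul_nonneg (Real.rpow_nonneg (H.W_nn t 0) p) (z0 t)
    have a3 : v t (S t) * ψ t (S t) ≤ v t (S t) * c :=
      mul_le_mul_of_nonneg_left (zS t ht) (H.vS_nn (lt_of_lt_of_le h1 ht.1))
    linarith
  exact m (left_mem_Icc.2 h12) (right_mem_Icc.2 h12) h12

lemma M_nn (H : Sys ε p S W v) (t : ℝ) : 0 ≤ Mf S W t :=
  intervalIntegral.integral_nonneg (H.S_pos t).le fun x _ => H.W_nn t x

lemma growth (H : Sys ε p S W v) {t0 : ℝ} (h0 : ε < t0) :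
    (95 / 100) ^ 3 * Mf S W t0 ≤ S (t0 + 5 / 2 * (S t0 + Mf S W t0) ^ 2) - S t0 := by
  set M := Mf S W t0 with hM
  have M0 : 0 ≤ M := H.M_nn t0
  set L := S t0 + M with hL
  have L0 : 0 < L := by have := H.S_pos t0; linarith
  set t2 := t0 + 5 / 2 * L ^ 2 with ht2
  have h02 : t0 ≤ t2 := by have := sq_nonneg L; linarith
  by_cases hS : S t2 ≤ L
  swap
  · push Not at hS
    nlinarith
  set k := 1 / L ^ 2 with hk
  have k0 : 0 < k := by positivity
  have kx : ∀ x ∈ Icc 0 L, k * x ^ 2 ≤ 1 := fun x hx => by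
    rw [hk, one_div, inv_mul_le_iff₀ (by positivity), mul_one]
    exact pow_le_pow_left₀ hx.1 hx.2 2
  let e : ℝ → ℝ := fun t => Real.exp (2 * k * (t - t2))
  let r : ℝ → ℝ := fun x => 7 - 7 * k * x ^ 2 + k ^ 2 * x ^ 4
  let r1 : ℝ → ℝ := fun x => -14 * k * x + 4 * k ^ 2 * x ^ 3
  let r2 : ℝ → ℝ := fun x => -14 * k + 12 * k ^ 2 * x ^ 2
  have de : ∀ t, HasDerivAt e (2 * k * e t) t := fun t => by
    have := ((((hasDerivAt_id t).sub_const t2).const_mul (2 * k))).exp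
    exact this.congr_deriv (by simp [e]; ring)
  have dr : ∀ x, HasDerivAt r (r1 x) x := fun x => by
    have := (((hasDerivAt_pow 2 x).const_mul (7 * k)).const_sub 7).add ((hasDerivAt_pow 4 x).const_mul (k ^ 2))
    exact this.congr_deriv (by simp [r1]; ring)
  have dr1 : ∀ x, HasDerivAt r1 (r2 x) x := fun x => by
    have := ((hasDerivAt_id x).const_mul (-14 * k)).add ((hasDerivAt_pow 3 x).const_mul (4 * k ^ 2))
    exact this.congr_deriv (by simp [r2]; ring)
  have ec : Continuous e := by fun_prop
  have rc : Continuous r := by fun_prop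
  have rc1 : Continuous r1 := by fun_prop
  have rc2 : Continuous r2 := by fun_prop
  have e0 : ∀ t, 0 < e t := fun t => Real.exp_pos _
  have r_ge : ∀ x ∈ Icc 0 L, 1 ≤ r x := fun x hx => by
    have := kx x hx
    have h2 : r x - 1 = (1 - k * x ^ 2) * (6 - k * x ^ 2) := by simp only [r]; ring
    nlinarith [mul_nonneg (by linarith : 0 ≤ 1 - k * x ^ 2) (by linarith : 0 ≤ 6 - k * x ^ 2)]
  have r_le : ∀ x ∈ Icc 0 L, r x ≤ 7 := fun x hx => by
    have := kx x hx
    have h2 : 7 - r x = (k * x ^ 2) * (7 - k * x ^ 2) := by simp only [r]; ring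
    nlinarith [mul_nonneg (by positivity : 0 ≤ k * x ^ 2) (by linarith : 0 ≤ 7 - k * x ^ 2)]
  let m : ℝ → ℝ → ℝ := fun t x => max (1 - e t * r x) 0
  have m0 : ∀ t x, 0 ≤ m t x := fun t x => le_max_right _ _
  have key := H.Q_mono (ψ := fun t x => m t x ^ 3)
    (ψt := fun t x => 3 * m t x ^ 2 * (-(2 * k * e t * r x)))
    (ψx := fun t x => 3 * m t x ^ 2 * (-(e t * r1 x)))
    (ψxx := fun t x => 3 * (2 * m t x * (-(e t * r1 x))) * (-(e t * r1 x)) + 3 * m t x ^ 2 * (-(e t * r2 x)))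
    (by simp only [m, Function.uncurry_def]; fun_prop) (by simp only [m, Function.uncurry_def]; fun_prop)
    (by simp only [m, Function.uncurry_def]; fun_prop) (by simp only [m, Function.uncurry_def]; fun_prop)
    (fun t x => pp3_comp (f := fun t => 1 - e t * r x) (((de t).mul_const (r x)).const_sub 1))
    (fun t x => pp3_comp (f := fun x => 1 - e t * r x) (((dr x).const_mul (e t)).const_sub 1))
    (fun t x => ((pp2_comp (f := fun x => 1 - e t * r x) (((dr x).const_mul (e t)).const_sub 1)).const_mul 3).mul
      ((dr1 x).const_mul (e t)).neg)
    (c := 1) h0 h02 ?_ ?_ ?_ ?_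
  · -- conclusion
    have v2 : ∫ x in (0:ℝ)..(S t2), W t2 x * m t2 x ^ 3 = 0 := by
      rw [intervalIntegral.integral_congr (g := fun _ => (0:ℝ))]
      · simp
      · intro x hx
        rw [uIcc_of_le (H.S_pos t2).le] at hx
        have := r_ge x ⟨hx.1, hx.2.trans hS⟩
        have : m t2 x = 0 := max_eq_right (by simp [e]; linarith)
        simp [this]
    have e5 : e t0 * 7 ≤ 5 / 100 := by
      have : e t0 = Real.exp (-5) := by
        simp only [e, ht2, hk]; congr 1; field_simp; ring
      rw [this, Real.exp_neg, inv_mul_le_iff₀ (Real.exp_pos _)]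
      have h1 : Real.exp 5 = Real.exp 1 ^ 5 := by rw [← Real.exp_nat_mul]; norm_num
      have h2 : (2.7:ℝ) ^ 5 ≤ Real.exp 1 ^ 5 := pow_le_pow_left₀ (by norm_num)
        (by linarith [Real.exp_one_gt_d9]) 5
      rw [h1]; norm_num at h2 ⊢; linarith
    have v1 : (95 / 100) ^ 3 * M ≤ ∫ x in (0:ℝ)..(S t0), W t0 x * m t0 x ^ 3 := by
      rw [hM]; unfold Mf
      rw [← intervalIntegral.integral_const_mul]
      have mc : Continuous (fun x => m t0 x) := by simp only [m]; fun_prop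
      refine intervalIntegral.integral_mono_on (H.S_pos t0).le
        ((continuous_const.mul (H.Wt t0)).intervalIntegrable _ _)
        (((H.Wt t0).mul (mc.pow 3)).intervalIntegrable _ _) fun x hx => ?_
      have hx' : x ∈ Icc 0 L := ⟨hx.1, hx.2.trans (by linarith)⟩
      have h1 : e t0 * r x ≤ e t0 * 7 := mul_le_mul_of_nonneg_left (r_le x hx') (e0 _).le
      have h2 : 95 / 100 ≤ m t0 x := le_max_of_le_left (by linarith)
      have h3 : (95 / 100 : ℝ) ^ 3 ≤ m t0 x ^ 3 := pow_le_pow_left₀ (by norm_num) h2 3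
      rw [mul_comm]
      exact mul_le_mul_of_nonneg_left h3 (H.W_nn _ _)
    rw [v2] at key
    linarith
  · intro t ht x hx
    have hx' : x ∈ Icc 0 L := ⟨hx.1, hx.2.trans ((H.S_mono ht.2).trans hS)⟩
    have q : 2 * k * r x + r2 x ≤ 0 := by
      have : 2 * k * r x + r2 x = -(2 * k ^ 2 * x ^ 2 * (1 - k * x ^ 2)) := by simp only [r, r2]; ring
      rw [this]
      have h2 : 0 ≤ 1 - k * x ^ 2 := by linarith [kx x hx']
      have : 0 ≤ 2 * k ^ 2 * x ^ 2 * (1 - k * x ^ 2) := by positivity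
      linarith
    have id : 3 * m t x ^ 2 * (-(2 * k * e t * r x)) + (3 * (2 * m t x * (-(e t * r1 x))) * (-(e t * r1 x)) + 3 * m t x ^ 2 * (-(e t * r2 x)))
      = 6 * m t x * (e t * r1 x) ^ 2 + 3 * m t x ^ 2 * e t * (-(2 * k * r x + r2 x)) := by ring
    show 0 ≤ 3 * m t x ^ 2 * (-(2 * k * e t * r x)) + (3 * (2 * m t x * (-(e t * r1 x))) * (-(e t * r1 x)) + 3 * m t x ^ 2 * (-(e t * r2 x)))
    rw [id]
    have := m0 t x
    have := e0 t
    have : 0 ≤ -(2 * k * r x + r2 x) := by linarith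
    positivity
  · intro t; exact pow_nonneg (m0 t 0) 3
  · intro t; simp [r1]
  · intro t ht
    have hx' : S t ∈ Icc 0 L := ⟨(H.S_pos t).le, (H.S_mono ht.2).trans hS⟩
    have : m t (S t) ≤ 1 := max_le (by nlinarith [e0 t, r_ge _ hx']) zero_le_one
    exact pow_le_one₀ (m0 _ _) this

lemma E_bound (H : Sys ε p S W v) (hp : 1 < p) {t : ℝ} (ht : ε < t) :
    π ^ 2 / 256 * Mf S W t ^ 3 / (S t + Mf S W t) ^ 4 ≤ En p S W v t := by
  have M0 := H.M_nn t
  have S0 := H.S_pos t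
  have g := H.growth ht
  set M := Mf S W t
  set L := S t + M with hL
  have L0 : 0 < L := by linarith
  set t2 := t + 5 / 2 * L ^ 2 with ht2
  have htt : t < t2 := by have : 0 < L ^ 2 := by positivity
                          linarith
  have c := H.E_cube hp ht htt
  have n := H.E_nonneg hp (ht.trans htt)
  have c2 : (S t2 - S t) ^ 3 / (2 * (t2 - t) ^ 2) ≤ En p S W v t := by linarith
  refine le_trans ?_ c2
  have e : t2 - t = 5 / 2 * L ^ 2 := by rw [ht2]; ring
  rw [e]
  have g3 : ((95 / 100) ^ 3 * M) ^ 3 ≤ (S t2 - S t) ^ 3 := pow_le_pow_left₀ (by positivity) g 3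
  have d : 2 * (5 / 2 * L ^ 2) ^ 2 = 25 / 2 * L ^ 4 := by ring
  rw [d, div_le_div_iff₀ (by positivity) (by positivity)]
  have hpi : π ^ 2 ≤ 10 := by nlinarith [Real.pi_lt_d2, Real.pi_pos]
  have M3 : 0 ≤ M ^ 3 := by positivity
  have : π ^ 2 / 256 * M ^ 3 * (25 / 2) ≤ (S t2 - S t) ^ 3 := by
    refine le_trans ?_ g3
    have : π ^ 2 / 256 * M ^ 3 * (25 / 2) ≤ 10 / 256 * M ^ 3 * (25 / 2) := by gcongr
    refine this.trans ?_
    rw [mul_pow]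
    nlinarith
  calc _ = π ^ 2 / 256 * M ^ 3 * (25 / 2) * L ^ 4 := by ring
    _ ≤ _ := by gcongr

lemma M_pos (H : Sys ε p S W v) {t x0 : ℝ} (ht : ε < t) (hx0 : x0 ∈ Ioo 0 (S ε)) (hW : 0 < W ε x0) :
    0 < Mf S W t := by
  set a := S ε with ha
  have a0 : 0 < a := H.S_pos ε
  set k := 1 / a ^ 2 with hk
  have k0 : 0 < k := by positivity
  have kx : ∀ x, a ≤ x → 1 - k * x ^ 2 ≤ 0 := fun x hx => by
    rw [hk, one_div, sub_nonpos, le_inv_mul_iff₀ (by positivity), mul_one]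
    exact pow_le_pow_left₀ a0.le hx 2
  let e : ℝ → ℝ := fun t => Real.exp (10 * k * t)
  have de : ∀ t, HasDerivAt e (10 * k * e t) t := fun t => by
    have := ((hasDerivAt_id t).const_mul (10 * k)).exp
    exact this.congr_deriv (by simp [e]; ring)
  have ec : Continuous e := by fun_prop
  have e0 : ∀ t, 0 < e t := fun t => Real.exp_pos _
  let m : ℝ → ℝ := fun x => max (1 - k * x ^ 2) 0
  have m0 : ∀ x, 0 ≤ m x := fun x => le_max_right _ _
  have mc : Continuous m := by fun_prop
  have dw : ∀ x : ℝ, HasDerivAt (fun x : ℝ => 1 - k * x ^ 2) (-(2 * k * x)) x := fun x => by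
    have := ((hasDerivAt_pow 2 x).const_mul k).const_sub 1
    exact this.congr_deriv (by simp; ring)
  have key : ∀ t1, ε < t1 → t1 ≤ t → (∫ x in (0:ℝ)..(S t1), W t1 x * (e t1 * m x ^ 3)) + 0 * S t1
      ≤ (∫ x in (0:ℝ)..(S t), W t x * (e t * m x ^ 3)) + 0 * S t := by
    intro t1 h1 h12
    refine H.Q_mono (ψ := fun t x => e t * m x ^ 3)
      (ψt := fun t x => 10 * k * e t * m x ^ 3)
      (ψx := fun t x => e t * (3 * m x ^ 2 * (-(2 * k * x))))
      (ψxx := fun t x => e t * ((3 * (2 * m x * (-(2 * k * x)))) * (-(2 * k * x)) + 3 * m x ^ 2 * (-(2 * k * 1))))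
      (by simp only [Function.uncurry_def]; fun_prop) (by simp only [Function.uncurry_def]; fun_prop)
      (by simp only [Function.uncurry_def]; fun_prop) (by simp only [Function.uncurry_def]; fun_prop)
      (fun t x => (de t).mul_const _)
      (fun t x => (pp3_comp (f := fun x => 1 - k * x ^ 2) (dw x)).const_mul (e t))
      (fun t x => (((pp2_comp (f := fun x => 1 - k * x ^ 2) (dw x)).const_mul 3).mul
        ((hasDerivAt_id x).const_mul (2 * k)).neg).const_mul (e t)) h1 h12 ?_ ?_ ?_ ?_
    · intro t _ x hx
      have id : 10 * k * e t * m x ^ 3 + e t * ((3 * (2 * m x * (-(2 * k * x)))) * (-(2 * k * x)) + 3 * m x ^ 2 * (-(2 * k * 1)))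
        = e t * k * (m x * (10 * m x ^ 2 + 24 * (k * x ^ 2) - 6 * m x)) := by ring
      show 0 ≤ 10 * k * e t * m x ^ 3 + e t * ((3 * (2 * m x * (-(2 * k * x)))) * (-(2 * k * x)) + 3 * m x ^ 2 * (-(2 * k * 1)))
      rw [id]
      refine mul_nonneg (mul_nonneg (e0 t).le k0.le) ?_
      rcases le_total (1 - k * x ^ 2) 0 with h | h
      · have : m x = 0 := max_eq_right h
        simp [this]
      · have : m x = 1 - k * x ^ 2 := max_eq_left h
        rw [this]
        refine mul_nonneg h ?_
        nlinarith [sq_nonneg ((1 - k * x ^ 2) - 3 / 2)]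
    · intro t; exact mul_nonneg (e0 t).le (pow_nonneg (m0 0) 3)
    · intro t; simp
    · intro τ hτ
      have : m (S τ) = 0 := max_eq_right (kx _ (H.S_mono (h1.le.trans hτ.1)))
      simp [this]
  have Qc : Continuous fun t => ∫ x in (0:ℝ)..(S t), W t x * (e t * m x ^ 3) := by
    refine intervalIntegral.continuous_parametric_intervalIntegral_of_continuous ?_ H.S_cont
    refine Continuous.mul H.W_cont ?_
    fun_prop
  have lim : (∫ x in (0:ℝ)..(S ε), W ε x * (e ε * m x ^ 3)) ≤ ∫ x in (0:ℝ)..(S t), W t x * (e t * m x ^ 3) := by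
    refine le_of_tendsto ((Qc.tendsto ε).mono_left (nhdsWithin_le_nhds (s := Ioi ε))) ?_
    filter_upwards [Ioo_mem_nhdsGT ht] with t1 h1
    have := key t1 h1.1 h1.2.le
    simpa using this
  have pos : 0 < ∫ x in (0:ℝ)..(S ε), W ε x * (e ε * m x ^ 3) := by
    refine intervalIntegral.integral_pos a0 ((H.Wt ε).mul (continuous_const.mul (mc.pow 3))).continuousOn
      (fun x _ => mul_nonneg (H.W_nn _ _) (mul_nonneg (e0 _).le (pow_nonneg (m0 x) 3)))
      ⟨x0, ⟨hx0.1.le, hx0.2.le⟩, ?_⟩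
    have : 0 < m x0 := by
      refine lt_max_of_lt_left ?_
      rw [hk, one_div, sub_pos, inv_mul_lt_iff₀ (by positivity), mul_one]
      exact pow_lt_pow_left₀ hx0.2 hx0.1.le (by norm_num)
    have := e0 ε
    positivity
  have le : ∫ x in (0:ℝ)..(S t), W t x * (e t * m x ^ 3) ≤ ∫ x in (0:ℝ)..(S t), e t * W t x := by
    refine intervalIntegral.integral_mono_on (H.S_pos t).le
      (((H.Wt t).mul (continuous_const.mul (mc.pow 3))).intervalIntegrable _ _)
      ((continuous_const.mul (H.Wt t)).intervalIntegrable _ _) fun x _ => ?_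
    have m1 : m x ≤ 1 := max_le (by nlinarith [mul_nonneg k0.le (sq_nonneg x)]) zero_le_one
    have m3 : m x ^ 3 ≤ 1 := pow_le_one₀ (m0 x) m1
    nlinarith [mul_nonneg (e0 t).le (H.W_nn t x)]
  rw [intervalIntegral.integral_const_mul] at le
  have : 0 < e t * Mf S W t := by unfold Mf; linarith
  exact (mul_pos_iff_of_pos_left (e0 t)).1 this

end Sys


lemma swap_cont {G : ℝ → ℝ → ℝ} (hG : Continuous (Function.uncurry G)) {a b c d : ℝ} (h1 : a ≤ b) (h2 : c ≤ d) :
    ∫ x in a..b, ∫ y in c..d, G x y = ∫ y in c..d, ∫ x in a..b, G x y := by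
  simp only [intervalIntegral.integral_of_le h1, intervalIntegral.integral_of_le h2]
  refine integral_integral_swap ?_
  rw [Measure.prod_restrict]
  have : IntegrableOn (Function.uncurry G) (Icc a b ×ˢ Icc c d) (volume.prod volume) :=
    hG.continuousOn.integrableOn_compact (isCompact_Icc.prod isCompact_Icc)
  exact this.mono_set (prod_mono Ioc_subset_Icc_self Ioc_subset_Icc_self)

lemma glob {f : ℝ × ℝ → ℝ} {A : ℝ → Set ℝ}
    (h : ∀ T : ℝ, 0 < T → ContinuousOn f {q : ℝ × ℝ | q.1 ∈ Ioc 0 T ∧ q.2 ∈ A q.1}) :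
    ContinuousOn f {q : ℝ × ℝ | 0 < q.1 ∧ q.2 ∈ A q.1} := by
  intro q hq
  have h1 := h (q.1 + 1) (by linarith [hq.1]) q ⟨⟨hq.1, by linarith⟩, hq.2⟩
  refine h1.mono_of_mem_nhdsWithin ?_
  have : {r : ℝ × ℝ | r.1 < q.1 + 1} ∈ 𝓝 q :=
    (isOpen_lt continuous_fst continuous_const).mem_nhds (by simp)
  filter_upwards [mem_nhdsWithin_of_mem_nhds this, self_mem_nhdsWithin] with r h1 h2
  exact ⟨⟨h2.1, le_of_lt h1⟩, h2.2⟩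

def clip (a x : ℝ) : ℝ := max 0 (min x a)

lemma clip_mem {a : ℝ} (h : 0 ≤ a) (x : ℝ) : clip a x ∈ Icc 0 a :=
  ⟨le_max_left _ _, max_le h (min_le_right _ _)⟩

lemma clip_eq {a x : ℝ} (h : x ∈ Icc 0 a) : clip a x = x := by
  unfold clip; rw [min_eq_left h.2, max_eq_right h.1]

lemma clip_ge {a x : ℝ} (ha : 0 ≤ a) (h : a ≤ x) : clip a x = a := by
  unfold clip; rw [min_eq_right h, max_eq_right ha]

section
variable {p s₀ : ℝ} {φ : ℝ → ℝ} {s : ℝ → ℝ} {u : ℝ → ℝ → ℝ}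

lemma ux_nonpos (hs : IsGlobalSol p s₀ φ s u) {t : ℝ} (ht : 0 < t) : deriv (u t) (s t) ≤ 0 := by
  have H := hs t ht
  have tm : t ∈ Ioc 0 t := ⟨ht, le_rfl⟩
  have tm' : t ∈ Icc 0 t := ⟨ht.le, le_rfl⟩
  have sp := H.s_pos t tm'
  by_contra hc
  push Not at hc
  have c1 : ContinuousOn (fun x => deriv (u t) x) (Icc 0 (s t)) :=
    H.ux_cont.comp (f := fun x : ℝ => (t, x)) (by fun_prop) (fun x hx => ⟨tm, hx⟩)
  have c2 : ContinuousOn (u t) (Icc 0 (s t)) :=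
    H.u_cont.comp (f := fun x : ℝ => (t, x)) (by fun_prop) (fun x hx => ⟨tm', hx⟩)
  have ev := (c1 (s t) (right_mem_Icc.2 sp.le)).eventually (lt_mem_nhds hc)
  rw [eventually_nhdsWithin_iff, Metric.eventually_nhds_iff] at ev
  obtain ⟨δ, δ0, hδ⟩ := ev
  set y := max 0 (s t - δ / 2) with hy
  have y1 : 0 ≤ y := le_max_left _ _
  have y2 : y < s t := max_lt sp (by linarith)
  have y3 : s t - δ / 2 ≤ y := le_max_right _ _
  have m : StrictMonoOn (u t) (Icc y (s t)) := by
    refine strictMonoOn_of_deriv_pos (convex_Icc _ _) (c2.mono (Icc_subset_Icc_left y1)) fun x hx => ?_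
    rw [interior_Icc] at hx
    refine hδ ?_ ⟨y1.trans hx.1.le, hx.2.le⟩
    rw [Real.dist_eq, abs_lt]; constructor <;> linarith [hx.1, hx.2]
  have := m (left_mem_Icc.2 y2.le) (right_mem_Icc.2 y2.le) y2
  rw [H.bc_free t tm] at this
  linarith [H.u_nonneg t tm' y ⟨y1, y2.le⟩]

lemma s_cont' (hs : IsGlobalSol p s₀ φ s u) {t : ℝ} (ht : 0 < t) : HasDerivAt s (-deriv (u t) (s t)) t := by
  have H := hs t ht
  rw [← H.stefan t ⟨ht, le_rfl⟩]
  exact (H.s_diff t ⟨ht, le_rfl⟩).hasDerivAt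

lemma s_mono' (hs : IsGlobalSol p s₀ φ s u) : MonotoneOn s (Ioi 0) := by
  refine monotoneOn_of_deriv_nonneg (convex_Ioi 0) (fun t ht => (s_cont' hs ht).continuousAt.continuousWithinAt)
    (fun t ht => (s_cont' hs (interior_subset ht)).differentiableAt.differentiableWithinAt) fun t ht => ?_
  have := interior_subset ht
  rw [(s_cont' hs this).deriv]
  linarith [ux_nonpos hs this]

lemma bal_in (hs : IsGlobalSol p s₀ φ s u) {a b x1 x2 : ℝ} (ha : 0 < a) (hab : a ≤ b) (h1 : 0 < x1)
    (h12 : x1 ≤ x2) (h2 : x2 < s a) :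
    ∫ y in x1..x2, (u b y - u a y) = ∫ τ in a..b, (deriv (u τ) x2 - deriv (u τ) x1) := by
  have hb : 0 < b := ha.trans_le hab
  let cl : ℝ → ℝ → ℝ → ℝ := fun l r x => max l (min x r)
  have clm : ∀ l r x, l ≤ r → cl l r x ∈ Icc l r := fun l r x h => ⟨le_max_left _ _, max_le h (min_le_right _ _)⟩
  have cle : ∀ l r x, x ∈ Icc l r → cl l r x = x := fun l r x h => by
    simp only [cl]; rw [min_eq_left h.2, max_eq_right h.1]
  have inn : ∀ τ ∈ Icc a b, ∀ y ∈ Icc x1 x2, 0 < τ ∧ y ∈ Ioo 0 (s τ) := fun τ hτ y hy =>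
    ⟨ha.trans_le hτ.1, h1.trans_le hy.1,
      (hy.2.trans_lt h2).trans_le (s_mono' hs ha (ha.trans_le hτ.1) hτ.1)⟩
  let G : ℝ → ℝ → ℝ := fun y τ => deriv (deriv (u (cl a b τ))) (cl x1 x2 y)
  have hG : Continuous (Function.uncurry G) := by
    have := glob (A := fun t => Ioo 0 (s t)) fun T hT => (hs T hT).uxx_cont
    exact this.comp_continuous (f := fun q : ℝ × ℝ => (cl a b q.2, cl x1 x2 q.1))
      (by simp only [cl]; fun_prop) fun q => inn _ (clm _ _ _ hab) _ (clm _ _ _ h12)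
  have e1 : ∀ y ∈ Icc x1 x2, ∫ τ in a..b, G y τ = u b y - u a y := fun y hy => by
    refine intervalIntegral.integral_eq_sub_of_hasDerivAt (f := fun τ => u τ y) (fun τ hτ => ?_)
      ((hG.comp (by fun_prop : Continuous fun τ : ℝ => (y, τ))).intervalIntegrable _ _)
    rw [uIcc_of_le hab] at hτ
    obtain ⟨t0, hy'⟩ := inn τ hτ y hy
    have H := hs τ t0
    simp only [G, cle _ _ _ hτ, cle _ _ _ hy]
    rw [← H.heat τ ⟨t0, le_rfl⟩ y hy']
    exact (H.ut_diff τ ⟨t0, le_rfl⟩ y hy').hasDerivAt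
  have e2 : ∀ τ ∈ Icc a b, ∫ y in x1..x2, G y τ = deriv (u τ) x2 - deriv (u τ) x1 := fun τ hτ => by
    refine intervalIntegral.integral_eq_sub_of_hasDerivAt (f := fun y => deriv (u τ) y) (fun y hy => ?_)
      ((hG.comp (by fun_prop : Continuous fun y : ℝ => (y, τ))).intervalIntegrable _ _)
    rw [uIcc_of_le h12] at hy
    obtain ⟨t0, hy'⟩ := inn τ hτ y hy
    have H := hs τ t0
    simp only [G, cle _ _ _ hτ, cle _ _ _ hy]
    exact (H.uxx_diff τ ⟨t0, le_rfl⟩ y hy').hasDerivAt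
  rw [← intervalIntegral.integral_congr (f := fun y => ∫ τ in a..b, G y τ), swap_cont hG h12 hab]
  · refine intervalIntegral.integral_congr fun τ hτ => ?_
    rw [uIcc_of_le hab] at hτ
    exact e2 τ hτ
  · intro y hy
    rw [uIcc_of_le h12] at hy
    exact e1 y hy

lemma mkSys (hs : IsGlobalSol p s₀ φ s u) {ε : ℝ} (hε : 0 < ε) :
    Sys ε p (fun t => s (max t ε)) (fun t x => u (max t ε) (clip (s (max t ε)) x))
      (fun t x => -deriv (u (max t ε)) (clip (s (max t ε)) x)) := by
  have c0 : ∀ t, 0 < max t ε := fun t => lt_max_of_lt_right hε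
  have sp : ∀ t, 0 < t → 0 < s t := fun t ht => (hs t ht).s_pos t ⟨ht.le, le_rfl⟩
  have Sc : Continuous fun t => s (max t ε) := by
    rw [continuous_iff_continuousAt]
    intro t
    exact ContinuousAt.comp (f := fun t => max t ε) (s_cont' hs (c0 t)).continuousAt (by fun_prop)
  have mc : Continuous fun q : ℝ × ℝ => (max q.1 ε, clip (s (max q.1 ε)) q.2) := by
    have : Continuous fun q : ℝ × ℝ => s (max q.1 ε) := Sc.comp continuous_fst
    unfold clip
    exact (continuous_fst.max continuous_const).prodMk (continuous_const.max (continuous_snd.min this))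
  have mm : ∀ q : ℝ × ℝ, (max q.1 ε, clip (s (max q.1 ε)) q.2) ∈ {q : ℝ × ℝ | 0 < q.1 ∧ q.2 ∈ Icc 0 (s q.1)} :=
    fun q => ⟨c0 _, clip_mem (sp _ (c0 _)).le _⟩
  have Wc : Continuous (Function.uncurry fun t x => u (max t ε) (clip (s (max t ε)) x)) :=
    (glob (A := fun t => Icc 0 (s t)) fun T hT => (hs T hT).u_cont.mono
      fun q hq => ⟨⟨hq.1.1.le, hq.1.2⟩, hq.2⟩).comp_continuous mc mm
  have vc : Continuous (Function.uncurry fun t x => -deriv (u (max t ε)) (clip (s (max t ε)) x)) :=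
    ((glob (A := fun t => Icc 0 (s t)) fun T hT => (hs T hT).ux_cont).comp_continuous mc mm).neg
  have l0 : ∀ t, (0:ℝ) ∈ Icc 0 (s (max t ε)) := fun t => left_mem_Icc.2 (sp _ (c0 t)).le
  refine ⟨Sc, fun t => sp _ (c0 t), fun t1 t2 h => s_mono' hs (c0 _) (c0 _) (max_le_max_right _ h), ?_, Wc, vc,
    ?_, ?_, ?_, ?_, ?_⟩
  · intro t ht
    have e : max t ε = t := max_eq_left ht.le
    simp only [e, clip_ge (sp t (hε.trans ht)).le le_rfl]
    refine (s_cont' hs (hε.trans ht)).congr_of_eventuallyEq ?_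
    filter_upwards [lt_mem_nhds ht] with τ hτ
    rw [max_eq_left (le_of_lt hτ)]
  · intro t x
    exact (hs _ (c0 t)).u_nonneg _ ⟨(c0 t).le, le_rfl⟩ _ (clip_mem (sp _ (c0 t)).le _)
  · intro t x hx
    rw [clip_ge (sp _ (c0 t)).le hx]
    exact (hs _ (c0 t)).bc_free _ ⟨c0 t, le_rfl⟩
  · intro t x hx
    simp only [clip_eq (Ioo_subset_Icc_self hx), neg_neg]
    refine ((hs _ (c0 t)).ux_diff _ ⟨c0 t, le_rfl⟩ x hx).hasDerivAt.congr_of_eventuallyEq ?_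
    filter_upwards [isOpen_Ioo.mem_nhds hx] with y hy
    rw [clip_eq (Ioo_subset_Icc_self hy)]
  · intro t
    simp only [clip_eq (l0 t)]
    exact (hs _ (c0 t)).bc_zero _ ⟨c0 t, le_rfl⟩
  · intro a b ha hab x hx
    set W : ℝ → ℝ → ℝ := fun t x => u (max t ε) (clip (s (max t ε)) x) with hWd
    set v : ℝ → ℝ → ℝ := fun t x => -deriv (u (max t ε)) (clip (s (max t ε)) x) with hvd
    have a0 : 0 < a := hε.trans ha
    simp only [max_eq_left ha.le] at hx
    have Wt : ∀ t, Continuous (W t) := fun t => Wc.comp (by fun_prop : Continuous fun x : ℝ => (t, x))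
    have vx : ∀ x, Continuous fun τ => v τ x := fun x => vc.comp (by fun_prop : Continuous fun τ : ℝ => (τ, x))
    have Wi : ∀ x y, IntervalIntegrable (fun y => W b y - W a y) volume x y := fun x y =>
      ((Wt b).sub (Wt a)).intervalIntegrable _ _
    have vi : ∀ x, IntervalIntegrable (fun τ => v τ x) volume a b := fun x => (vx x).intervalIntegrable _ _
    let P : ℝ → ℝ := fun y => (∫ z in (0:ℝ)..y, (W b z - W a z)) + ∫ τ in a..b, v τ y
    have Pc : Continuous P := by
      refine (intervalIntegral.continuous_primitive Wi 0).add ?_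
      refine intervalIntegral.continuous_parametric_intervalIntegral_of_continuous' (f := fun y τ => v τ y) ?_ a b
      exact vc.comp (by fun_prop : Continuous fun q : ℝ × ℝ => (q.2, q.1))
    have P12 : ∀ x1 x2, 0 < x1 → x1 ≤ x2 → x2 < s a → P x1 = P x2 := by
      intro x1 x2 h1 h12 h2
      have k := bal_in hs a0 hab h1 h12 h2
      have m : ∀ τ ∈ Icc a b, ∀ y ∈ Icc x1 x2, max τ ε = τ ∧ clip (s τ) y = y := fun τ hτ y hy =>
        ⟨max_eq_left (ha.le.trans hτ.1), clip_eq ⟨h1.le.trans hy.1,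
          (hy.2.trans h2.le).trans (s_mono' hs a0 (a0.trans_le hτ.1) hτ.1)⟩⟩
      have k1 : ∫ y in x1..x2, (W b y - W a y) = ∫ y in x1..x2, (u b y - u a y) := by
        refine intervalIntegral.integral_congr fun y hy => ?_
        rw [uIcc_of_le h12] at hy
        obtain ⟨p1, p2⟩ := m a (left_mem_Icc.2 hab) y hy
        obtain ⟨p3, p4⟩ := m b (right_mem_Icc.2 hab) y hy
        simp only [hWd, p1, p2, p3, p4]
      have k2 : ∫ τ in a..b, (v τ x1 - v τ x2) = ∫ τ in a..b, (deriv (u τ) x2 - deriv (u τ) x1) := by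
        refine intervalIntegral.integral_congr fun τ hτ => ?_
        rw [uIcc_of_le hab] at hτ
        obtain ⟨p1, p2⟩ := m τ hτ x1 (left_mem_Icc.2 h12)
        obtain ⟨p3, p4⟩ := m τ hτ x2 (right_mem_Icc.2 h12)
        simp only [hvd, p1, p2, p4]; ring
      rw [intervalIntegral.integral_sub (vi _) (vi _)] at k2
      have := intervalIntegral.integral_add_adjacent_intervals (Wi 0 x1) (Wi x1 x2)
      simp only [P]
      linarith
    have sa := sp a a0
    have eq : EqOn P (fun _ => P (s a / 2)) (Ioo 0 (s a)) := by
      intro y hy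
      rcases le_total y (s a / 2) with h | h
      · exact P12 _ _ hy.1 h (by linarith)
      · exact (P12 _ _ (by linarith) h hy.2).symm
    have eq2 := eq.closure Pc continuous_const
    rw [closure_Ioo sa.ne] at eq2
    have q1 := eq2 hx
    have q2 := eq2 (left_mem_Icc.2 sa.le)
    rw [intervalIntegral.integral_sub (vi _) (vi _)]
    simp only [P, intervalIntegral.integral_same] at q1 q2
    linarith

end

theorem stmt_0 (p : ℝ) (hp : 1 < p) (s₀ : ℝ) (φ : ℝ → ℝ) (hW : memW s₀ φ)
    (s : ℝ → ℝ) (u : ℝ → ℝ → ℝ) (hsol : IsGlobalSol p s₀ φ s u) :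
    ∀ t : ℝ, 0 < t →
      π ^ 2 / 256 * (L1Norm s u t) ^ 3 / (s t + L1Norm s u t) ^ 4 ≤ energy p s u t ∧
      0 < π ^ 2 / 256 * (L1Norm s u t) ^ 3 / (s t + L1Norm s u t) ^ 4 := by
  intro t ht
  obtain ⟨hs0, ⟨K, hK⟩, ⟨y, hy, hφy⟩, hnn, hz⟩ := hW
  have H := hsol t ht
  have hφy' : 0 < φ y := lt_of_le_of_ne (hnn y hy) (Ne.symm hφy)
  obtain ⟨x0, hx0, hφ0⟩ : ∃ x0 ∈ Ioo 0 s₀, 0 < φ x0 := by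
    by_contra hc
    push Not at hc
    have : closure (Ioo 0 s₀) ⊆ closure (Ioo 0 s₀) := le_rfl
    have ymem : y ∈ closure (Ioo 0 s₀) := by rw [closure_Ioo hs0.ne]; exact hy
    have c : ContinuousWithinAt φ (Ioo 0 s₀) y := (hK.continuousOn y hy).mono Ioo_subset_Icc_self
    have : (𝓝[Ioo 0 s₀] y).NeBot := mem_closure_iff_nhdsWithin_neBot.1 ymem
    have := le_of_tendsto c (by filter_upwards [self_mem_nhdsWithin] with z hz using hc z hz)
    linarith
  obtain ⟨ε, hε, hεt, hxs, hu⟩ : ∃ ε, 0 < ε ∧ ε < t ∧ x0 < s ε ∧ 0 < u ε x0 := by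
    have sc : ContinuousWithinAt s (Ioi 0) 0 := by
      refine (H.s_cont 0 (left_mem_Icc.2 ht.le)).mono_of_mem_nhdsWithin ?_
      filter_upwards [Ioo_mem_nhdsGT ht] with a b using ⟨b.1.le, b.2.le⟩
    have ev1 : ∀ᶠ e in 𝓝[>] (0:ℝ), x0 < s e := sc.eventually (lt_mem_nhds (by rw [H.init_s]; exact hx0.2))
    have m0 : ((0:ℝ), x0) ∈ {q : ℝ × ℝ | q.1 ∈ Icc 0 t ∧ q.2 ∈ Icc 0 (s q.1)} :=
      ⟨left_mem_Icc.2 ht.le, hx0.1.le, by simpa [H.init_s] using hx0.2.le⟩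
    have tt : Tendsto (fun e : ℝ => (e, x0)) (𝓝[>] 0)
        (𝓝[{q : ℝ × ℝ | q.1 ∈ Icc 0 t ∧ q.2 ∈ Icc 0 (s q.1)}] ((0:ℝ), x0)) := by
      refine tendsto_nhdsWithin_iff.2 ⟨?_, ?_⟩
      · exact ((by fun_prop : Continuous fun e : ℝ => (e, x0)).tendsto 0).mono_left nhdsWithin_le_nhds
      · filter_upwards [Ioo_mem_nhdsGT ht, ev1] with e h1 h2
        exact ⟨⟨h1.1.le, h1.2.le⟩, hx0.1.le, h2.le⟩
    have uc := (H.u_cont _ m0).tendsto.comp tt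
    have ev2 : ∀ᶠ e in 𝓝[>] (0:ℝ), 0 < u e x0 :=
      uc.eventually (lt_mem_nhds (by simpa [H.init x0 (Ioo_subset_Icc_self hx0)] using hφ0))
    have ev0 : ∀ᶠ e in 𝓝[>] (0:ℝ), e ∈ Ioo 0 t := Ioo_mem_nhdsGT ht
    obtain ⟨e, h1, h2, h3⟩ := (ev0.and (ev1.and ev2)).exists
    exact ⟨e, h1.1, h1.2, h2, h3⟩
  have Y := mkSys hsol hε
  have mt : max t ε = t := max_eq_left hεt.le
  have sp : 0 < s t := H.s_pos t ⟨ht.le, le_rfl⟩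
  have b := Y.E_bound hp hεt
  have m := Y.M_pos (x0 := x0) hεt (by simpa using ⟨hx0.1, hxs⟩)
    (by simpa [clip_eq (⟨hx0.1.le, hxs.le⟩ : x0 ∈ Icc 0 (s ε))] using hu)
  have eM : Mf (fun t => s (max t ε)) (fun t x => u (max t ε) (clip (s (max t ε)) x)) t = L1Norm s u t := by
    unfold Mf L1Norm
    simp only [mt]
    refine intervalIntegral.integral_congr fun x hx => ?_
    rw [uIcc_of_le sp.le] at hx
    simp only [clip_eq hx]
  have eE : En p (fun t => s (max t ε)) (fun t x => u (max t ε) (clip (s (max t ε)) x))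
      (fun t x => -deriv (u (max t ε)) (clip (s (max t ε)) x)) t = energy p s u t := by
    unfold En Jf energy
    simp only [mt, clip_eq (left_mem_Icc.2 sp.le)]
    congr 2
    refine intervalIntegral.integral_congr fun x hx => ?_
    rw [uIcc_of_le sp.le] at hx
    simp only [clip_eq hx, neg_sq]
  rw [eM] at m b
  rw [eE] at b
  simp only [mt] at b
  refine ⟨b, ?_⟩
  have := Real.pi_pos
  positivity
end
end

section
/- Let (s₀,φ) ∈ W with φ ∈ C¹(0,s₀) and ∂_x φ ≤ 0 on (0,s₀). For λ > 0 let (s_λ,u_λ) be the solution of problem (P) with initial data (s₀,λφ). Then for every λ > 0 for which (s_λ,u_λ) is a global-in-time solution with lim_{t→∞} s_λ(t) = ∞, one has liminf_{t→∞} t^{−(p−1)/(2p−1)} s_λ(t) > 0. -/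
open Set MeasureTheory Filter Topology Real
open scoped ENNReal

noncomputable section

structure SS (p : ℝ) (s : ℝ → ℝ) (u : ℝ → ℝ → ℝ) : Prop where
  sc : Continuous s
  sp : ∀ t, 0 ≤ t → 0 < s t
  uc : ContinuousOn (fun q : ℝ × ℝ => u q.1 q.2) {q | 0 ≤ q.1 ∧ 0 ≤ q.2 ∧ q.2 ≤ s q.1}
  un : ∀ t x, 0 ≤ t → 0 ≤ x → x ≤ s t → 0 ≤ u t x
  ut : ∀ t x, 0 < t → 0 < x → x < s t → HasDerivAt (fun τ => u τ x) (deriv (deriv (u t)) x) t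
  ux : ∀ t x, 0 < t → 0 < x → x < s t → DifferentiableAt ℝ (u t) x
  uxx : ∀ t x, 0 < t → 0 < x → x < s t → DifferentiableAt ℝ (deriv (u t)) x
  b0 : ∀ t, 0 < t → HasDerivWithinAt (u t) (-(u t 0 ^ p)) (Ici 0) 0
  bs : ∀ t, 0 < t → u t (s t) = 0
  sd : ∀ t, 0 < t → ∃ m, HasDerivAt s (-m) t ∧ HasDerivWithinAt (u t) m (Iic (s t)) (s t)

/-- left derivative sign -/
lemma left_nonpos {f : ℝ → ℝ} {m a : ℝ} (h : HasDerivWithinAt f m (Iic a) a) {c : ℝ} (hc : c < a)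
    (hf : ∀ x, c < x → x < a → f a ≤ f x) : m ≤ 0 := by
  have h2 := hasDerivWithinAt_Iio_iff_Iic.mpr h
  rw [hasDerivWithinAt_iff_tendsto_slope' (by simp)] at h2
  refine le_of_tendsto h2 ?_
  filter_upwards [Ioo_mem_nhdsLT hc] with x hx
  rw [slope_def_field]
  exact div_nonpos_of_nonneg_of_nonpos (by linarith [hf x hx.1 hx.2]) (by linarith [hx.2])

lemma right_nonneg {f : ℝ → ℝ} {m a : ℝ} (h : HasDerivWithinAt f m (Ici a) a) {c : ℝ} (hc : a < c)
    (hf : ∀ x, a < x → x < c → f a ≤ f x) : 0 ≤ m := by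
  have h2 := hasDerivWithinAt_Ioi_iff_Ici.mpr h
  rw [hasDerivWithinAt_iff_tendsto_slope' (by simp)] at h2
  refine ge_of_tendsto h2 ?_
  filter_upwards [Ioo_mem_nhdsGT hc] with x hx
  rw [slope_def_field]
  exact div_nonneg (by linarith [hf x hx.1 hx.2]) (by linarith [hx.1])

lemma second_nonneg {f : ℝ → ℝ} {a : ℝ} (h : IsLocalMin f a) (hd : ∀ᶠ x in 𝓝 a, DifferentiableAt ℝ f x) :
    0 ≤ deriv (deriv f) a := by
  by_contra hn
  push Not at hn
  have h1 := isLocalMax_of_deriv_deriv_neg hn h.deriv_eq_zero hd.self_of_nhds.continuousAt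
  have h2 : f =ᶠ[𝓝 a] fun _ => f a := by
    filter_upwards [h, h1] with x hx hy using le_antisymm hy hx
  have h3 := h2.deriv.deriv_eq
  simp at h3
  linarith

/-- second order comparison: `w - f` (or `f - w`) has a local min -/
lemma second_cmp {f w w' : ℝ → ℝ} {a c k : ℝ} (hw : ∀ x, HasDerivAt w (w' x) x)
    (hw' : HasDerivAt w' c a)
    (h : IsLocalMin (fun x => w x + k * f x) a) (hd : ∀ᶠ x in 𝓝 a, DifferentiableAt ℝ f x)
    (hd2 : DifferentiableAt ℝ (deriv f) a) :
    0 ≤ c + k * deriv (deriv f) a := by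
  have h1 : deriv (fun x => w x + k * f x) =ᶠ[𝓝 a] fun x => w' x + k * deriv f x := by
    filter_upwards [hd] with x hx
    exact ((hw x).add (hx.hasDerivAt.const_mul k)).deriv
  have h2 := second_nonneg h (by
    filter_upwards [hd] with x hx
    exact ((hw x).add (hx.hasDerivAt.const_mul k)).differentiableAt)
  rw [h1.deriv_eq] at h2
  exact h2.trans_eq (hw'.add (hd2.hasDerivAt.const_mul k)).deriv

namespace SS
variable {p : ℝ} {s : ℝ → ℝ} {u : ℝ → ℝ → ℝ}

lemma s_mono (S : SS p s u) : MonotoneOn s (Ioi 0) := by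
  have hd : ∀ t, 0 < t → DifferentiableAt ℝ s t := fun t ht => by
    obtain ⟨m, h, _⟩ := S.sd t ht; exact h.differentiableAt
  apply monotoneOn_of_deriv_nonneg (convex_Ioi 0) S.sc.continuousOn
  · intro t ht; rw [interior_Ioi] at ht; exact (hd t ht).differentiableWithinAt
  · intro t ht
    rw [interior_Ioi] at ht
    obtain ⟨m, h, h'⟩ := S.sd t ht
    rw [h.deriv]
    have := left_nonpos h' (S.sp t (le_of_lt ht)) (fun x h1 h2 => by
      rw [S.bs t ht]; exact S.un t x (le_of_lt ht) h1.le h2.le)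
    linarith

lemma antitone (S : SS p s u) (h0 : ∀ x y, 0 ≤ x → x ≤ y → y ≤ s 0 → u 0 y ≤ u 0 x)
    (T x₀ y₀ : ℝ) (hT : 0 ≤ T) (hx : 0 ≤ x₀) (hxy : x₀ ≤ y₀) (hy : y₀ ≤ s T) : u T y₀ ≤ u T x₀ := by
  by_contra hn
  push Not at hn
  obtain ⟨R', hR'⟩ := (isCompact_Icc (a := (0:ℝ)) (b := T)).bddAbove_image S.sc.continuousOn
  have hR' : ∀ t, 0 ≤ t → t ≤ T → s t ≤ R' := fun t h1 h2 => hR' ⟨t, ⟨h1, h2⟩, rfl⟩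
  have hRT := hR' T hT le_rfl
  have hRpos : 0 < R' := (S.sp T hT).trans_le hRT
  obtain ⟨ε, hε, hεs⟩ : ∃ ε : ℝ, 0 < ε ∧ ε * (3 * T + R' ^ 2) < u T y₀ - u T x₀ := by
    refine ⟨(u T y₀ - u T x₀) / (2 * (3 * T + R' ^ 2)), by apply div_pos <;> [linarith; positivity], ?_⟩
    have : 0 < 3 * T + R' ^ 2 := by positivity
    field_simp
    linarith
  set K : Set (ℝ × ℝ × ℝ) := {q | 0 ≤ q.1 ∧ q.1 ≤ T ∧ 0 ≤ q.2.1 ∧ q.2.1 ≤ q.2.2 ∧ q.2.2 ≤ s q.1} with hK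
  have sc := S.sc
  have hKc : IsCompact K := by
    refine (isCompact_Icc (a := ((0:ℝ), (0:ℝ), (0:ℝ))) (b := (T, R', R'))).of_isClosed_subset ?_ ?_
    · rw [hK]
      simp only [ofPred_and]
      refine IsClosed.inter ?_ (IsClosed.inter ?_ (IsClosed.inter ?_ (IsClosed.inter ?_ ?_)))
      all_goals exact isClosed_le (by fun_prop) (by fun_prop)
    · rintro ⟨t, x, y⟩ ⟨h1, h2, h3, h4, h5⟩
      dsimp only at *
      have := hR' t h1 h2
      refine ⟨⟨h1, h3, ?_⟩, ⟨h2, ?_, ?_⟩⟩ <;> dsimp only <;> linarith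
  set Z : ℝ × ℝ × ℝ → ℝ := fun q => u q.1 q.2.1 - u q.1 q.2.2 + ε * (3 * q.1 + (R' - q.2.1) ^ 2) with hZ
  have hZc : ContinuousOn Z K := by
    have c1 : ContinuousOn (fun q : ℝ × ℝ × ℝ => u q.1 q.2.1) K :=
      S.uc.comp (f := fun q : ℝ × ℝ × ℝ => (q.1, q.2.1)) (by fun_prop)
        (fun q hq => ⟨hq.1, hq.2.2.1, hq.2.2.2.1.trans hq.2.2.2.2⟩)
    have c2 : ContinuousOn (fun q : ℝ × ℝ × ℝ => u q.1 q.2.2) K :=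
      S.uc.comp (f := fun q : ℝ × ℝ × ℝ => (q.1, q.2.2)) (by fun_prop)
        (fun q hq => ⟨hq.1, hq.2.2.1.trans hq.2.2.2.1, hq.2.2.2.2⟩)
    exact (c1.sub c2).add (by fun_prop)
  have hstar : (T, x₀, y₀) ∈ K := ⟨hT, le_rfl, hx, hxy, hy⟩
  obtain ⟨⟨t, x, y⟩, ⟨k1, k2, k3, k4, k5⟩, hmin⟩ := hKc.exists_isMinOn ⟨_, hstar⟩ hZc
  dsimp only at k1 k2 k3 k4 k5
  have hneg : Z (t, x, y) < 0 := by
    refine (hmin hstar).trans_lt ?_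
    simp only [hZ]
    have : (R' - x₀) ^ 2 ≤ R' ^ 2 := by nlinarith
    nlinarith
  have hmin' : ∀ t' x' y', 0 ≤ t' → t' ≤ T → 0 ≤ x' → x' ≤ y' → y' ≤ s t' → Z (t,x,y) ≤ Z (t',x',y') :=
    fun t' x' y' h1 h2 h3 h4 h5 => hmin (show (t',x',y') ∈ K from ⟨h1, h2, h3, h4, h5⟩)
  simp only [hZ] at hneg hmin'
  have hq : 0 ≤ ε * (3 * t + (R' - x) ^ 2) := by positivity
  have ht : 0 < t := by
    rcases k1.eq_or_lt with h | h
    · subst h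
      have := h0 x y k3 k4 k5
      linarith
    · exact h
  have hxy' : x < y := by
    rcases k4.eq_or_lt with h | h
    · subst h; linarith
    · exact h
  have hys : y < s t := by
    rcases k5.eq_or_lt with h | h
    · subst h
      have := S.bs t ht
      have := S.un t x k1 k3 k4
      linarith
    · exact h
  rcases k3.eq_or_lt with h | hx0
  · subst h
    have hd : HasDerivWithinAt (fun x => u t x - u t y + ε * (3 * t + (R' - x) ^ 2))
        (-(u t 0 ^ p) + ε * (2 * (R' - 0) * (-1))) (Ici 0) 0 := by
      have e : HasDerivAt (fun x : ℝ => ε * (3 * t + (R' - x) ^ 2)) (ε * (2 * (R' - 0) * (-1))) 0 := by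
        have := ((((hasDerivAt_id (0:ℝ)).const_sub R').pow 2).const_add (3 * t)).const_mul ε
        exact this.congr_deriv (by simp)
      exact ((S.b0 t ht).sub_const _).add e.hasDerivWithinAt
    have := right_nonneg hd hxy' (fun x' h1 h2 => hmin' t x' y k1 k2 h1.le h2.le k5)
    have := rpow_nonneg (S.un t 0 k1 le_rfl (S.sp t k1).le) p
    nlinarith
  · -- interior
    have hxs : x < s t := hxy'.trans hys
    have hy0 : 0 < y := hx0.trans hxy'
    have dt : HasDerivAt (fun t => u t x - u t y + ε * (3 * t + (R' - x) ^ 2))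
        (deriv (deriv (u t)) x - deriv (deriv (u t)) y + ε * 3) t := by
      have e : HasDerivAt (fun t : ℝ => ε * (3 * t + (R' - x) ^ 2)) (ε * 3) t := by
        simpa using (((hasDerivAt_id t).const_mul 3).add_const ((R' - x) ^ 2)).const_mul ε
      exact ((S.ut t x ht hx0 hxs).sub (S.ut t y ht hy0 hys)).add e
    obtain ⟨c, hc, hcs⟩ : ∃ c < t, ∀ t', c < t' → t' < t → 0 ≤ t' ∧ y ≤ s t' := by
      have : ∀ᶠ t' in 𝓝 t, 0 ≤ t' ∧ y ≤ s t' :=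
        ((eventually_gt_nhds ht).mono fun _ h => le_of_lt h).and
          ((sc.continuousAt.eventually_const_lt hys).mono fun _ h => le_of_lt h)
      obtain ⟨c, hc, h⟩ := exists_Ioc_subset_of_mem_nhds this (exists_lt t)
      exact ⟨c, hc, fun t' h1 h2 => h ⟨h1, h2.le⟩⟩
    have it := left_nonpos dt.hasDerivWithinAt hc (fun t' h1 h2 =>
      hmin' t' x y (hcs t' h1 h2).1 (h2.le.trans k2) k3 k4 (hcs t' h1 h2).2)
    have ix : 0 ≤ ε * 2 + 1 * deriv (deriv (u t)) x := by
      apply second_cmp (w := fun x => - u t y + ε * (3 * t + (R' - x) ^ 2))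
        (w' := fun x => ε * (2 * (R' - x) * (-1)))
      · intro x
        have := (((((hasDerivAt_id x).const_sub R').pow 2).const_add (3 * t)).const_mul ε).const_add (- u t y)
        exact this.congr_deriv (by simp)
      · have := ((((hasDerivAt_id x).const_sub R').const_mul 2).mul_const (-1)).const_mul ε
        exact this.congr_deriv (by simp)
      · filter_upwards [Ioo_mem_nhds hx0 hxy'] with x' hx'
        have := hmin' t x' y k1 k2 hx'.1.le hx'.2.le k5
        linarith
      · filter_upwards [Ioo_mem_nhds hx0 hxs] with x' hx' using S.ux t x' ht hx'.1 hx'.2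
      · exact S.uxx t x ht hx0 hxs
    have iy : 0 ≤ 0 + (-1) * deriv (deriv (u t)) y := by
      apply second_cmp (w := fun y => 0) (w' := fun y => 0)
      · intro x; exact hasDerivAt_const _ _
      · exact hasDerivAt_const _ _
      · filter_upwards [Ioo_mem_nhds hxy' hys] with y' hy'
        have := hmin' t x y' k1 k2 k3 hy'.1.le hy'.2.le
        linarith
      · filter_upwards [Ioo_mem_nhds hy0 hys] with x' hx' using S.ux t x' ht hx'.1 hx'.2
      · exact S.uxx t y ht hy0 hys
    linarith


lemma interior_le (S : SS p s u) {w : ℝ → ℝ → ℝ} {w' : ℝ → ℝ} {a c k t x : ℝ} (ht : 0 < t) (hx0 : 0 < x)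
    (hxs : x < s t) (wt : HasDerivAt (fun τ => w τ x) a t) (wx : ∀ y, HasDerivAt (w t) (w' y) y)
    (wxx : HasDerivAt w' c x) {t₀ : ℝ} (ht₀ : t₀ < t)
    (h1 : ∀ t', t₀ < t' → t' < t → w t x + k * u t x ≤ w t' x + k * u t' x)
    (h2 : ∀ᶠ y in 𝓝 x, w t x + k * u t x ≤ w t y + k * u t y) : a ≤ c := by
  have it := left_nonpos (wt.add ((S.ut t x ht hx0 hxs).const_mul k)).hasDerivWithinAt ht₀ h1
  have ix := second_cmp wx wxx (f := u t) (k := k) h2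
    (by filter_upwards [Ioo_mem_nhds hx0 hxs] with x' hx' using S.ux t x' ht hx'.1 hx'.2)
    (S.uxx t x ht hx0 hxs)
  linarith

lemma first_touch {ρ : ℝ → ℝ} (hρ : Continuous ρ) {g : ℝ → ℝ → ℝ} {t₀ T : ℝ}
    (hg : ContinuousOn (fun q : ℝ × ℝ => g q.1 q.2) {q | t₀ ≤ q.1 ∧ q.1 ≤ T ∧ 0 ≤ q.2 ∧ q.2 ≤ ρ q.1})
    (hne : ∃ t x, t₀ ≤ t ∧ t ≤ T ∧ 0 ≤ x ∧ x ≤ ρ t ∧ g t x ≤ 0) :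
    ∃ t x, t₀ ≤ t ∧ t ≤ T ∧ 0 ≤ x ∧ x ≤ ρ t ∧ g t x ≤ 0 ∧
      ∀ t' x', t₀ ≤ t' → t' < t → 0 ≤ x' → x' ≤ ρ t' → 0 < g t' x' := by
  obtain ⟨R', hR'⟩ := (isCompact_Icc (a := t₀) (b := T)).bddAbove_image hρ.continuousOn
  have hR' : ∀ t, t₀ ≤ t → t ≤ T → ρ t ≤ R' := fun t h1 h2 => hR' ⟨t, ⟨h1, h2⟩, rfl⟩
  set D : Set (ℝ × ℝ) := {q | t₀ ≤ q.1 ∧ q.1 ≤ T ∧ 0 ≤ q.2 ∧ q.2 ≤ ρ q.1} with hD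
  have hDc : IsClosed D := by
    rw [hD]
    simp only [ofPred_and]
    refine IsClosed.inter ?_ (IsClosed.inter ?_ (IsClosed.inter ?_ ?_))
    all_goals exact isClosed_le (by fun_prop) (by fun_prop)
  have hKc : IsCompact (D ∩ (fun q : ℝ × ℝ => g q.1 q.2) ⁻¹' Iic 0) := by
    refine (isCompact_Icc (a := (t₀, (0:ℝ))) (b := (T, R'))).of_isClosed_subset
      (hg.preimage_isClosed_of_isClosed hDc isClosed_Iic) ?_
    rintro ⟨t, x⟩ ⟨⟨h1, h2, h3, h4⟩, -⟩
    dsimp only at *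
    have := hR' t h1 h2
    refine ⟨⟨h1, h3⟩, ⟨h2, ?_⟩⟩ ; dsimp only ; linarith
  obtain ⟨t, x, a1, a2, a3, a4, a5⟩ := hne
  obtain ⟨⟨t, x⟩, ⟨⟨k1, k2, k3, k4⟩, k5⟩, hmin⟩ := hKc.exists_isMinOn
    ⟨(t, x), ⟨⟨a1, a2, a3, a4⟩, a5⟩⟩ (continuous_fst.continuousOn)
  refine ⟨t, x, k1, k2, k3, k4, k5, fun t' x' h1 h2 h3 h4 => ?_⟩
  by_contra hn
  push Not at hn
  have : t ≤ t' := hmin (show (t', x') ∈ _ from ⟨⟨h1, (h2.le.trans k2), h3, h4⟩, hn⟩)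
  linarith

lemma lim_left {f : ℝ → ℝ} {t₀ t : ℝ} (h : t₀ < t) (hf : ContinuousAt f t)
    (hp : ∀ᶠ t' in 𝓝 t, t₀ ≤ t' → t' < t → 0 ≤ f t') : 0 ≤ f t := by
  have h1 : Tendsto f (𝓝[<] t) (𝓝 (f t)) := hf.tendsto.mono_left nhdsWithin_le_nhds
  refine ge_of_tendsto h1 ?_
  filter_upwards [Ioo_mem_nhdsLT h, nhdsWithin_le_nhds hp] with x hx hx'
  exact hx' hx.1.le hx.2

set_option maxHeartbeats 1000000 in
lemma upper (S : SS p s u) (hp : 1 < p) {t₀ ε : ℝ} (ht₀ : 0 < t₀) (hε : 0 < ε) (hε6 : ε < 1 / 6)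
    (hεL : ε ^ (p - 1) * (8 * s t₀) ≤ 1) (hu : ∀ x, 0 ≤ x → x ≤ s t₀ → u t₀ x < 5 / 8 * ε)
    (T : ℝ) (hT : t₀ ≤ T) : s T < 4 * s t₀ := by
  set L := s t₀ with hLdef
  have hL : 0 < L := S.sp t₀ ht₀.le
  set γ := 1 / (16 * L ^ 2) with hγ
  have hγ0 : 0 < γ := by positivity
  set E : ℝ → ℝ := fun t => exp (-γ * (t - t₀)) with hE
  have hEd : ∀ t, HasDerivAt E (-γ * E t) t := by
    intro t
    have := (((hasDerivAt_id t).sub_const t₀).const_mul (-γ)).exp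
    exact this.congr_deriv (by simp [hE]; ring)
  have hE0 : ∀ t, 0 < E t := fun t => exp_pos _
  have hE1 : ∀ t, t₀ ≤ t → E t ≤ 1 := fun t ht => by
    apply exp_le_one_iff.mpr; nlinarith
  have hEt0 : E t₀ = 1 := by simp [hE]
  have hEc : Continuous E := by fun_prop
  set σ : ℝ → ℝ := fun t => 2 * L * (2 - E t) with hσ
  have hσc : Continuous σ := by fun_prop
  have hσd : ∀ t, HasDerivAt σ (2 * L * (γ * E t)) t := by
    intro t
    exact (((hEd t).const_sub 2).const_mul (2 * L)).congr_deriv (by ring)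
  have hσlt : ∀ t, σ t < 4 * L := fun t => by
    have := mul_pos hL (hE0 t); simp only [hσ]; nlinarith
  have hσge : ∀ t, t₀ ≤ t → 2 * L ≤ σ t := fun t ht => by
    have := hE1 t ht; simp only [hσ]; nlinarith
  set r : ℝ → ℝ := fun t => (max (σ t) L)⁻¹ with hr
  have hrc : Continuous r := by
    refine Continuous.inv₀ (by fun_prop) (fun t => ?_)
    exact (hL.trans_le (le_max_right _ _)).ne'
  have hreq : ∀ t, t₀ ≤ t → r t = (σ t)⁻¹ := fun t ht => by
    simp only [hr]; rw [max_eq_left]; linarith [hσge t ht]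
  have hσpos : ∀ t, t₀ ≤ t → 0 < σ t := fun t ht => by linarith [hσge t ht]
  have hrpos : ∀ t, t₀ ≤ t → 0 < r t := fun t ht => by
    rw [hreq t ht]; exact inv_pos.mpr (hσpos t ht)
  have hrσ : ∀ t, t₀ ≤ t → r t * σ t = 1 := fun t ht => by
    rw [hreq t ht]; exact inv_mul_cancel₀ (hσpos t ht).ne'
  have hrd : ∀ t, t₀ < t → HasDerivAt r (-(2 * L * (γ * E t)) * r t ^ 2) t := by
    intro t ht
    have h1 := (hσd t).inv (hσpos t ht.le).ne'
    have h2 : r =ᶠ[𝓝 t] σ⁻¹ := by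
      filter_upwards [eventually_gt_nhds ht] with t' ht' using hreq t' (le_of_lt ht')
    refine (h1.congr_of_eventuallyEq h2).congr_deriv ?_
    rw [hreq t ht.le]; field_simp
  set v : ℝ → ℝ → ℝ := fun t x => ε * E t * (1 - x * r t / 2 - (x * r t) ^ 2 / 2) with hv
  by_contra hn
  push Not at hn
  have hgc : ContinuousOn (fun q : ℝ × ℝ => v q.1 q.2 - u q.1 q.2)
      {q | t₀ ≤ q.1 ∧ q.1 ≤ T ∧ 0 ≤ q.2 ∧ q.2 ≤ s q.1} := by
    refine ContinuousOn.sub (by fun_prop) (S.uc.mono ?_)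
    rintro q ⟨h1, h2, h3, h4⟩
    exact ⟨ht₀.le.trans h1, h3, h4⟩
  have key : ∀ t, t₀ ≤ t → σ t ≤ s t → v t (s t) ≤ 0 := by
    intro t ht h
    have h1 : 1 ≤ s t * r t := by
      rw [← hrσ t ht, mul_comm (r t)]; exact mul_le_mul_of_nonneg_right h (hrpos t ht).le
    have := mul_pos hε (hE0 t)
    simp only [hv]
    apply mul_nonpos_of_nonneg_of_nonpos this.le
    nlinarith
  obtain ⟨t, x, k1, k2, k3, k4, k5, k6⟩ := first_touch S.sc (g := fun t x => v t x - u t x) hgc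
    ⟨T, s T, hT, le_rfl, (S.sp T (ht₀.le.trans hT)).le, le_rfl, by
      rw [S.bs T (ht₀.trans_le hT)]
      linarith [key T hT ((hσlt T).le.trans hn)]⟩
  have htt : t₀ < t := by
    rcases k1.eq_or_lt with h | h
    · subst h
      exfalso
      have h1 := hu x k3 k4
      have h2 : x * r t₀ ≤ 1 / 2 := by
        have h3 : σ t₀ = 2 * L := by simp only [hσ, hEt0]; ring
        have h4 := hrσ t₀ le_rfl
        rw [h3] at h4
        have := mul_le_mul_of_nonneg_right k4 (hrpos t₀ le_rfl).le
        linarith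
      have h5 : 0 ≤ x * r t₀ := mul_nonneg k3 (hrpos t₀ le_rfl).le
      simp only [hv, hEt0] at k5
      have h6 : 5 / 8 ≤ 1 - x * r t₀ / 2 - (x * r t₀) ^ 2 / 2 := by nlinarith
      have := mul_le_mul_of_nonneg_left h6 hε.le
      linarith
    · exact h
  have ht : 0 < t := ht₀.trans htt
  have hslt : ∀ t', t₀ ≤ t' → t' < t → s t' < σ t' := by
    intro t' h1 h2
    by_contra hc
    push Not at hc
    have a1 := key t' h1 hc
    have a2 := k6 t' (s t') h1 h2 (S.sp t' (ht₀.le.trans h1)).le le_rfl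
    rw [S.bs t' (ht₀.trans_le h1)] at a2
    linarith
  have hsle : s t ≤ σ t := by
    have := lim_left htt (f := fun t => σ t - s t) (hσc.sub S.sc).continuousAt
      (Eventually.of_forall fun t' h1 h2 => by linarith [hslt t' h1 h2])
    linarith
  have hfint : ∀ y, 0 < y → y < s t → 0 ≤ v t y - u t y := by
    intro y hy0 hys
    refine lim_left htt (f := fun t => v t y - u t y) ?_ ?_
    · refine ContinuousAt.sub ?_ (S.ut t y ht hy0 hys).continuousAt
      exact Continuous.continuousAt (by fun_prop)
    · filter_upwards [S.sc.continuousAt.eventually_const_lt hys] with t' h0 h1 h2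
      exact (k6 t' y h1 h2 hy0.le (le_of_lt h0)).le
  have hA : 0 < ε * E t := mul_pos hε (hE0 t)
  have hvx : ∀ y, HasDerivAt (v t) (ε * E t * (- (r t) / 2 - y * r t ^ 2)) y := by
    intro y
    have e := (((hasDerivAt_id y).mul_const (r t)).div_const 2)
    have e2 := ((((hasDerivAt_id y).mul_const (r t)).pow 2).div_const 2)
    exact (((e.const_sub 1).sub e2).const_mul (ε * E t)).congr_deriv (by simp only [id, Nat.cast_ofNat, Nat.reduceSub, pow_one, one_mul]; ring)
  have hrt := hrpos t k1
  have hrs := hrσ t k1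
  rcases k3.eq_or_lt with h | hx0
  · subst h
    have hd : HasDerivWithinAt (fun y => v t y - u t y) _ (Ici 0) 0 :=
      (hvx 0).hasDerivWithinAt.sub (S.b0 t ht)
    have i1 := right_nonneg hd (S.sp t ht.le) (fun y h1 h2 => k5.trans (hfint y h1 h2))
    have i2 : 0 ≤ v t 0 - u t 0 := by
      have hc : Tendsto (fun y => v t y - u t y) (𝓝[>] 0) (𝓝 (v t 0 - u t 0)) :=
        (hd.continuousWithinAt.mono Ioi_subset_Ici_self)
      refine ge_of_tendsto hc ?_
      filter_upwards [Ioo_mem_nhdsGT (S.sp t ht.le)] with y hy using hfint y hy.1 hy.2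
    have hv0 : v t 0 = ε * E t := by simp [hv]
    have i3 : u t 0 ^ p ≤ (ε * E t) ^ p :=
      rpow_le_rpow (S.un t 0 ht.le le_rfl (S.sp t ht.le).le) (by linarith) (by linarith)
    have i4 : (ε * E t) ^ p = (ε * E t) ^ (p - 1) * (ε * E t) := by
      rw [← rpow_add_one hA.ne']; congr 1; ring
    have i5 : (ε * E t) ^ (p - 1) ≤ ε ^ (p - 1) := by
      apply rpow_le_rpow hA.le _ (by linarith)
      nlinarith [hE1 t k1]
    have i6 : ε ^ (p - 1) < r t / 2 := by
      have : ε ^ (p - 1) * (8 * L) < r t / 2 * (8 * L) := by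
        have : 1 < r t * (4 * L) := by
          rw [← hrs]; exact mul_lt_mul_of_pos_left (hσlt t) hrt
        linarith
      exact lt_of_mul_lt_mul_right this (by positivity)
    have i7 : (ε * E t) ^ (p - 1) * (ε * E t) < r t / 2 * (ε * E t) :=
      mul_lt_mul_of_pos_right (i5.trans_lt i6) hA
    linarith
  rcases k4.eq_or_lt with h | hxs
  · subst h
    rw [S.bs t ht] at k5
    have e1 : 1 ≤ s t * r t := by
      by_contra hc
      push Not at hc
      have : 0 < s t * r t := mul_pos hx0 hrt
      have : 0 < v t (s t) := by
        simp only [hv]; apply mul_pos hA; nlinarith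
      linarith
    have e2 : s t * r t ≤ 1 := by
      rw [← hrs, mul_comm (r t)]; exact mul_le_mul_of_nonneg_right hsle hrt.le
    have e3 : s t * r t = 1 := le_antisymm e2 e1
    have e4 : s t = σ t := by
      have : (s t - σ t) * r t = 0 := by linarith
      rcases mul_eq_zero.mp this with h | h <;> linarith
    obtain ⟨m, hm1, hm2⟩ := S.sd t ht
    have hd : HasDerivWithinAt (fun y => v t y - u t y) _ (Iic (s t)) (s t) :=
      (hvx (s t)).hasDerivWithinAt.sub hm2
    have i1 := left_nonpos hd hx0 (fun y h1 h2 => by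
      rw [S.bs t ht]; exact k5.trans (hfint y h1 h2))
    have i2 := left_nonpos ((hσd t).sub hm1).hasDerivWithinAt htt (fun t' h1 h2 => by
      have := hslt t' h1.le h2
      simp only [Pi.sub_apply]
      linarith)
    have i3 : s t * r t ^ 2 = r t := by rw [pow_two, ← mul_assoc, e3, one_mul]
    rw [i3] at i1
    have i4 : r t * (2 * L) ≤ 1 := by
      rw [← hrs]; exact mul_le_mul_of_nonneg_left (hσge t k1) hrt.le
    have i5 : 2 * L * (γ * E t) = E t / (8 * L) := by rw [hγ]; field_simp; ring
    have i6 : r t ≤ 1 / (2 * L) := by rw [le_div_iff₀ (by positivity)]; exact i4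
    have i7 : 2 * L * (γ * E t) ≤ 3 / 2 * (ε * E t) * r t := by linarith
    have i8 : 3 / 2 * (ε * E t) * r t ≤ 3 / 2 * (ε * E t) * (1 / (2 * L)) := by gcongr
    rw [i5] at i7
    have i9 : 3 / 2 * (ε * E t) * (1 / (2 * L)) = (6 * ε) * (E t / (8 * L)) := by field_simp; ring
    have : 0 < E t / (8 * L) := div_pos (hE0 t) (by positivity)
    nlinarith
  · have hr' := hrd t htt
    have wt : HasDerivAt (fun τ => v τ x) (ε * (-γ * E t) * (1 - x * r t / 2 - (x * r t) ^ 2 / 2)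
        + ε * E t * (2 * L * (γ * E t) * r t ^ 2 * (x / 2 + x ^ 2 * r t))) t := by
      have e := (hr'.const_mul x).div_const 2
      have e2 := ((hr'.const_mul x).pow 2).div_const 2
      exact (((hEd t).const_mul ε).mul ((e.const_sub 1).sub e2)).congr_deriv (by simp only [Nat.cast_ofNat, Nat.reduceSub, pow_one, Pi.sub_apply, Pi.pow_apply]; ring)
    have wxx : HasDerivAt (fun y => ε * E t * (- (r t) / 2 - y * r t ^ 2)) (-(ε * E t * r t ^ 2)) x := by
      exact ((((hasDerivAt_id x).mul_const (r t ^ 2)).const_sub (- (r t) / 2)).const_mul (ε * E t)).congr_deriv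
        (by simp)
    obtain ⟨c, hc, hcs⟩ : ∃ c < t, ∀ t', c < t' → t' < t → t₀ ≤ t' ∧ x ≤ s t' := by
      have : ∀ᶠ t' in 𝓝 t, t₀ ≤ t' ∧ x ≤ s t' :=
        ((eventually_gt_nhds htt).mono fun _ h => le_of_lt h).and
          ((S.sc.continuousAt.eventually_const_lt hxs).mono fun _ h => le_of_lt h)
      obtain ⟨c, hc, h⟩ := exists_Ioc_subset_of_mem_nhds this (exists_lt t)
      exact ⟨c, hc, fun t' h1 h2 => h ⟨h1, h2.le⟩⟩
    have := S.interior_le (k := -1) ht hx0 hxs wt hvx wxx hc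
      (fun t' h1 h2 => by
        obtain ⟨a1, a2⟩ := hcs t' h1 h2
        linarith [k6 t' x a1 h2 k3 a2])
      (by
        filter_upwards [Ioo_mem_nhds hx0 hxs] with y hy
        linarith [hfint y hy.1 hy.2])
    have j1 : γ < r t ^ 2 := by
      have : 1 < r t * (4 * L) := by
        rw [← hrs]; exact mul_lt_mul_of_pos_left (hσlt t) hrt
      rw [hγ, div_lt_iff₀ (by positivity)]
      nlinarith
    have j2 : 0 ≤ ε * E t * (2 * L * (γ * E t) * r t ^ 2 * (x / 2 + x ^ 2 * r t)) := by
      have := hE0 t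
      positivity
    have j3 : 0 < x * r t := mul_pos hx0 hrt
    have j4 : ε * E t * (γ * (1 - x * r t / 2 - (x * r t) ^ 2 / 2)) < ε * E t * r t ^ 2 := by
      apply mul_lt_mul_of_pos_left _ hA
      refine lt_of_le_of_lt ?_ j1
      have : 1 - x * r t / 2 - (x * r t) ^ 2 / 2 ≤ 1 := by nlinarith
      nlinarith
    linarith

end SS

namespace SS
variable {p : ℝ} {s : ℝ → ℝ} {u : ℝ → ℝ → ℝ}

set_option maxHeartbeats 1000000 in
lemma lower (S : SS p s u) {t₀ b T : ℝ} (ht₀ : 0 < t₀) (hb : 0 < b) (hb1 : b < 1) (hT : t₀ ≤ T)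
    (hu : ∀ t, t₀ ≤ t → t ≤ T → b < u t 0) : b * (T - t₀) / 2 ≤ s T ^ 2 := by
  -- initial width
  obtain ⟨η, hη, hηs, hηu⟩ : ∃ η, 0 < η ∧ η < s t₀ ∧ ∀ x, 0 ≤ x → x ≤ η → b < u t₀ x := by
    have h1 : ∀ᶠ x in 𝓝[≥] 0, b < u t₀ x :=
      (S.b0 t₀ ht₀).continuousWithinAt.eventually_const_lt (hu t₀ le_rfl hT)
    obtain ⟨c, hc, h⟩ := mem_nhdsGE_iff_exists_Ico_subset.mp h1
    have hs := S.sp t₀ ht₀.le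
    have hc : (0:ℝ) < c := hc
    refine ⟨min c (s t₀) / 2, by positivity, ?_, fun x h1 h2 => h ⟨h1, ?_⟩⟩
    · have := min_le_right c (s t₀); linarith
    · have := min_le_left c (s t₀); linarith
  set Q : ℝ → ℝ := fun t => max (η ^ 2 + b * (t - t₀) / 2) (η ^ 2) with hQ
  have hQc : Continuous Q := by fun_prop
  have hQpos : ∀ t, 0 < Q t := fun t => (by positivity : 0 < η ^ 2).trans_le (le_max_right _ _)
  have hQeq : ∀ t, t₀ ≤ t → Q t = η ^ 2 + b * (t - t₀) / 2 := fun t ht => by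
    simp only [hQ]; rw [max_eq_left]; nlinarith
  set σ : ℝ → ℝ := fun t => √(Q t) with hσ
  have hσc : Continuous σ := by fun_prop
  have hσpos : ∀ t, 0 < σ t := fun t => sqrt_pos.mpr (hQpos t)
  have hσd : ∀ t, t₀ < t → HasDerivAt σ (b / 4 * (σ t)⁻¹) t := by
    intro t ht
    have h1 : HasDerivAt (fun t => η ^ 2 + b * (t - t₀) / 2) (b / 2) t := by
      exact (((((hasDerivAt_id t).sub_const t₀).const_mul b).div_const 2).const_add (η ^ 2)).congr_deriv (by ring)
    have h2 : Q =ᶠ[𝓝 t] fun t => η ^ 2 + b * (t - t₀) / 2 := by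
      filter_upwards [eventually_gt_nhds ht] with t' ht' using hQeq t' (le_of_lt ht')
    have h3 := (h1.congr_of_eventuallyEq h2).sqrt (hQpos t).ne'
    refine h3.congr_deriv ?_
    have := hσpos t
    simp only [hσ] at this ⊢
    field_simp
    norm_num
  set r : ℝ → ℝ := fun t => (σ t)⁻¹ with hr
  have hrc : Continuous r := hσc.inv₀ (fun t => (hσpos t).ne')
  have hrpos : ∀ t, 0 < r t := fun t => inv_pos.mpr (hσpos t)
  have hrσ : ∀ t, r t * σ t = 1 := fun t => inv_mul_cancel₀ (hσpos t).ne'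
  have hrd : ∀ t, t₀ < t → HasDerivAt r (-(b / 4) * r t ^ 3) t := by
    intro t ht
    refine ((hσd t ht).inv (hσpos t).ne').congr_deriv ?_
    have := hσpos t
    simp only [hr]; field_simp
  have hσt0 : σ t₀ = η := by
    simp only [hσ]; rw [hQeq t₀ le_rfl]; simp [sqrt_sq hη.le]
  -- w = b * ((1 - y) + (1 - y)^2) / 2 , y = x r
  set w : ℝ → ℝ → ℝ := fun t x => b * ((1 - x * r t) + (1 - x * r t) ^ 2) / 2 with hw
  have hyle : ∀ t x, x ≤ σ t → x * r t ≤ 1 := fun t x h => by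
    rw [← hrσ t, mul_comm (r t)]; exact mul_le_mul_of_nonneg_right h (hrpos t).le
  have hwnn : ∀ t x, x ≤ σ t → 0 ≤ w t x := fun t x h => by
    have := hyle t x h
    have h1 : 0 ≤ 1 - x * r t := by linarith
    simp only [hw]; positivity
  have hwb : ∀ t x, 0 ≤ x → x ≤ σ t → w t x ≤ b := fun t x h0 h => by
    have h1 := hyle t x h
    have h2 := mul_nonneg h0 (hrpos t).le
    simp only [hw]
    have : (1 - x * r t) + (1 - x * r t) ^ 2 ≤ 2 := by nlinarith
    nlinarith
  suffices hmain : σ T ≤ s T by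
    have h1 : σ T ^ 2 ≤ s T ^ 2 := by
      have := hσpos T
      gcongr
    have h2 : σ T ^ 2 = Q T := sq_sqrt (hQpos T).le
    rw [h2, hQeq T hT] at h1
    nlinarith
  by_contra hn
  push Not at hn
  have hgc : ContinuousOn (fun q : ℝ × ℝ => u q.1 q.2 - w q.1 q.2)
      {q | t₀ ≤ q.1 ∧ q.1 ≤ T ∧ 0 ≤ q.2 ∧ q.2 ≤ min (s q.1) (σ q.1)} := by
    refine ContinuousOn.sub (S.uc.mono ?_) (by fun_prop)
    rintro q ⟨h1, h2, h3, h4⟩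
    exact ⟨ht₀.le.trans h1, h3, h4.trans (min_le_left _ _)⟩
  obtain ⟨t, x, k1, k2, k3, k4', k5, k6'⟩ := first_touch (ρ := fun t => min (s t) (σ t))
    (S.sc.min hσc) (g := fun t x => u t x - w t x) hgc
    ⟨T, s T, hT, le_rfl, (S.sp T (ht₀.le.trans hT)).le, le_min le_rfl hn.le, by
      rw [S.bs T (ht₀.trans_le hT)]
      linarith [hwnn T _ hn.le]⟩
  have k4 := le_min_iff.mp k4'
  have k6 : ∀ t' x', t₀ ≤ t' → t' < t → 0 ≤ x' → x' ≤ s t' → x' ≤ σ t' → 0 < u t' x' - w t' x' :=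
    fun t' x' h1 h2 h3 h4 h5 => k6' t' x' h1 h2 h3 (le_min h4 h5)
  clear k4' k6'
  have htt : t₀ < t := by
    rcases k1.eq_or_lt with h | h
    · subst h
      exfalso
      have h1 := hηu x k3 (by rw [← hσt0]; exact k4.2)
      have h2 := hwb t₀ x k3 k4.2
      linarith
    · exact h
  have ht : 0 < t := ht₀.trans htt
  have hslt : ∀ t', t₀ ≤ t' → t' < t → σ t' < s t' := by
    intro t' h1 h2
    by_contra hc
    push Not at hc
    have a1 := hwnn t' _ hc
    have a2 := k6 t' (s t') h1 h2 (S.sp t' (ht₀.le.trans h1)).le le_rfl hc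
    rw [S.bs t' (ht₀.trans_le h1)] at a2
    linarith
  have hsle : σ t ≤ s t := by
    have := lim_left htt (f := fun t => s t - σ t) (S.sc.sub hσc).continuousAt
      (Eventually.of_forall fun t' h1 h2 => by linarith [hslt t' h1 h2])
    linarith
  have hfint : ∀ y, 0 < y → y < σ t → 0 ≤ u t y - w t y := by
    intro y hy0 hys
    refine lim_left htt (f := fun t => u t y - w t y) ?_ ?_
    · refine ContinuousAt.sub (S.ut t y ht hy0 (hys.trans_le hsle)).continuousAt ?_
      exact Continuous.continuousAt (by fun_prop)
    · filter_upwards [hσc.continuousAt.eventually_const_lt hys] with t' h0 h1 h2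
      exact (k6 t' y h1 h2 hy0.le ((le_of_lt h0).trans (hslt t' h1 h2).le) (le_of_lt h0)).le
  have hwx : ∀ y, HasDerivAt (w t) (b * (- 3 * r t + 2 * y * r t ^ 2) / 2) y := by
    intro y
    have e := (((hasDerivAt_id y).mul_const (r t)).const_sub 1)
    exact (((e.add (e.pow 2)).const_mul b).div_const 2).congr_deriv
      (by simp only [id, Nat.cast_ofNat, Nat.reduceSub, pow_one, one_mul]; ring)
  have hrt := hrpos t
  have hrs := hrσ t
  rcases k3.eq_or_lt with h | hx0
  · subst h
    have h1 := hu t k1 k2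
    have h2 := hwb t 0 le_rfl k4.2
    linarith
  rcases k4.2.eq_or_lt with h | hxσ
  · have hwσ : w t x = 0 := by
      simp only [hw]; rw [h, mul_comm (σ t), hrs]; simp
    rw [hwσ] at k5
    have hu0 : u t x = 0 := le_antisymm (by linarith) (S.un t x ht.le k3 k4.1)
    have hslope : b * (- 3 * r t + 2 * x * r t ^ 2) / 2 = - (b / 2 * r t) := by
      have : x * r t ^ 2 = r t := by rw [h, pow_two, ← mul_assoc, mul_comm (σ t), hrs, one_mul]
      linear_combination b * this
    have hbr : 0 < b / 2 * r t := by positivity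
    have gen : ∀ m, HasDerivWithinAt (u t) m (Iic x) x → m ≤ -(b / 2 * r t) := by
      intro m hm
      have hd : HasDerivWithinAt (fun y => u t y - w t y) _ (Iic x) x :=
        hm.sub (hwx x).hasDerivWithinAt
      have := left_nonpos hd hx0 (fun y h1 h2 => by
        rw [hu0, hwσ, sub_zero]; exact hfint y h1 (h2.trans_eq h))
      rw [hslope] at this
      linarith
    rcases k4.1.eq_or_lt with h' | hxs
    · obtain ⟨m, hm1, hm2⟩ := S.sd t ht
      rw [← h'] at hm2
      have i1 := gen m hm2
      have i2 := left_nonpos (hm1.sub (hσd t htt)).hasDerivWithinAt htt (fun t' h1 h2 => by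
        have := hslt t' h1.le h2
        simp only [Pi.sub_apply]
        linarith)
      have : (σ t)⁻¹ = r t := rfl
      rw [this] at i2
      linarith
    · have i1 := gen _ (S.ux t x ht hx0 hxs).hasDerivAt.hasDerivWithinAt
      have i2 : IsLocalMin (u t) x := by
        filter_upwards [Ioo_mem_nhds hx0 hxs] with y hy
        rw [hu0]; exact S.un t y ht.le hy.1.le hy.2.le
      rw [i2.deriv_eq_zero] at i1
      linarith
  · have hxs : x < s t := hxσ.trans_le hsle
    have hr' := hrd t htt
    have wt : HasDerivAt (fun τ => - w τ x) (-(b * (x * (b / 4 * r t ^ 3) * (1 + 2 * (1 - x * r t))) / 2)) t := by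
      have e := (hr'.const_mul x).const_sub 1
      exact (((e.add (e.pow 2)).const_mul b).div_const 2).neg.congr_deriv
        (by simp only [Nat.cast_ofNat, Nat.reduceSub, pow_one]; ring)
    have wxx : HasDerivAt (fun y => -(b * (- 3 * r t + 2 * y * r t ^ 2) / 2)) (-(b * r t ^ 2)) x := by
      exact ((((((hasDerivAt_id x).const_mul 2).mul_const (r t ^ 2)).const_add (- 3 * r t)).const_mul b).div_const 2).neg.congr_deriv
        (by ring)
    obtain ⟨c, hc, hcs⟩ : ∃ c < t, ∀ t', c < t' → t' < t → t₀ ≤ t' ∧ x ≤ σ t' := by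
      have : ∀ᶠ t' in 𝓝 t, t₀ ≤ t' ∧ x ≤ σ t' :=
        ((eventually_gt_nhds htt).mono fun _ h => le_of_lt h).and
          ((hσc.continuousAt.eventually_const_lt hxσ).mono fun _ h => le_of_lt h)
      obtain ⟨c, hc, h⟩ := exists_Ioc_subset_of_mem_nhds this (exists_lt t)
      exact ⟨c, hc, fun t' h1 h2 => h ⟨h1, h2.le⟩⟩
    have := S.interior_le (k := 1) (w := fun t x => - w t x) ht hx0 hxs wt (fun y => (hwx y).neg) wxx hc
      (fun t' h1 h2 => by
        obtain ⟨a1, a2⟩ := hcs t' h1 h2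
        linarith [k6 t' x a1 h2 k3 (a2.trans (hslt t' a1 h2).le) a2])
      (by
        filter_upwards [Ioo_mem_nhds hx0 hxσ] with y hy
        linarith [hfint y hy.1 hy.2])
    have j3 : 0 < x * r t := mul_pos hx0 hrt
    have j4 := hyle t x k4.2
    have j5 : x * r t * (1 + 2 * (1 - x * r t)) ≤ 3 := by nlinarith
    have j6 : b * (x * (b / 4 * r t ^ 3) * (1 + 2 * (1 - x * r t))) / 2
        = (b * r t ^ 2) * (b / 8 * (x * r t * (1 + 2 * (1 - x * r t)))) := by ring
    have j7 : 0 < b * r t ^ 2 := by positivity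
    have j8 : b / 8 * (x * r t * (1 + 2 * (1 - x * r t))) < 1 := by nlinarith
    rw [j6] at this
    nlinarith

lemma final (S : SS p s u) (hp : 1 < p)
    (h0 : ∀ x y, 0 ≤ x → x ≤ y → y ≤ s 0 → u 0 y ≤ u 0 x) (hgrow : Tendsto s atTop atTop) :
    ∃ c : ℝ, 0 < c ∧ ∀ᶠ t in atTop, c ≤ t ^ (-(p - 1) / (2 * p - 1)) * s t := by
  have hp1 : 0 < p - 1 := by linarith
  have hp2 : 0 < 2 * p - 1 := by linarith
  set a := 1 / (p - 1) with ha
  have hapos : 0 < a := by positivity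
  have hap : a * (p - 1) = 1 := by rw [ha]; field_simp
  set κ : ℝ := (16:ℝ) ^ (-a) / 12 with hκ
  have hκ0 : 0 < κ := by positivity
  have hκ1 : κ ≤ 1 / 12 := by
    have : (16:ℝ) ^ (-a) ≤ 1 := rpow_le_one_of_one_le_of_nonpos (by norm_num) (by linarith)
    rw [hκ]; linarith
  have hκp : κ ^ (p - 1) ≤ 1 / 16 := by
    rw [hκ, div_rpow (by positivity) (by norm_num), ← rpow_mul (by norm_num), neg_mul, hap, rpow_neg_one]
    have : (1:ℝ) ≤ 12 ^ (p - 1) := one_le_rpow (by norm_num) hp1.le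
    rw [div_le_iff₀ (by linarith)]
    linarith
  obtain ⟨t₁, ht₁⟩ := eventually_atTop.mp (hgrow.eventually_ge_atTop 1)
  set t₀ := max t₁ 1 with ht₀
  have ht0 : 0 < t₀ := lt_of_lt_of_le one_pos (le_max_right _ _)
  have hs1 : ∀ t, t₀ ≤ t → 1 ≤ s t := fun t ht => ht₁ t ((le_max_left _ _).trans ht)
  have hA : ∀ t, t₀ ≤ t → 5 / 8 * (κ * s t ^ (-a)) ≤ u t 0 := by
    intro t ht
    by_contra hn
    push Not at hn
    have hst := hs1 t ht
    have hst0 : 0 < s t := by linarith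
    have htp : 0 < t := ht0.trans_le ht
    have e1 : s t ^ (-a) ≤ 1 := rpow_le_one_of_one_le_of_nonpos hst (by linarith)
    have e2 : 0 < s t ^ (-a) := rpow_pos_of_pos hst0 _
    have e3 : (κ * s t ^ (-a)) ^ (p - 1) * (8 * s t) ≤ 1 := by
      rw [mul_rpow hκ0.le e2.le, ← rpow_mul hst0.le, neg_mul, hap, rpow_neg_one]
      field_simp
      linarith
    have hall := S.upper hp htp (ε := κ * s t ^ (-a)) (by positivity) (by nlinarith) e3
      (fun x h1 h2 => lt_of_le_of_lt (S.antitone h0 t 0 x htp.le le_rfl h1 h2) hn)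
    obtain ⟨T, hT1, hT2⟩ := ((hgrow.eventually_ge_atTop (4 * s t)).and (eventually_ge_atTop t)).exists
    linarith [hall T hT2]
  have hB : ∀ T, 2 * t₀ ≤ T → κ / 8 * T ≤ s T ^ (2 + a) := by
    intro T hT
    have hTt : t₀ ≤ T := by linarith
    have hsT := hs1 T hTt
    have hsT0 : 0 < s T := by linarith
    have e2 : 0 < s T ^ (-a) := rpow_pos_of_pos hsT0 _
    have e1 : s T ^ (-a) ≤ 1 := rpow_le_one_of_one_le_of_nonpos hsT (by linarith)
    have hl := S.lower (b := κ / 2 * s T ^ (-a)) ht0 (by positivity) (by nlinarith) hTt (by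
      intro t h1 h2
      refine lt_of_lt_of_le ?_ (hA t h1)
      have : s T ^ (-a) ≤ s t ^ (-a) := by
        apply rpow_le_rpow_of_nonpos (by linarith [hs1 t h1])
          (S.s_mono (ht0.trans_le h1) (ht0.trans_le hTt) h2) (by linarith)
      have := mul_le_mul_of_nonneg_left this hκ0.le
      have := mul_pos hκ0 e2
      linarith)
    have e4 : κ / 8 * T * s T ^ (-a) ≤ s T ^ 2 := by
      refine le_trans ?_ hl
      have := mul_nonneg (mul_pos hκ0 e2).le (by linarith : 0 ≤ T - 2 * t₀)
      nlinarith
    have e5 : s T ^ (2 + a) = s T ^ 2 * s T ^ a := by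
      rw [rpow_add hsT0]; norm_num
    have e6 : s T ^ (-a) * s T ^ a = 1 := by
      rw [← rpow_add hsT0]; simp
    rw [e5]
    calc κ / 8 * T = κ / 8 * T * s T ^ (-a) * s T ^ a := by rw [mul_assoc _ (s T ^ (-a)), e6, mul_one]
      _ ≤ _ := by gcongr
  set θ := (p - 1) / (2 * p - 1) with hθ
  have hθpos : 0 < θ := by positivity
  have haθ : (2 + a) * θ = 1 := by rw [ha, hθ]; field_simp; ring
  refine ⟨(κ / 8) ^ θ, by positivity, ?_⟩
  filter_upwards [eventually_ge_atTop (2 * t₀)] with T hT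
  have hT0 : 0 < T := by linarith
  have hsT0 : 0 < s T := S.sp T hT0.le
  have h1 := rpow_le_rpow (by positivity) (hB T hT) hθpos.le
  rw [← rpow_mul hsT0.le, haθ, rpow_one, mul_rpow (by positivity) hT0.le] at h1
  have h2 : -(p - 1) / (2 * p - 1) = -θ := by rw [hθ]; ring
  rw [h2, rpow_neg hT0.le]
  have h3 : 0 < T ^ θ := rpow_pos_of_pos hT0 _
  rw [inv_mul_eq_div, le_div_iff₀ h3]
  exact h1

end SS

lemma toSS {p s₀ : ℝ} {φ : ℝ → ℝ} {s : ℝ → ℝ} {u : ℝ → ℝ → ℝ}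
    (h : IsGlobalSol p s₀ φ s u) : SS p (fun t => s (max t 0)) u := by
  have hm : ∀ t : ℝ, 0 ≤ t → max t 0 = t := fun t ht => max_eq_left ht
  have hsc : ContinuousOn s (Ici 0) := by
    intro t ht
    have ht : 0 ≤ t := ht
    have := (h (t + 1) (by linarith)).s_cont t ⟨ht, by linarith⟩
    refine this.mono_of_mem_nhdsWithin ?_
    filter_upwards [self_mem_nhdsWithin, mem_nhdsWithin_of_mem_nhds (Iio_mem_nhds (lt_add_one t))] with y h1 h2
    exact ⟨h1, le_of_lt h2⟩
  have hS : ∀ t, 0 < t → IsSolOn p s₀ φ t s u := h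
  have hmem : ∀ t : ℝ, 0 < t → t ∈ Ioc 0 t := fun t ht => ⟨ht, le_rfl⟩
  have hsp : ∀ t, 0 ≤ t → 0 < s t := fun t ht => by
    exact (h (t + 1) (by linarith)).s_pos t ⟨ht, by linarith⟩
  -- slice continuity
  have huc : ∀ t, 0 < t → ContinuousOn (u t) (Icc 0 (s t)) := fun t ht => by
    exact (hS t ht).u_cont.comp (f := fun x : ℝ => (t, x)) (by fun_prop)
      (fun x hx => ⟨⟨ht.le, le_rfl⟩, hx⟩)
  have huxc : ∀ t, 0 < t → ContinuousOn (deriv (u t)) (Icc 0 (s t)) := fun t ht => by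
    exact (hS t ht).ux_cont.comp (f := fun x : ℝ => (t, x)) (by fun_prop)
      (fun x hx => ⟨hmem t ht, hx⟩)
  have hud : ∀ t, 0 < t → DifferentiableOn ℝ (u t) (Ioo 0 (s t)) := fun t ht x hx =>
    ((hS t ht).ux_diff t (hmem t ht) x hx).differentiableWithinAt
  refine ⟨?_, ?_, ?_, ?_, ?_, ?_, ?_, ?_, ?_, ?_⟩
  · exact hsc.comp_continuous (by fun_prop) (fun t => mem_Ici.mpr (le_max_right _ _))
  · intro t ht
    simp only [hm t ht]
    exact hsp t ht
  · rintro ⟨t, x⟩ ⟨h1, h2, h3⟩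
    dsimp only at h1 h2 h3
    rw [hm t h1] at h3
    have := (h (t + 1) (by linarith)).u_cont (t, x) ⟨⟨h1, by dsimp only; linarith⟩, h2, h3⟩
    refine this.mono_of_mem_nhdsWithin ?_
    have hO : {q : ℝ × ℝ | q.1 < t + 1} ∈ 𝓝 (t, x) :=
      (isOpen_lt continuous_fst continuous_const).mem_nhds (by simp)
    filter_upwards [self_mem_nhdsWithin, mem_nhdsWithin_of_mem_nhds hO] with q g1 g2
    obtain ⟨g3, g4, g5⟩ := g1
    rw [hm _ g3] at g5
    exact ⟨⟨g3, le_of_lt g2⟩, g4, g5⟩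
  · intro t x ht h1 h2
    rw [hm t ht] at h2
    exact (h (t + 1) (by linarith)).u_nonneg t ⟨ht, by linarith⟩ x ⟨h1, h2⟩
  · intro t x ht h1 h2
    rw [hm t ht.le] at h2
    rw [← (hS t ht).heat t (hmem t ht) x ⟨h1, h2⟩]
    exact ((hS t ht).ut_diff t (hmem t ht) x ⟨h1, h2⟩).hasDerivAt
  · intro t x ht h1 h2
    rw [hm t ht.le] at h2
    exact (hS t ht).ux_diff t (hmem t ht) x ⟨h1, h2⟩
  · intro t x ht h1 h2
    rw [hm t ht.le] at h2
    exact (hS t ht).uxx_diff t (hmem t ht) x ⟨h1, h2⟩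
  · intro t ht
    have hs := hsp t ht.le
    have e : -(u t 0 ^ p) = deriv (u t) 0 := by
      rw [← (hS t ht).bc_zero t (hmem t ht), neg_neg]
    rw [e]
    refine hasDerivWithinAt_Ici_of_tendsto_deriv (hud t ht) ?_ (Ioo_mem_nhdsGT hs) ?_
    · exact (huc t ht 0 ⟨le_rfl, hs.le⟩).mono Ioo_subset_Icc_self
    · have := (huxc t ht 0 ⟨le_rfl, hs.le⟩).mono Ioo_subset_Icc_self
      rwa [ContinuousWithinAt, nhdsWithin_Ioo_eq_nhdsGT hs] at this
  · intro t ht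
    rw [hm t ht.le]
    exact (hS t ht).bc_free t (hmem t ht)
  · intro t ht
    have hs := hsp t ht.le
    refine ⟨deriv (u t) (s t), ?_, ?_⟩
    · rw [← (hS t ht).stefan t (hmem t ht)]
      refine ((hS t ht).s_diff t (hmem t ht)).hasDerivAt.congr_of_eventuallyEq ?_
      filter_upwards [eventually_gt_nhds ht] with t' ht'
      rw [hm t' (le_of_lt ht')]
    · rw [hm t ht.le]
      refine hasDerivWithinAt_Iic_of_tendsto_deriv (hud t ht) ?_ (Ioo_mem_nhdsLT hs) ?_
      · exact (huc t ht (s t) ⟨hs.le, le_rfl⟩).mono Ioo_subset_Icc_self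
      · have := (huxc t ht (s t) ⟨hs.le, le_rfl⟩).mono Ioo_subset_Icc_self
        rwa [ContinuousWithinAt, nhdsWithin_Ioo_eq_nhdsLT hs] at this

/-- Theorem 1.3: lower bound on the growth of the free boundary when `∂ₓφ ≤ 0`. -/
theorem stmt_3 (p : ℝ) (hp : 1 < p) (s₀ : ℝ) (φ : ℝ → ℝ) (hW : memW s₀ φ)
    (hφdiff : ∀ x ∈ Ioo 0 s₀, DifferentiableAt ℝ φ x)
    (hφC1 : ContinuousOn (deriv φ) (Ioo 0 s₀))
    (hφmono : ∀ x ∈ Ioo 0 s₀, deriv φ x ≤ 0)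
    (lam : ℝ) (hlam : 0 < lam) (s : ℝ → ℝ) (u : ℝ → ℝ → ℝ)
    (hsol : IsGlobalSol p s₀ (fun x => lam * φ x) s u)
    (hgrow : Tendsto s atTop atTop) :
    ∃ c : ℝ, 0 < c ∧ ∀ᶠ t in atTop, c ≤ t ^ (-(p - 1) / (2 * p - 1)) * s t := by
  have S := toSS hsol
  have hφa : AntitoneOn φ (Icc 0 s₀) := by
    obtain ⟨-, ⟨K, hK⟩, -⟩ := hW
    apply antitoneOn_of_deriv_nonpos (convex_Icc 0 s₀) hK.continuousOn
    · rw [interior_Icc]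
      exact fun x hx => (hφdiff x hx).differentiableWithinAt
    · rw [interior_Icc]
      exact hφmono
  have h1 := hsol 1 one_pos
  obtain ⟨c, hc, h⟩ := S.final hp (by
    intro x y hx hxy hy
    rw [max_self, h1.init_s] at hy
    rw [h1.init x ⟨hx, hxy.trans hy⟩, h1.init y ⟨hx.trans hxy, hy⟩]
    exact mul_le_mul_of_nonneg_left (hφa ⟨hx, hxy.trans hy⟩ ⟨hx.trans hxy, hy⟩ hxy) hlam.le)
    (hgrow.congr' (by
      filter_upwards [eventually_ge_atTop 0] with t ht
      rw [max_eq_left ht]))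
  refine ⟨c, hc, ?_⟩
  filter_upwards [h, eventually_ge_atTop 0] with t ht h0
  rwa [max_eq_left h0] at ht
end
end
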